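/- There exists an absolute constant C > 0 with the following property. Let N ≥ 2 be a square-free integer and let u, v be integers with gcd(u, v, N) = 1. Let v_P be a vector of minimal Euclidean norm among the nonzero vectors of Λ_{(u:v)}, and let w_P be a vector of minimal Euclidean norm among the vectors of Λ_{(u:v)} that are not real scalar multiples of v_P. Then there exists an integer λ with |λ| ≤ C·(log N)² such that the two coordinates of w_P + λ·v_P are coprime. -/

import Mathlib

/-- The lattice of integer representatives of the point `(u : v)` of `ℙ¹(ℤ/Nℤ)`. -/
def repLattice (N : ℕ) (u v : ℤ) : Set (ℤ × ℤ) := {p | (N : ℤ) ∣ p.1 * v - p.2 * u}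

/-!
Vectors realising the successive minima of `Λ` form a basis of it. Hence a prime `p ∤ N` never
divides `w + λ v`, and a prime `p ∣ N` divides it for at most one residue class of `λ` modulo `p`,
since `(u, v) ∈ Λ` prevents `p` from dividing the whole of `Λ`. What remains is Iwaniec's bound for
Jacobsthal's function: an interval of length `O(log² N)` contains an integer that avoids one residue
class modulo each prime factor of `N`. Sifting an interval of length `C z²` by all primes below
`z ≍ log N` leaves `≫ z² / log² z` integers, and each of the at most `log N / log z` larger prime
factors of `N` removes `O(z / log z)` of them.

The lower bound sits at the limit of the linear sieve, where the main term vanishes. The sifted set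
is compared with Selberg's extremal example for the parity problem, the integers of one Liouville
sign. Giving `n ≤ Q` the weight `⌊Q / n⌋ mod 4` makes the unsifted sum elementary: `∑ λ(n) ⌊Q / n⌋`
counts squares, so that no prime number theorem is needed. Both sides satisfy the same two-step
Buchstab recursion, in which the sign is positive, so lower bounds propagate. The rounding errors
accumulated along the recursion are paid for by a potential function, fed by a small perturbation of
the model at the larger scale `K Q`.
-/

namespace Jacobsthal

open Finset Real
open ArithmeticFunction (liouville)

/-! ### The estimates of Mertens and Chebyshev -/

section Mertens

lemma log_factorial_eq_sum_primesBelow (n : ℕ) :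
    log n.factorial =
      ∑ p ∈ Nat.primesBelow (n + 1), (n.factorial.factorization p : ℝ) * log p := by
  rw [Real.log_nat_eq_sum_factorization]
  refine Finsupp.sum_of_support_subset _ (fun p hp ↦ ?_) _ fun p _ ↦ by simp
  rw [Nat.support_factorization, Nat.mem_primeFactors] at hp
  exact Nat.mem_primesBelow.2 ⟨Nat.lt_succ_of_le ((Nat.Prime.dvd_factorial hp.1).1 hp.2.1), hp.1⟩

lemma cast_factorization_factorial_le (n : ℕ) {p : ℕ} (hp : p.Prime) :
    (n.factorial.factorization p : ℝ) ≤ n / ((p : ℝ) - 1) := by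
  calc (n.factorial.factorization p : ℝ)
      ≤ ((n / (p - 1) : ℕ) : ℝ) := by
        exact_mod_cast Nat.factorization_factorial_le_div_pred hp n
    _ ≤ n / ((p - 1 : ℕ) : ℝ) := Nat.cast_div_le
    _ = n / ((p : ℝ) - 1) := by rw [Nat.cast_pred hp.pos]

lemma div_sub_one_le_factorization_factorial (n : ℕ) {p : ℕ} (hp : p.Prime) :
    (n : ℝ) / p - 1 ≤ n.factorial.factorization p := by
  have hfloor : n / p ≤ n.factorial.factorization p := by
    rw [Nat.factorization_factorial hp (n := n) (b := Nat.log p n + 2) (by omega)]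
    simpa using single_le_sum (f := fun i ↦ n / p ^ i) (fun i _ ↦ Nat.zero_le _)
      (show 1 ∈ Ico 1 (Nat.log p n + 2) by simp)
  have hlt := Nat.lt_floor_add_one ((n : ℝ) / p)
  rw [Nat.floor_div_natCast, Nat.floor_natCast] at hlt
  have : ((n / p : ℕ) : ℝ) ≤ n.factorial.factorization p := by exact_mod_cast hfloor
  linarith

lemma mul_log_sub_self_le_log_factorial (n : ℕ) : n * log n - n ≤ log n.factorial := by
  rcases n.eq_zero_or_pos with rfl | hn
  · simp
  have h := Real.log_le_log (by positivity)
    (Real.pow_div_factorial_le_exp (n : ℝ) (by positivity) n)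
  rw [Real.log_exp, Real.log_div (by positivity) (by positivity), Real.log_pow] at h
  linarith

lemma log_factorial_le_mul_log (n : ℕ) : log n.factorial ≤ n * log n := by
  rw [← Real.log_pow]
  exact Real.log_le_log (by exact_mod_cast n.factorial_pos) (by exact_mod_cast n.factorial_le_pow)

/-- The Mertens sum `∑ log q / q` over the primes `q < l`. -/
noncomputable def sumLogDiv (l : ℕ) : ℝ := ∑ q ∈ Nat.primesBelow l, log q / q

/-- The variant `∑ log q / (q - 1)` of the Mertens sum, which counts prime powers as well. -/
noncomputable def sumLogDivPred (l : ℕ) : ℝ := ∑ q ∈ Nat.primesBelow l, log q / ((q : ℝ) - 1)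

lemma log_sub_one_le_sumLogDivPred {n : ℕ} (hn : 1 ≤ n) : log n - 1 ≤ sumLogDivPred (n + 1) := by
  have hn' : (0 : ℝ) < n := by exact_mod_cast hn
  refine le_of_mul_le_mul_left ?_ hn'
  calc n * (log n - 1) = n * log n - n := by ring
    _ ≤ log n.factorial := mul_log_sub_self_le_log_factorial n
    _ = ∑ p ∈ Nat.primesBelow (n + 1), (n.factorial.factorization p : ℝ) * log p :=
        log_factorial_eq_sum_primesBelow n
    _ ≤ ∑ p ∈ Nat.primesBelow (n + 1), n / ((p : ℝ) - 1) * log p :=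
        sum_le_sum fun p hp ↦ mul_le_mul_of_nonneg_right
          (cast_factorization_factorial_le n (Nat.prime_of_mem_primesBelow hp))
          (Real.log_natCast_nonneg p)
    _ = n * sumLogDivPred (n + 1) := by
        rw [sumLogDivPred, mul_sum]
        exact sum_congr rfl fun p _ ↦ by ring

lemma sumLogDiv_le_log_add {n : ℕ} (hn : 1 ≤ n) : sumLogDiv (n + 1) ≤ log n + log 4 := by
  have hn' : (0 : ℝ) < n := by exact_mod_cast hn
  have htheta : n * sumLogDiv (n + 1) - Chebyshev.theta n ≤ log n.factorial := by
    rw [log_factorial_eq_sum_primesBelow, Chebyshev.theta_eq_sum_primesLE_log, sumLogDiv, mul_sum,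
      show Nat.primesLE n = Nat.primesBelow (n + 1) from rfl, ← sum_sub_distrib]
    refine sum_le_sum fun p hp ↦ ?_
    calc n * (log p / p) - log p = (n / (p : ℝ) - 1) * log p := by ring
      _ ≤ _ := mul_le_mul_of_nonneg_right
          (div_sub_one_le_factorization_factorial n (Nat.prime_of_mem_primesBelow hp))
          (Real.log_natCast_nonneg p)
  have := log_factorial_le_mul_log n
  have := Chebyshev.theta_le_log4_mul_x hn'.le
  refine le_of_mul_le_mul_left ?_ hn'
  linarith

lemma log_le_two_mul_sqrt {x : ℝ} (hx : 0 ≤ x) : log x ≤ 2 * √x := by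
  have h := Real.log_le_rpow_div hx (show (0 : ℝ) < 1 / 2 by norm_num)
  rw [← Real.sqrt_eq_rpow] at h
  linarith

lemma log_div_pred_sub_log_div_le {x : ℝ} (hx : 2 ≤ x) :
    log x / (x - 1) - log x / x ≤ 4 * (1 / x ^ (3 / 2 : ℝ)) := by
  have hrpow : x ^ (3 / 2 : ℝ) = x * √x := by
    rw [Real.sqrt_eq_rpow, show (3 / 2 : ℝ) = 1 + 1 / 2 by norm_num,
      Real.rpow_add (by positivity), Real.rpow_one]
  have hx1 : x - 1 ≠ 0 := by linarith
  calc log x / (x - 1) - log x / x = log x / (x * (x - 1)) := by field_simp; ring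
    _ ≤ 2 * √x / (x * (x / 2)) := by
        gcongr
        · exact log_le_two_mul_sqrt (by positivity)
        · linarith
    _ = 4 * (1 / (x * √x)) := by
        have := Real.mul_self_sqrt (show 0 ≤ x by positivity)
        field_simp
        linarith
    _ = 4 * (1 / x ^ (3 / 2 : ℝ)) := by rw [hrpow]

lemma exists_sumLogDivPred_sub_sumLogDiv_le :
    ∃ A : ℝ, 0 ≤ A ∧ ∀ l, sumLogDivPred l - sumLogDiv l ≤ A := by
  have hs : Summable (fun n : ℕ ↦ 4 * (1 / (n : ℝ) ^ (3 / 2 : ℝ))) :=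
    (Real.summable_one_div_nat_rpow.2 (by norm_num)).mul_left 4
  refine ⟨∑' n : ℕ, 4 * (1 / (n : ℝ) ^ (3 / 2 : ℝ)), tsum_nonneg fun n ↦ by positivity,
    fun l ↦ ?_⟩
  rw [sumLogDivPred, sumLogDiv, ← sum_sub_distrib]
  refine (sum_le_sum fun p hp ↦ log_div_pred_sub_log_div_le ?_).trans
    (hs.sum_le_tsum (Nat.primesBelow l) fun n _ ↦ by positivity)
  exact_mod_cast Nat.two_le_of_mem_primesBelow hp

lemma sumLogDiv_le_sumLogDivPred (l : ℕ) : sumLogDiv l ≤ sumLogDivPred l := by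
  refine sum_le_sum fun p hp ↦ ?_
  have hp2 : (2 : ℝ) ≤ p := by exact_mod_cast Nat.two_le_of_mem_primesBelow hp
  have := Real.log_natCast_nonneg p
  gcongr <;> linarith

lemma monotone_sumLogDivPred : Monotone sumLogDivPred := by
  refine fun l m hlm ↦ sum_le_sum_of_subset_of_nonneg (Nat.primesBelow_mono hlm) fun p hp _ ↦ ?_
  have hp2 : (2 : ℝ) ≤ p := by exact_mod_cast Nat.two_le_of_mem_primesBelow hp
  exact div_nonneg (Real.log_natCast_nonneg p) (by linarith)

lemma log_four_eq : log 4 = 2 * log 2 := by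
  rw [show (4 : ℝ) = 2 ^ 2 by norm_num, Real.log_pow]
  norm_num

lemma log_natCast_succ_le {n : ℕ} (hn : 1 ≤ n) : log (n + 1 : ℕ) ≤ log n + 1 := by
  have hn' : (1 : ℝ) ≤ n := by exact_mod_cast hn
  calc log (n + 1 : ℕ) ≤ log (2 * n) := Real.log_le_log (by positivity) (by push_cast; linarith)
    _ = log 2 + log n := Real.log_mul (by norm_num) (by positivity)
    _ ≤ log n + 1 := by linarith [Real.log_two_lt_d9]

theorem exists_sumLogDivPred_bounds : ∃ A : ℝ, 1 ≤ A ∧ ∀ l : ℕ, 1 ≤ l →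
    log l - A ≤ sumLogDivPred l ∧ sumLogDivPred l ≤ log l + A := by
  obtain ⟨A, hA, hdiff⟩ := exists_sumLogDivPred_sub_sumLogDiv_le
  refine ⟨A + 2, by linarith, fun l hl ↦ ?_⟩
  rcases hl.eq_or_lt with rfl | hl
  · have : sumLogDivPred 1 = 0 := by
      simp [sumLogDivPred, show Nat.primesBelow 1 = ∅ by decide]
    simp only [this, Nat.cast_one, Real.log_one]
    constructor <;> linarith
  obtain ⟨n, rfl⟩ : ∃ n, l = n + 1 := ⟨l - 1, by omega⟩
  have hn : 1 ≤ n := by omega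
  have hlog : log n ≤ log (n + 1 : ℕ) :=
    Real.log_le_log (by exact_mod_cast hn) (by push_cast; linarith)
  have := log_sub_one_le_sumLogDivPred hn
  have := sumLogDiv_le_log_add hn
  have := log_natCast_succ_le hn
  have := hdiff (n + 1)
  constructor <;> linarith [log_four_eq, Real.log_two_lt_d9]

end Mertens

section PrimeCounting

lemma sqrt_le_two_mul_div_log {x : ℝ} (hx : 1 < x) : √x ≤ 2 * (x / log x) := by
  rw [← mul_div_assoc, le_div_iff₀ (log_pos hx)]
  nlinarith [log_le_two_mul_sqrt (x := x) (by linarith), sqrt_nonneg x,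
    mul_self_sqrt (show 0 ≤ x by linarith)]

lemma primeCounting_floor_le {x : ℝ} (hx : 1 < x) :
    (Nat.primeCounting ⌊x⌋₊ : ℝ) ≤ 5 * x / log x := by
  have hlog : 0 < log x := Real.log_pos hx
  have hsqrt := sqrt_le_two_mul_div_log hx
  calc (Nat.primeCounting ⌊x⌋₊ : ℝ) ≤ log 4 * x / log √x + √x := Chebyshev.pi_le_log4_mul_div hx
    _ = 2 * log 4 * x / log x + √x := by
        rw [Real.log_sqrt (by linarith)]
        field_simp
    _ ≤ 3 * x / log x + 2 * (x / log x) := by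
        gcongr
        linarith [log_four_eq, Real.log_two_lt_d9]
    _ = 5 * x / log x := by ring

lemma card_primesBelow_le {l : ℕ} {x : ℝ} (hx : 1 < x) (hl : l ≤ x) :
    (#(Nat.primesBelow l) : ℝ) ≤ 5 * x / log x := by
  refine le_trans ?_ (primeCounting_floor_le hx)
  rw [Nat.primesBelow_card_eq_primeCounting']
  exact_mod_cast Nat.monotone_primeCounting' ((Nat.le_floor hl).trans (Nat.le_succ _))

lemma theta_sub_theta_le {x y : ℝ} (hx : 1 ≤ x) (hy : 0 ≤ y) (hyx : y ≤ x) {s : Finset ℕ}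
    (hs : ∀ p : ℕ, p.Prime → y < p → p ≤ x → p ∈ s) :
    Chebyshev.theta x - Chebyshev.theta y ≤ #s * log x := by
  have hmem : ∀ p ∈ Nat.primesLE ⌊x⌋₊ \ Nat.primesLE ⌊y⌋₊, p.Prime ∧ y < p ∧ (p : ℝ) ≤ x := by
    intro p hp
    rw [mem_sdiff, Nat.mem_primesLE, Nat.mem_primesLE] at hp
    obtain ⟨⟨hpx, hpp⟩, hpy⟩ := hp
    exact ⟨hpp, (Nat.floor_lt hy).1 (not_le.1 fun h ↦ hpy ⟨h, hpp⟩),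
      (Nat.le_floor_iff (hy.trans hyx)).1 hpx⟩
  have hsub : Nat.primesLE ⌊y⌋₊ ⊆ Nat.primesLE ⌊x⌋₊ :=
    Nat.primesBelow_mono (Nat.succ_le_succ (Nat.floor_le_floor hyx))
  rw [Chebyshev.theta_eq_sum_primesLE, Chebyshev.theta_eq_sum_primesLE, ← sum_sdiff_eq_sub hsub]
  calc ∑ p ∈ Nat.primesLE ⌊x⌋₊ \ Nat.primesLE ⌊y⌋₊, log p
      ≤ #(Nat.primesLE ⌊x⌋₊ \ Nat.primesLE ⌊y⌋₊) • log x :=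
        sum_le_card_nsmul _ _ _ fun p hp ↦
          Real.log_le_log (by exact_mod_cast (hmem p hp).1.pos) (hmem p hp).2.2
    _ ≤ #s * log x := by
        rw [nsmul_eq_mul]
        gcongr
        · exact Real.log_nonneg hx
        · exact fun p hp ↦ hs p (hmem p hp).1 (hmem p hp).2.1 (hmem p hp).2.2

lemma eventually_div_le_theta_sub_theta :
    ∀ᶠ x : ℝ in Filter.atTop, x / 10 ≤ Chebyshev.theta x - Chebyshev.theta (x / 4) := by
  have hlittle := (isLittleO_log_rpow_atTop (r := 1 / 2) (by norm_num)).bound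
    (show (0 : ℝ) < 1 / 100 by norm_num)
  filter_upwards [hlittle, Filter.eventually_ge_atTop 10000] with x hlog hx
  rw [← Real.sqrt_eq_rpow, Real.norm_of_nonneg (Real.log_nonneg (by linarith)),
    Real.norm_of_nonneg (by positivity)] at hlog
  have hsq : √x * √x = x := Real.mul_self_sqrt (by linarith)
  have hsqrt : 100 ≤ √x := Real.le_sqrt_of_sq_le (by linarith)
  have hlog2 : log (x + 2) ≤ 2 * log x := by
    rw [show 2 * log x = log (x ^ 2) by rw [Real.log_pow]; norm_num]
    exact Real.log_le_log (by linarith) (by nlinarith)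
  have : √x * log x ≤ x / 100 := by nlinarith
  nlinarith [Chebyshev.theta_ge' (x := x) (by linarith),
    Chebyshev.theta_le_log4_mul_x (x := x / 4) (by linarith), log_four_eq,
    Real.log_two_gt_d9, Real.log_two_lt_d9]

theorem eventually_div_log_le_card_primes : ∀ᶠ x : ℝ in Filter.atTop, ∀ s : Finset ℕ,
    (∀ p : ℕ, p.Prime → x / 4 < p → p ≤ x → p ∈ s) → x / (10 * log x) ≤ #s := by
  filter_upwards [eventually_div_le_theta_sub_theta, Filter.eventually_gt_atTop 1]
    with x hx hx1 s hs
  have := theta_sub_theta_le hx1.le (by linarith) (by linarith) hs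
  have := Real.log_pos hx1
  rw [div_le_iff₀ (by positivity)]
  linarith

end PrimeCounting

/-! ### Prime clocks -/

/-- A clock on the natural numbers: a positive monotone approximation of `log l`, within a bounded
error, that grows by a factor of at least `exp (1 / p)` at each prime `p`. Measured with a clock,
the sum of `1 / p` over primes is dominated by the integral of `dt / t`, with no error term. -/
structure PrimeClock where
  /-- The time at which the clock reaches `l`. -/
  time : ℕ → ℝ
  /-- How far the clock may lag behind `log l`. -/
  lag : ℝ
  one_le_lag : 1 ≤ lag
  monotone_time : Monotone time
  time_pos (l : ℕ) : 0 < time l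
  time_mul_exp_le {p : ℕ} (hp : p.Prime) : time p * exp (1 / p) ≤ time (p + 1)
  log_sub_lag_le (l : ℕ) : log l - lag ≤ time l
  time_le (l : ℕ) : time l ≤ log l + 1

section Existence

/-- The sum of the reciprocals of the primes below `l`. -/
noncomputable def primeRecipSum (l : ℕ) : ℝ := ∑ q ∈ Nat.primesBelow l, 1 / (q : ℝ)

lemma monotone_primeRecipSum : Monotone primeRecipSum := fun _ _ h ↦
  sum_le_sum_of_subset_of_nonneg (Nat.primesBelow_mono h) fun _ _ _ ↦ by positivity

lemma sum_primesBelow_succ_of_prime {M : Type*} [AddCommMonoid M] (f : ℕ → M) {p : ℕ}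
    (hp : p.Prime) :
    ∑ q ∈ Nat.primesBelow (p + 1), f q = ∑ q ∈ Nat.primesBelow p, f q + f p := by
  rw [Nat.primesBelow_succ, if_pos hp, sum_insert (by simp [Nat.mem_primesBelow]), add_comm]

lemma exp_one_div_le {x : ℝ} (hx : 1 < x) : exp (1 / x) ≤ 1 + 1 / (x - 1) := by
  have hx0 : x ≠ 0 := by linarith
  have hx1 : x - 1 ≠ 0 := by linarith
  have h : (x - 1) / x ≤ (exp (1 / x))⁻¹ := by
    rw [← Real.exp_neg]
    refine le_trans (le_of_eq ?_) (Real.add_one_le_exp _)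
    field_simp
    ring
  rw [le_inv_comm₀ (div_pos (by linarith) (by linarith)) (Real.exp_pos _)] at h
  refine h.trans_eq ?_
  field_simp
  ring

/-- The time function of the clock below: beyond a threshold `m` it is the Mertens sum lowered to
lie below `log l`; up to `m`, where that may fail to be positive, it is `exp ∑ 1 / p`, normalised
to end at `1`. -/
noncomputable def clockTime (A : ℝ) (m l : ℕ) : ℝ :=
  if l < m then exp (primeRecipSum l - primeRecipSum m) else sumLogDivPred l - A

variable {A : ℝ} {m : ℕ}

lemma clockTime_of_lt {l : ℕ} (h : l < m) :
    clockTime A m l = exp (primeRecipSum l - primeRecipSum m) := if_pos h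

lemma clockTime_of_le {l : ℕ} (h : m ≤ l) : clockTime A m l = sumLogDivPred l - A :=
  if_neg h.not_gt

lemma exp_primeRecipSum_sub_le_one {l : ℕ} (h : l ≤ m) :
    exp (primeRecipSum l - primeRecipSum m) ≤ 1 :=
  Real.exp_le_one_iff.2 (sub_nonpos.2 (monotone_primeRecipSum h))

lemma exp_primeRecipSum_sub_le_clockTime (hm : 1 ≤ sumLogDivPred m - A) {l : ℕ} (h : l ≤ m) :
    exp (primeRecipSum l - primeRecipSum m) ≤ clockTime A m l := by
  rcases h.lt_or_eq with h | rfl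
  · exact (clockTime_of_lt h).ge
  · rw [clockTime_of_le le_rfl]
    exact (exp_primeRecipSum_sub_le_one le_rfl).trans hm

lemma monotone_clockTime (hm : 1 ≤ sumLogDivPred m - A) : Monotone (clockTime A m) := by
  refine monotone_nat_of_le_succ fun l ↦ ?_
  rcases lt_or_ge l m with h | h
  · refine le_trans ?_ (exp_primeRecipSum_sub_le_clockTime hm h)
    rw [clockTime_of_lt h]
    have := monotone_primeRecipSum l.le_succ
    gcongr
  · rw [clockTime_of_le h, clockTime_of_le (h.trans l.le_succ)]
    exact sub_le_sub_right (monotone_sumLogDivPred l.le_succ) A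

lemma clockTime_pos (hm : 1 ≤ sumLogDivPred m - A) (l : ℕ) : 0 < clockTime A m l := by
  rcases lt_or_ge l m with h | h
  · rw [clockTime_of_lt h]
    exact Real.exp_pos _
  · rw [clockTime_of_le h]
    linarith [monotone_sumLogDivPred h]

lemma clockTime_mul_exp_le (hm : 1 ≤ sumLogDivPred m - A)
    (hA : ∀ l : ℕ, 1 ≤ l → sumLogDivPred l ≤ log l + A) {p : ℕ} (hp : p.Prime) :
    clockTime A m p * exp (1 / p) ≤ clockTime A m (p + 1) := by
  rcases lt_or_ge p m with h | h
  · refine le_trans (le_of_eq ?_) (exp_primeRecipSum_sub_le_clockTime hm h)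
    have hstep : primeRecipSum (p + 1) = primeRecipSum p + 1 / p :=
      sum_primesBelow_succ_of_prime _ hp
    rw [clockTime_of_lt h, ← Real.exp_add, hstep, sub_add_eq_add_sub]
  · have hp1 : (1 : ℝ) < p := by exact_mod_cast hp.one_lt
    have hpos := clockTime_pos hm p
    have hlog : clockTime A m p ≤ log p := by
      rw [clockTime_of_le h]
      linarith [hA p hp.pos]
    have hstep : clockTime A m (p + 1) = clockTime A m p + log p / (p - 1) := by
      rw [clockTime_of_le h, clockTime_of_le (h.trans p.le_succ), sub_add_eq_add_sub]
      exact congrArg (· - A) (sum_primesBelow_succ_of_prime _ hp)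
    calc clockTime A m p * exp (1 / p) ≤ clockTime A m p * (1 + 1 / (p - 1)) := by
          gcongr
          exact exp_one_div_le hp1
      _ = clockTime A m p + clockTime A m p / (p - 1) := by ring
      _ ≤ clockTime A m (p + 1) := by
          have : (0 : ℝ) < p - 1 := by linarith
          rw [hstep]
          gcongr

theorem nonempty_primeClock : Nonempty PrimeClock := by
  obtain ⟨A, hA, hbounds⟩ := exists_sumLogDivPred_bounds
  obtain ⟨m, hm⟩ := exists_nat_ge (exp (2 * A + 1))
  have hm0 : (0 : ℝ) < m := (Real.exp_pos _).trans_le hm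
  have hm1 : 1 ≤ m := by exact_mod_cast hm0
  have hstart : 1 ≤ sumLogDivPred m - A := by
    linarith [(hbounds m hm1).1, (Real.le_log_iff_exp_le hm0).2 hm]
  have hlogm : 0 ≤ log m := Real.log_natCast_nonneg m
  refine ⟨⟨clockTime A m, 2 * A + log m, by linarith, monotone_clockTime hstart,
    clockTime_pos hstart, clockTime_mul_exp_le hstart fun l hl ↦ (hbounds l hl).2,
    fun l ↦ ?_, fun l ↦ ?_⟩⟩ <;> rcases lt_or_ge l m with h | h
  · have hlog : log l ≤ log m := by
      rcases l.eq_zero_or_pos with rfl | hl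
      · simpa using hlogm
      · gcongr
    linarith [clockTime_pos hstart l]
  · rw [clockTime_of_le h]
    linarith [(hbounds l (hm1.trans h)).1]
  · rw [clockTime_of_lt h]
    linarith [exp_primeRecipSum_sub_le_one h.le, Real.log_natCast_nonneg l]
  · rw [clockTime_of_le h]
    linarith [(hbounds l (hm1.trans h)).2]

end Existence

namespace PrimeClock

variable (T : PrimeClock)

lemma one_div_le_log_time_div {p : ℕ} (hp : p.Prime) :
    1 / (p : ℝ) ≤ log (T.time (p + 1) / T.time p) := by
  have hpos := T.time_pos p
  rw [Real.le_log_iff_exp_le (div_pos (T.time_pos _) hpos), le_div_iff₀ hpos, mul_comm]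
  exact T.time_mul_exp_le hp

/-- The hypothesis on `w` and `R` is the integrated form of `w x / x ≤ R' x`. -/
theorem sum_one_div_mul_le {R w : ℝ → ℝ} {l : ℕ}
    (hR : ∀ x, 0 < x → x ≤ T.time l → 0 ≤ R x) (hw : ∀ x, 0 < x → x ≤ T.time l → 0 ≤ w x)
    (hwR : ∀ x y, 0 < x → x ≤ y → y ≤ T.time l → w x * log (y / x) ≤ R y - R x) :
    ∑ p ∈ Nat.primesBelow l, 1 / (p : ℝ) * w (T.time p) ≤ R (T.time l) := by
  suffices h_all : ∀ m ≤ l, ∑ p ∈ Nat.primesBelow m, 1 / (p : ℝ) * w (T.time p) ≤ R (T.time m) from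
    h_all l le_rfl
  intro m
  induction m with
  | zero => exact fun _ ↦ by simpa using hR _ (T.time_pos 0) (T.monotone_time (Nat.zero_le _))
  | succ m ih =>
    intro hm
    have hpos := T.time_pos m
    have hle : T.time m ≤ T.time (m + 1) := T.monotone_time m.le_succ
    have hle' : T.time (m + 1) ≤ T.time l := T.monotone_time hm
    have hwnonneg := hw _ hpos (hle.trans hle')
    have hstep := hwR _ _ hpos hle hle'
    have hprev := ih (by omega)
    by_cases hp : m.Prime
    · rw [sum_primesBelow_succ_of_prime _ hp]
      linarith [mul_le_mul_of_nonneg_right (T.one_div_le_log_time_div hp) hwnonneg]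
    · rw [Nat.primesBelow_succ, if_neg hp]
      linarith [mul_nonneg hwnonneg (Real.log_nonneg ((one_le_div hpos).2 hle))]

end PrimeClock

/-! ### The parity model -/

section Liouville

lemma liouville_apply_prime {p : ℕ} (hp : p.Prime) : liouville p = -1 := by
  rw [ArithmeticFunction.liouville_apply hp.ne_zero,
    ArithmeticFunction.cardFactors_apply_prime hp, pow_one]

lemma liouville_mul_zeta_prime_pow {p : ℕ} (hp : p.Prime) (k : ℕ) :
    (liouville * ArithmeticFunction.zeta : ArithmeticFunction ℤ) (p ^ k)
      = if Even k then 1 else 0 := by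
  rw [ArithmeticFunction.coe_mul_zeta_apply, Nat.sum_divisors_prime_pow hp]
  have hpow : ∀ i, liouville (p ^ i) = (-1) ^ i := fun i ↦ by
    rw [ArithmeticFunction.liouville_apply (pow_ne_zero _ hp.ne_zero),
      ArithmeticFunction.cardFactors_apply_prime_pow hp]
  simp_rw [hpow, neg_one_geom_sum, Nat.even_add_one]
  split_ifs <;> rfl

lemma isSquare_of_even_factorization {k : ℕ} (hk : k ≠ 0)
    (h : ∀ p ∈ k.primeFactors, Even (k.factorization p)) : IsSquare k := by
  rw [← Nat.prod_factorization_pow_eq_self hk]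
  exact isSquare_prod _ fun p hp ↦ (h p (by rwa [← Nat.support_factorization])).isSquare_pow p

lemma liouville_mul_zeta_apply_le (k : ℕ) :
    |(liouville * ArithmeticFunction.zeta : ArithmeticFunction ℤ) k|
      ≤ if IsSquare k then 1 else 0 := by
  rcases eq_or_ne k 0 with rfl | hk
  · simp
  have hmult : (liouville * ArithmeticFunction.zeta : ArithmeticFunction ℤ).IsMultiplicative :=
    ArithmeticFunction.isMultiplicative_liouville.mul
      ArithmeticFunction.isMultiplicative_zeta.natCast
  have heq : (liouville * ArithmeticFunction.zeta : ArithmeticFunction ℤ) k =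
      ∏ p ∈ k.primeFactors, if Even (k.factorization p) then 1 else 0 := by
    rw [hmult.multiplicative_factorization _ hk, Finsupp.prod, Nat.support_factorization]
    exact prod_congr rfl fun p hp ↦
      liouville_mul_zeta_prime_pow (Nat.prime_of_mem_primeFactors hp) _
  rw [heq]
  by_cases h : ∀ p ∈ k.primeFactors, Even (k.factorization p)
  · rw [prod_eq_one fun p hp ↦ if_pos (h p hp), if_pos (isSquare_of_even_factorization hk h)]
    simp
  · push Not at h
    obtain ⟨p, hp, hodd⟩ := h
    rw [prod_eq_zero hp (if_neg hodd)]
    split_ifs <;> simp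

lemma card_isSquare_Ioc_le (N : ℕ) : #{k ∈ Ioc 0 N | IsSquare k} ≤ N.sqrt := by
  have hsub : {k ∈ Ioc 0 N | IsSquare k} ⊆ (Ioc 0 N.sqrt).image fun r ↦ r * r := by
    intro k hk
    rw [mem_filter, mem_Ioc] at hk
    obtain ⟨⟨hpos, hle⟩, r, rfl⟩ := hk
    exact mem_image.2 ⟨r, mem_Ioc.2 ⟨Nat.pos_of_mul_pos_right hpos, Nat.le_sqrt.2 hle⟩, rfl⟩
  simpa using (card_le_card hsub).trans card_image_le

lemma abs_sum_liouville_mul_div_le (N : ℕ) :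
    |∑ n ∈ Ioc 0 N, liouville n * ((N / n : ℕ) : ℤ)| ≤ N.sqrt := by
  rw [← ArithmeticFunction.sum_Ioc_mul_zeta_eq_sum]
  calc |∑ n ∈ Ioc 0 N, (liouville * ArithmeticFunction.zeta : ArithmeticFunction ℤ) n|
      ≤ ∑ n ∈ Ioc 0 N, if IsSquare n then 1 else 0 :=
        (abs_sum_le_sum_abs _ _).trans (sum_le_sum fun n _ ↦ liouville_mul_zeta_apply_le n)
    _ = #{k ∈ Ioc 0 N | IsSquare k} := by rw [sum_boole]
    _ ≤ N.sqrt := by exact_mod_cast card_isSquare_Ioc_le N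

lemma cast_div_mod_four (N n : ℕ) :
    ((N / n % 4 : ℕ) : ℤ) = ((N / n : ℕ) : ℤ) - 4 * ((N / 4 / n : ℕ) : ℤ) := by
  rw [show N / 4 / n = N / n / 4 by
    rw [Nat.div_div_eq_div_mul, Nat.div_div_eq_div_mul, mul_comm]]
  omega

theorem abs_sum_liouville_mul_mod_four_le (N : ℕ) :
    |∑ n ∈ Ioc 0 N, (liouville n : ℝ) * (N / n % 4 : ℕ)| ≤ 5 * √N := by
  have hsub : ∑ n ∈ Ioc 0 (N / 4), liouville n * ((N / 4 / n : ℕ) : ℤ) =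
      ∑ n ∈ Ioc 0 N, liouville n * ((N / 4 / n : ℕ) : ℤ) := by
    refine sum_subset (Ioc_subset_Ioc_right (Nat.div_le_self _ _)) fun n hn hn' ↦ ?_
    rw [mem_Ioc] at hn hn'
    rw [Nat.div_eq_of_lt (by omega), Nat.cast_zero, mul_zero]
  have h_mod : ∑ n ∈ Ioc 0 N, liouville n * ((N / n % 4 : ℕ) : ℤ) =
      ∑ n ∈ Ioc 0 N, liouville n * ((N / n : ℕ) : ℤ) -
        4 * ∑ n ∈ Ioc 0 (N / 4), liouville n * ((N / 4 / n : ℕ) : ℤ) := by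
    rw [hsub, mul_sum, ← sum_sub_distrib]
    exact sum_congr rfl fun n _ ↦ by rw [cast_div_mod_four]; ring
  have hmono : ((N / 4).sqrt : ℤ) ≤ N.sqrt := by
    exact_mod_cast Nat.sqrt_le_sqrt (Nat.div_le_self N 4)
  have hbound : |∑ n ∈ Ioc 0 N, liouville n * ((N / n % 4 : ℕ) : ℤ)| ≤ 5 * N.sqrt := by
    have h_bound := abs_le.1 (abs_sum_liouville_mul_div_le N)
    have h_quarter := abs_le.1 (abs_sum_liouville_mul_div_le (N / 4))
    rw [h_mod, abs_le]
    constructor <;> linarith [h_bound.1, h_bound.2, h_quarter.1, h_quarter.2]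
  calc |∑ n ∈ Ioc 0 N, (liouville n : ℝ) * (N / n % 4 : ℕ)| ≤ 5 * N.sqrt := by
        have : ((|∑ n ∈ Ioc 0 N, liouville n * ((N / n % 4 : ℕ) : ℤ)| : ℤ) : ℝ) ≤
            5 * N.sqrt := by exact_mod_cast hbound
        simpa only [Int.cast_abs, Int.cast_sum, Int.cast_mul, Int.cast_natCast] using this
    _ ≤ 5 * √N := by gcongr; exact Real.nat_sqrt_le_real_sqrt

end Liouville

section ModFourWeight

/-- The `4`-periodic sequence `1, 1, 1, -3, …`, whose partial sums are the residues modulo `4`. -/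
def modFourStep (v : ℕ) : ℝ := if 4 ∣ v then -3 else 1

lemma sum_modFourStep (m : ℕ) : ∑ v ∈ Ioc 0 m, modFourStep v = (m % 4 : ℕ) := by
  induction m with
  | zero => simp
  | succ m ih =>
    rw [sum_Ioc_succ_top (Nat.zero_le m), ih, modFourStep]
    split_ifs with h
    · rw [show m % 4 = 3 by omega, show (m + 1) % 4 = 0 by omega]
      norm_num
    · rw [show (m + 1) % 4 = m % 4 + 1 by omega]
      push_cast
      ring

lemma abs_modFourStep_le (v : ℕ) : |modFourStep v| ≤ 3 := by
  rw [modFourStep]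
  split_ifs <;> norm_num

lemma sum_modFourStep_mul_div (N V : ℕ) :
    ∑ v ∈ Ioc 0 V, modFourStep v * (N / v : ℕ) =
      ∑ n ∈ Ioc 0 N, (min V (N / n) % 4 : ℕ) := by
  calc ∑ v ∈ Ioc 0 V, modFourStep v * (N / v : ℕ)
      = ∑ v ∈ Ioc 0 V, ∑ _n ∈ Ioc 0 (N / v), modFourStep v :=
        sum_congr rfl fun v _ ↦ by simp [mul_comm]
    _ = ∑ n ∈ Ioc 0 N, ∑ v ∈ Ioc 0 (min V (N / n)), modFourStep v := by
        refine sum_comm' fun v n ↦ ?_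
        simp only [mem_Ioc, le_min_iff]
        constructor
        · rintro ⟨⟨hv, hvV⟩, hn, hnN⟩
          rw [Nat.le_div_iff_mul_le hv] at hnN
          exact ⟨⟨hv, hvV, (Nat.le_div_iff_mul_le hn).2 (by linarith)⟩, hn, by nlinarith⟩
        · rintro ⟨⟨hv, hvV, hvN⟩, hn, -⟩
          rw [Nat.le_div_iff_mul_le hn] at hvN
          exact ⟨⟨hv, hvV⟩, hn, (Nat.le_div_iff_mul_le hv).2 (by linarith)⟩
    _ = ∑ n ∈ Ioc 0 N, (min V (N / n) % 4 : ℕ) := by simp_rw [sum_modFourStep, Nat.cast_sum]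

lemma abs_sum_mod_four_sub_le {N V s : ℕ} (hs : N < (V + 1) * (s + 1)) :
    |∑ n ∈ Ioc 0 N, ((N / n % 4 : ℕ) : ℝ) - ∑ v ∈ Ioc 0 V, modFourStep v * (N / v : ℕ)|
      ≤ 3 * s := by
  rw [sum_modFourStep_mul_div, Nat.cast_sum, ← sum_sub_distrib]
  have hterm : ∀ n ∈ Ioc 0 N, |((N / n % 4 : ℕ) : ℝ) - (min V (N / n) % 4 : ℕ)|
      ≤ if n ≤ s then 3 else 0 := by
    intro n hn
    rw [mem_Ioc] at hn
    split_ifs with h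
    · have h_mod : ((N / n % 4 : ℕ) : ℝ) ≤ 3 := by norm_cast; omega
      have h_min_mod : ((min V (N / n) % 4 : ℕ) : ℝ) ≤ 3 := by norm_cast; omega
      rw [abs_le]
      constructor <;> linarith [Nat.cast_nonneg (α := ℝ) (N / n % 4),
        Nat.cast_nonneg (α := ℝ) (min V (N / n) % 4)]
    · have : N / n ≤ V := by
        rw [← Nat.lt_succ_iff, Nat.div_lt_iff_lt_mul hn.1]
        exact hs.trans_le (Nat.mul_le_mul le_rfl (not_le.1 h))
      simp [min_eq_right this]
  calc _ ≤ ∑ n ∈ Ioc 0 N, if n ≤ s then (3 : ℝ) else 0 :=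
        (abs_sum_le_sum_abs _ _).trans (sum_le_sum hterm)
    _ = #{n ∈ Ioc 0 N | n ≤ s} * 3 := by rw [← sum_filter, sum_const, nsmul_eq_mul]
    _ ≤ #(Ioc 0 s) * 3 := by
        gcongr
        intro n
        simp only [mem_filter, mem_Ioc]
        omega
    _ = 3 * s := by simp [mul_comm]

lemma sum_modFourStep_div (t : ℕ) :
    ∑ v ∈ Ioc 0 (4 * t), modFourStep v / v = (harmonic (4 * t) : ℝ) - harmonic t := by
  induction t with
  | zero => simp
  | succ t ih =>
    have h (i : ℕ) (hi : ¬ 4 ∣ i) : modFourStep (4 * t + i) = 1 := if_neg (by omega)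
    have h_step : modFourStep (4 * t + 4) = -3 := if_pos (by omega)
    rw [show 4 * (t + 1) = 4 * t + 1 + 1 + 1 + 1 by ring]
    iterate 4 rw [sum_Ioc_succ_top (by omega), harmonic_succ]
    rw [ih, harmonic_succ, h 1 (by norm_num), h 2 (by norm_num), h 3 (by norm_num), h_step]
    push_cast
    field_simp
    ring

/-- The monotonicity of the two sequences `H n - log n` and `H n - log (n + 1)` defining Euler's
constant gives one inequality each. -/
lemma abs_sum_modFourStep_div_sub_log_four_le {t : ℕ} (ht : 1 ≤ t) :
    |∑ v ∈ Ioc 0 (4 * t), modFourStep v / v - log 4| ≤ 1 / t := by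
  have ht0 : (0 : ℝ) < t := by exact_mod_cast ht
  have hupper := strictAnti_eulerMascheroniSeq'.antitone (show t ≤ 4 * t by omega)
  have hlower := strictMono_eulerMascheroniSeq.monotone (show t ≤ 4 * t by omega)
  rw [eulerMascheroniSeq', eulerMascheroniSeq', if_neg (by omega), if_neg (by omega)] at hupper
  rw [eulerMascheroniSeq, eulerMascheroniSeq] at hlower
  push_cast at hupper hlower
  have hlog : log (4 * t) = log 4 + log t := Real.log_mul (by norm_num) ht0.ne'
  have hlog' : log (4 * t) ≤ log (4 * t + 1) := Real.log_le_log (by positivity) (by linarith)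
  have hlog'' : log (t + 1) ≤ log t + 1 / t := by
    have h := Real.log_le_sub_one_of_pos (x := (t + 1 : ℝ) / t) (by positivity)
    rw [Real.log_div (by positivity) ht0.ne', add_div, div_self ht0.ne'] at h
    linarith
  have : (0 : ℝ) ≤ 1 / t := by positivity
  rw [sum_modFourStep_div, abs_le]
  constructor <;> linarith

lemma abs_natDiv_sub_div_le (N v : ℕ) : |((N / v : ℕ) : ℝ) - N / v| ≤ 1 := by
  have hle : ((N / v : ℕ) : ℝ) ≤ N / v := Nat.cast_div_le
  have hlt := Nat.lt_floor_add_one ((N : ℝ) / v)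
  rw [Nat.floor_div_natCast, Nat.floor_natCast] at hlt
  rw [abs_le]
  constructor <;> linarith

theorem abs_sum_mod_four_sub_mul_log_four_le (N : ℕ) :
    |∑ n ∈ Ioc 0 N, ((N / n % 4 : ℕ) : ℝ) - N * log 4| ≤ 40 * √N := by
  rcases N.eq_zero_or_pos with rfl | hN
  · simp
  set s := N.sqrt
  have hs1 : (1 : ℝ) ≤ s := by exact_mod_cast Nat.le_sqrt.2 hN
  have hNs : N < (s + 1) * (s + 1) := Nat.lt_succ_sqrt N
  have hsplit := abs_sum_mod_four_sub_le (N := N) (V := 4 * (s + 1)) (s := s) (by nlinarith)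
  have hfloor : |∑ v ∈ Ioc 0 (4 * (s + 1)), modFourStep v * (N / v : ℕ) -
      N * ∑ v ∈ Ioc 0 (4 * (s + 1)), modFourStep v / v| ≤ 12 * (s + 1) := by
    rw [mul_sum, ← sum_sub_distrib]
    calc _ ≤ ∑ _v ∈ Ioc 0 (4 * (s + 1)), (3 : ℝ) := by
          refine (abs_sum_le_sum_abs _ _).trans (sum_le_sum fun v _ ↦ ?_)
          rw [mul_div_left_comm, ← mul_sub, abs_mul]
          exact (mul_le_mul (abs_modFourStep_le v) (abs_natDiv_sub_div_le N v) (abs_nonneg _)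
            (by norm_num)).trans_eq (mul_one 3)
      _ = 12 * (s + 1) := by
          rw [sum_const, Nat.card_Ioc, Nat.sub_zero, nsmul_eq_mul]
          push_cast
          ring
  have hmain : |N * ∑ v ∈ Ioc 0 (4 * (s + 1)), modFourStep v / v - N * log 4| ≤ s + 1 := by
    rw [← mul_sub, abs_mul, Nat.abs_cast]
    calc _ ≤ (N : ℝ) * (1 / (s + 1 : ℕ)) := by
          gcongr
          exact abs_sum_modFourStep_div_sub_log_four_le (by omega)
      _ ≤ s + 1 := by
          rw [mul_one_div, div_le_iff₀ (by positivity)]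
          exact_mod_cast hNs.le
  have hsqrt : (s : ℝ) ≤ √N := Real.nat_sqrt_le_real_sqrt
  rw [abs_le] at *
  constructor <;> linarith [hsplit.1, hsplit.2, hfloor.1, hfloor.2, hmain.1, hmain.2]

end ModFourWeight

section Model

/-- Among the `n ≤ Q` all of whose prime factors are at least `l`, those with Liouville sign `σ`. -/
noncomputable def modelSet (σ : ℤˣ) (Q : ℝ) (l : ℕ) : Finset ℕ :=
  {n ∈ Ioc 0 ⌊Q⌋₊ | (∀ p ∈ n.primeFactors, l ≤ p) ∧ liouville n = σ}

/-- The parity model `S(Q, l)`: the Liouville-signed sifting problem that is extremal for the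
linear sieve. The weight `⌊Q / n⌋ mod 4` has a mean value in `n` but is not biased by `liouville`,
so that `S(Q, 0)` is proportional to `Q` with the tiny error `O(√Q)`, for both signs `σ`. -/
noncomputable def parityModel (σ : ℤˣ) (Q : ℝ) (l : ℕ) : ℝ :=
  ∑ n ∈ modelSet σ Q l, ((⌊Q⌋₊ / n % 4 : ℕ) : ℝ)

/-- The factor normalising `parityModel` so that its unsifted value is asymptotic to `Q`. -/
noncomputable def modelDensity : ℝ := 2 / log 4

lemma mem_modelSet {σ : ℤˣ} {Q : ℝ} {l n : ℕ} :
    n ∈ modelSet σ Q l ↔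
      (0 < n ∧ n ≤ ⌊Q⌋₊) ∧ (∀ p : ℕ, p.Prime → p ∣ n → l ≤ p) ∧ liouville n = σ := by
  rw [modelSet, mem_filter, mem_Ioc]
  refine and_congr_right fun hn ↦ and_congr_left fun _ ↦ ?_
  simp only [Nat.mem_primeFactors, and_imp]
  exact forall₃_congr fun p _ _ ↦ ⟨fun h ↦ h hn.1.ne', fun h _ ↦ h⟩

lemma parityModel_nonneg (σ : ℤˣ) (Q : ℝ) (l : ℕ) : 0 ≤ parityModel σ Q l :=
  sum_nonneg fun _ _ ↦ Nat.cast_nonneg _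

lemma one_lt_log_four : 1 < log 4 := by
  rw [log_four_eq]
  linarith [Real.log_two_gt_d9]

lemma modelDensity_pos : 0 < modelDensity := div_pos two_pos (one_pos.trans one_lt_log_four)

lemma modelDensity_le_two : modelDensity ≤ 2 := div_le_self two_pos.le one_lt_log_four.le

lemma two_mul_parityModel_zero (σ : ℤˣ) (Q : ℝ) :
    2 * parityModel σ Q 0 = ∑ n ∈ Ioc 0 ⌊Q⌋₊, ((⌊Q⌋₊ / n % 4 : ℕ) : ℝ) +
      ((σ : ℤ) : ℝ) * ∑ n ∈ Ioc 0 ⌊Q⌋₊, (liouville n : ℝ) * (⌊Q⌋₊ / n % 4 : ℕ) := by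
  simp only [parityModel, modelSet, zero_le, implies_true, true_and]
  rw [sum_filter, mul_sum, mul_sum, ← sum_add_distrib]
  refine sum_congr rfl fun n hn ↦ ?_
  have hsign : liouville n = 1 ∨ liouville n = -1 := by
    rw [ArithmeticFunction.liouville_apply (mem_Ioc.1 hn).1.ne']
    exact neg_one_pow_eq_or ℤ _
  rcases hsign with h | h <;> rcases Int.units_eq_one_or σ with rfl | rfl <;> norm_num [h] <;> ring

lemma abs_modelDensity_mul_parityModel_zero_sub_le (σ : ℤˣ) {Q : ℝ} (hQ : 1 ≤ Q) :
    |modelDensity * parityModel σ Q 0 - Q| ≤ 51 * √Q := by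
  have hlog := one_lt_log_four
  have hfloor : √⌊Q⌋₊ ≤ √Q := Real.sqrt_le_sqrt (Nat.floor_le (by linarith))
  have hmean := abs_le.1 (abs_sum_mod_four_sub_mul_log_four_le ⌊Q⌋₊)
  have hparity : |((σ : ℤ) : ℝ) * ∑ n ∈ Ioc 0 ⌊Q⌋₊, (liouville n : ℝ) * (⌊Q⌋₊ / n % 4 : ℕ)| ≤
      5 * √⌊Q⌋₊ := by
    rw [abs_mul, ← Int.cast_abs, Int.isUnit_iff_abs_eq.1 σ.isUnit, Int.cast_one, one_mul]
    exact abs_sum_liouville_mul_mod_four_le _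
  have hdouble : |2 * parityModel σ Q 0 - ⌊Q⌋₊ * log 4| ≤ 45 * √Q := by
    rw [two_mul_parityModel_zero, abs_le]
    rw [abs_le] at hparity
    constructor <;> linarith [hmean.1, hmean.2, hparity.1, hparity.2]
  have hnorm : |modelDensity * parityModel σ Q 0 - ⌊Q⌋₊| ≤ 45 * √Q := by
    rw [show modelDensity * parityModel σ Q 0 - ⌊Q⌋₊ =
      (2 * parityModel σ Q 0 - ⌊Q⌋₊ * log 4) / log 4 by rw [modelDensity]; field_simp, abs_div,
      abs_of_pos (one_pos.trans hlog)]
    exact (div_le_self (abs_nonneg _) hlog.le).trans hdouble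
  rw [abs_le] at *
  constructor <;> linarith [Nat.lt_floor_add_one Q, Nat.floor_le (zero_le_one.trans hQ),
    Real.one_le_sqrt.2 hQ, hnorm.1, hnorm.2]

lemma le_of_prime_dvd_succ_iff {l n : ℕ} :
    (∀ p : ℕ, p.Prime → p ∣ n → l + 1 ≤ p) ↔
      (∀ p : ℕ, p.Prime → p ∣ n → l ≤ p) ∧ ¬ (l.Prime ∧ l ∣ n) := by
  refine ⟨fun h ↦ ⟨fun p hp hpn ↦ (h p hp hpn).trans' l.le_succ, fun hl ↦ ?_⟩,
    fun h p hp hpn ↦ (h.1 p hp hpn).lt_of_ne ?_⟩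
  · exact absurd (h l hl.1 hl.2) (by simp)
  · rintro rfl
    exact h.2 ⟨hp, hpn⟩

lemma parityModel_succ_of_not_prime (σ : ℤˣ) (Q : ℝ) {l : ℕ} (hl : ¬ l.Prime) :
    parityModel σ Q (l + 1) = parityModel σ Q l := by
  refine sum_congr (ext fun n ↦ ?_) fun _ _ ↦ rfl
  simp only [mem_modelSet, le_of_prime_dvd_succ_iff, hl, false_and, not_false_eq_true, and_true]

lemma sum_modelSet_filter_dvd (σ : ℤˣ) (Q : ℝ) {l : ℕ} (hl : l.Prime) :
    ∑ n ∈ modelSet σ Q l with l ∣ n, ((⌊Q⌋₊ / n % 4 : ℕ) : ℝ) = parityModel (-σ) (Q / l) l := by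
  have hsign (m : ℕ) : liouville (l * m) = σ ↔ liouville m = (-σ : ℤˣ) := by
    rw [ArithmeticFunction.liouville_apply_mul, liouville_apply_prime hl, Units.val_neg]
    constructor <;> intro h <;> linarith
  rw [parityModel, Nat.floor_div_natCast]
  refine (sum_bij (fun m _ ↦ l * m) (fun m hm ↦ ?_)
    (fun _ _ _ _ h ↦ Nat.eq_of_mul_eq_mul_left hl.pos h) (fun n hn ↦ ?_)
    fun m _ ↦ by rw [Nat.div_div_eq_div_mul]).symm
  · rw [mem_modelSet, Nat.floor_div_natCast, Nat.le_div_iff_mul_le hl.pos, mul_comm m] at hm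
    rw [mem_filter, mem_modelSet, hsign]
    refine ⟨⟨⟨Nat.mul_pos hl.pos hm.1.1, hm.1.2⟩, fun p hp hpn ↦ ?_, hm.2.2⟩, dvd_mul_right _ _⟩
    rcases hp.dvd_mul.1 hpn with h | h
    · exact ((Nat.prime_dvd_prime_iff_eq hp hl).1 h).ge
    · exact hm.2.1 p hp h
  · rw [mem_filter, mem_modelSet] at hn
    obtain ⟨⟨⟨hpos, hle⟩, hdvd, hn⟩, m, rfl⟩ := hn
    refine ⟨m, ?_, rfl⟩
    rw [mem_modelSet, Nat.floor_div_natCast, Nat.le_div_iff_mul_le hl.pos, mul_comm m, ← hsign]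
    exact ⟨⟨Nat.pos_of_mul_pos_left hpos, hle⟩, fun p hp hpm ↦ hdvd p hp (hpm.mul_left l), hn⟩

lemma parityModel_succ_of_prime (σ : ℤˣ) (Q : ℝ) {l : ℕ} (hl : l.Prime) :
    parityModel σ Q (l + 1) = parityModel σ Q l - parityModel (-σ) (Q / l) l := by
  have hset : {n ∈ modelSet σ Q l | ¬ l ∣ n} = modelSet σ Q (l + 1) := by
    ext n
    simp only [mem_filter, mem_modelSet, le_of_prime_dvd_succ_iff, hl, true_and]
    tauto
  rw [← sum_modelSet_filter_dvd σ Q hl, parityModel, parityModel, ← hset,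
    ← sum_filter_add_sum_filter_not (modelSet σ Q l) (l ∣ ·), add_sub_cancel_left]

lemma eq_sub_sum_primesBelow {M : Type*} [AddCommGroup M] {f g : ℕ → M}
    (hprime : ∀ p, p.Prime → f (p + 1) = f p - g p)
    (hnot : ∀ n, ¬ n.Prime → f (n + 1) = f n) (l : ℕ) :
    f l = f 0 - ∑ p ∈ Nat.primesBelow l, g p := by
  induction l with
  | zero => simp
  | succ l ih =>
    by_cases hl : l.Prime
    · rw [hprime l hl, sum_primesBelow_succ_of_prime _ hl, ih, sub_sub]
    · rw [hnot l hl, Nat.primesBelow_succ, if_neg hl, ih]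

theorem parityModel_eq_sub_sum (σ : ℤˣ) (Q : ℝ) (l : ℕ) :
    parityModel σ Q l =
      parityModel σ Q 0 - ∑ p ∈ Nat.primesBelow l, parityModel (-σ) (Q / p) p :=
  eq_sub_sum_primesBelow (fun _ hp ↦ parityModel_succ_of_prime σ Q hp)
    (fun _ hn ↦ parityModel_succ_of_not_prime σ Q hn) l

lemma sub_sum_sub_sum {M : Type*} [AddCommGroup M] {s : Finset ℕ} {x : M} {f g : ℕ → M}
    {t : ℕ → Finset ℕ} {h : ℕ → ℕ → M} (hf : ∀ p ∈ s, f p = g p - ∑ q ∈ t p, h p q) :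
    x - ∑ p ∈ s, f p = x - ∑ p ∈ s, g p + ∑ p ∈ s, ∑ q ∈ t p, h p q := by
  rw [sum_congr rfl hf, sum_sub_distrib]
  abel

theorem parityModel_eq_two_step (σ : ℤˣ) (Q : ℝ) (l : ℕ) :
    parityModel σ Q l =
      parityModel σ Q 0 - ∑ p ∈ Nat.primesBelow l, parityModel (-σ) (Q / p) 0 +
        ∑ p ∈ Nat.primesBelow l, ∑ q ∈ Nat.primesBelow p, parityModel σ (Q / p / q) q := by
  rw [parityModel_eq_sub_sum]
  refine sub_sum_sub_sum fun p _ ↦ ?_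
  rw [parityModel_eq_sub_sum, neg_neg]

end Model

/-! ### Comparison of a sifted progression with the model -/

section Sifting

/-- The set sifted by one residue class `a p` modulo each prime `p < l`, usually denoted
`S(A, l)`. -/
def sifted (a : ℕ → ℤ) (A : Finset ℤ) (l : ℕ) : Finset ℤ :=
  {n ∈ A | ∀ p ∈ Nat.primesBelow l, ¬ n ≡ a p [ZMOD p]}

/-- The part of `A` removed by the prime `p`, usually denoted `A_p`. -/
def residueFiber (a : ℕ → ℤ) (A : Finset ℤ) (p : ℕ) : Finset ℤ := {n ∈ A | n ≡ a p [ZMOD p]}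

lemma sifted_zero (a : ℕ → ℤ) (A : Finset ℤ) : sifted a A 0 = A := by simp [sifted]

lemma sifted_subset (a : ℕ → ℤ) (A : Finset ℤ) (l : ℕ) : sifted a A l ⊆ A := filter_subset _ _

lemma sifted_anti (a : ℕ → ℤ) (A : Finset ℤ) : Antitone (sifted a A) := fun _ _ h ↦
  monotone_filter_right _ fun _ _ hn p hp ↦ hn p (Nat.primesBelow_mono h hp)

lemma residueFiber_sifted (a : ℕ → ℤ) (A : Finset ℤ) (l p : ℕ) :
    residueFiber a (sifted a A l) p = sifted a (residueFiber a A p) l := filter_comm _ _ _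

lemma card_sifted_succ_of_prime (a : ℕ → ℤ) (A : Finset ℤ) {p : ℕ} (hp : p.Prime) :
    (#(sifted a A (p + 1)) : ℝ) = #(sifted a A p) - #(sifted a (residueFiber a A p) p) := by
  have hset : {n ∈ sifted a A p | ¬ n ≡ a p [ZMOD p]} = sifted a A (p + 1) := by
    ext n
    simp only [sifted, mem_filter, Nat.primesBelow_succ, if_pos hp, mem_insert, forall_eq_or_imp]
    tauto
  rw [← residueFiber_sifted, residueFiber, ← hset, eq_sub_iff_add_eq', ← Nat.cast_add,
    card_filter_add_card_filter_not]

theorem card_sifted_eq_sub_sum (a : ℕ → ℤ) (A : Finset ℤ) (l : ℕ) :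
    (#(sifted a A l) : ℝ) =
      #A - ∑ p ∈ Nat.primesBelow l, (#(sifted a (residueFiber a A p) p) : ℝ) := by
  rw [eq_sub_sum_primesBelow (f := fun l ↦ (#(sifted a A l) : ℝ))
    (fun p hp ↦ card_sifted_succ_of_prime a A hp)
    (fun n hn ↦ by simp only [sifted, Nat.primesBelow_succ, if_neg hn]) l, sifted_zero]

theorem card_sifted_eq_two_step (a : ℕ → ℤ) (A : Finset ℤ) (l : ℕ) :
    (#(sifted a A l) : ℝ) = #A - ∑ p ∈ Nat.primesBelow l, (#(residueFiber a A p) : ℝ) +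
      ∑ p ∈ Nat.primesBelow l, ∑ q ∈ Nat.primesBelow p,
        (#(sifted a (residueFiber a (residueFiber a A p) q) q) : ℝ) := by
  rw [card_sifted_eq_sub_sum]
  exact sub_sum_sub_sum fun p _ ↦ card_sifted_eq_sub_sum a _ p

/-- The integers of the interval `(x₀, x₀ + W]` congruent to `r` modulo `d`. -/
noncomputable def progression (x₀ : ℤ) (W d : ℕ) (r : ℤ) : Finset ℤ :=
  {n ∈ Ioc x₀ (x₀ + W) | n ≡ r [ZMOD d]}

lemma progression_one (x₀ : ℤ) (W : ℕ) (r : ℤ) : progression x₀ W 1 r = Ioc x₀ (x₀ + W) :=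
  filter_true_of_mem fun n _ ↦ by rw [Nat.cast_one]; exact Int.modEq_one

lemma abs_card_progression_sub_le (x₀ : ℤ) (W : ℕ) {d : ℕ} (hd : 0 < d) (r : ℤ) :
    |(#(progression x₀ W d r) : ℝ) - W / d| ≤ 1 := by
  have hcard := Int.Ioc_filter_modEq_card x₀ (x₀ + W) (r := d) (by exact_mod_cast hd) r
  have hshift : (((x₀ + W : ℤ) : ℚ) - r) / (d : ℤ) = (x₀ - r) / d + W / d := by push_cast; ring
  rw [hshift, Int.cast_natCast, max_eq_left (sub_nonneg.2 (Int.floor_le_floor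
    (le_add_of_nonneg_right (by positivity))))] at hcard
  set t : ℚ := (x₀ - r) / d
  have hcard' : (#(progression x₀ W d r) : ℚ) = ⌊t + W / d⌋ - ⌊t⌋ := by exact_mod_cast hcard
  have hrat : |(#(progression x₀ W d r) : ℚ) - W / d| ≤ 1 := by
    rw [hcard', abs_le]
    constructor <;> linarith [Int.floor_le t, Int.lt_floor_add_one t,
      Int.floor_le (t + W / d), Int.lt_floor_add_one (t + W / d)]
  have hreal := (Rat.cast_le (K := ℝ)).2 hrat
  push_cast at hreal
  exact hreal

lemma exists_residueFiber_progression_eq (a : ℕ → ℤ) (x₀ : ℤ) (W : ℕ) {d p : ℕ}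
    (hdp : d.Coprime p) (r : ℤ) :
    ∃ r', residueFiber a (progression x₀ W d r) p = progression x₀ W (d * p) r' := by
  obtain ⟨u, v, huv⟩ : IsCoprime (d : ℤ) p := Nat.isCoprime_iff_coprime.2 hdp
  refine ⟨u * d * a p + v * p * r, ?_⟩
  have hd : u * d * a p + v * p * r ≡ r [ZMOD d] :=
    Int.modEq_iff_dvd.2 ⟨u * r - u * a p, by linear_combination -r * huv⟩
  have hp : u * d * a p + v * p * r ≡ a p [ZMOD p] :=
    Int.modEq_iff_dvd.2 ⟨v * a p - v * r, by linear_combination -a p * huv⟩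
  ext n
  simp only [residueFiber, progression, mem_filter, and_assoc]
  rw [Nat.cast_mul, ← Int.modEq_and_modEq_iff_modEq_mul (by simpa using hdp)]
  exact and_congr_right fun _ ↦ and_congr ⟨(·.trans hd.symm), (·.trans hd)⟩
    ⟨(·.trans hp.symm), (·.trans hp)⟩

end Sifting

section PerturbedModel

/-- A combination of the model at the two scales `Q` and `K * Q` with the same unsifted main term.
The second scale supplies the room needed to absorb the error terms of the comparison. -/
noncomputable def perturbedModel (ε K : ℝ) (σ : ℤˣ) (Q : ℝ) (l : ℕ) : ℝ :=
  modelDensity * ((1 + ε) * parityModel σ Q l - ε / K * parityModel σ (K * Q) l)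

theorem perturbedModel_eq_two_step (ε K : ℝ) (σ : ℤˣ) (Q : ℝ) (l : ℕ) :
    perturbedModel ε K σ Q l =
      perturbedModel ε K σ Q 0 - ∑ p ∈ Nat.primesBelow l, perturbedModel ε K (-σ) (Q / p) 0 +
        ∑ p ∈ Nat.primesBelow l, ∑ q ∈ Nat.primesBelow p, perturbedModel ε K σ (Q / p / q) q := by
  simp only [perturbedModel, ← mul_div_assoc, ← mul_sum, sum_sub_distrib]
  rw [parityModel_eq_two_step σ Q l, parityModel_eq_two_step σ (K * Q) l]
  ring

variable {ε K Q : ℝ}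

lemma abs_perturbedModel_zero_sub_le (hε : 0 ≤ ε) (hε' : ε ≤ 1) (hK : 1 ≤ K) (hQ : 1 ≤ Q)
    (σ : ℤˣ) : |perturbedModel ε K σ Q 0 - Q| ≤ 153 * √Q := by
  have hKpos : 0 < K := by linarith
  have hnear : |(1 + ε) * (modelDensity * parityModel σ Q 0 - Q)| ≤ 102 * √Q := by
    rw [abs_mul, abs_of_nonneg (by linarith : 0 ≤ 1 + ε)]
    calc (1 + ε) * |modelDensity * parityModel σ Q 0 - Q| ≤ 2 * (51 * √Q) := by
          gcongr
          · linarith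
          · exact abs_modelDensity_mul_parityModel_zero_sub_le σ hQ
      _ = 102 * √Q := by ring
  have hfar : |ε / K * (modelDensity * parityModel σ (K * Q) 0 - K * Q)| ≤ 51 * √Q := by
    rw [abs_mul, abs_of_nonneg (by positivity : 0 ≤ ε / K)]
    calc ε / K * |modelDensity * parityModel σ (K * Q) 0 - K * Q|
        ≤ 1 / K * (51 * √(K * Q)) := by
          gcongr
          exact abs_modelDensity_mul_parityModel_zero_sub_le σ
            (one_le_mul_of_one_le_of_one_le hK hQ)
      _ ≤ 1 / K * (51 * (K * √Q)) := by
          rw [Real.sqrt_mul hKpos.le]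
          gcongr
          exact Real.sqrt_le_self_iff.2 (Or.inr hK)
      _ = 51 * √Q := by field_simp
  calc |perturbedModel ε K σ Q 0 - Q|
      = |(1 + ε) * (modelDensity * parityModel σ Q 0 - Q) -
          ε / K * (modelDensity * parityModel σ (K * Q) 0 - K * Q)| := by
        rw [perturbedModel]
        congr 1
        field_simp
        ring
    _ ≤ 102 * √Q + 51 * √Q := (abs_sub _ _).trans (add_le_add hnear hfar)
    _ = 153 * √Q := by ring

lemma modelSet_one_subset_singleton {q : ℕ} (hQ : Q < q ^ 2) : modelSet 1 Q q ⊆ {1} := by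
  intro n hn
  obtain ⟨⟨hpos, hle⟩, hrough, hsign⟩ := mem_modelSet.1 hn
  rw [mem_singleton]
  by_contra hne
  obtain ⟨p, hp, m, rfl⟩ := Nat.exists_prime_and_dvd hne
  have hm1 : m ≠ 1 := by
    rintro rfl
    rw [mul_one, liouville_apply_prime hp, Units.val_one] at hsign
    norm_num at hsign
  obtain ⟨p', hp', hpm⟩ := Nat.exists_prime_and_dvd hm1
  have hqm : q ≤ m := (hrough p' hp' (hpm.mul_left p)).trans
    (Nat.le_of_dvd (Nat.pos_of_mul_pos_left hpos) hpm)
  have hlt : ((p * m : ℕ) : ℝ) < (q ^ 2 : ℕ) := by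
    push_cast
    exact_mod_cast ((Nat.le_floor_iff' hpos.ne').1 hle).trans_lt hQ
  have := Nat.mul_le_mul (hrough p hp (dvd_mul_right _ _)) hqm
  rw [Nat.cast_lt, sq] at hlt
  omega

lemma parityModel_one_le_three {q : ℕ} (hQ : Q < q ^ 2) : parityModel 1 Q q ≤ 3 := by
  calc parityModel 1 Q q ≤ ∑ n ∈ ({1} : Finset ℕ), ((⌊Q⌋₊ / n % 4 : ℕ) : ℝ) :=
        sum_le_sum_of_subset_of_nonneg (modelSet_one_subset_singleton hQ)
          fun _ _ _ ↦ Nat.cast_nonneg _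
    _ ≤ 3 := by
        rw [sum_singleton]
        norm_cast
        omega

lemma perturbedModel_one_le (hε : 0 ≤ ε) (hε' : ε ≤ 1) {q : ℕ} (hQ : Q < q ^ 2) :
    perturbedModel ε K 1 Q q ≤ 12 - modelDensity * ε / K * parityModel 1 (K * Q) q := by
  have hnear : modelDensity * ((1 + ε) * parityModel 1 Q q) ≤ 2 * (2 * 3) :=
    mul_le_mul modelDensity_le_two (mul_le_mul (by linarith) (parityModel_one_le_three hQ)
      (parityModel_nonneg _ _ _) two_pos.le) (mul_nonneg (by linarith) (parityModel_nonneg _ _ _))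
      two_pos.le
  rw [perturbedModel]
  linear_combination hnear

end PerturbedModel

section Comparison

/-- The primes `q < p` for which sifting by the primes below `q` is still in the range
`q ^ 2 ≤ Q / p / q` of the comparison theorem. -/
noncomputable def innerPrimes (Q : ℝ) (p : ℕ) : Finset ℕ :=
  {q ∈ Nat.primesBelow p | (p : ℝ) * (q : ℝ) ^ 3 ≤ Q}

/-- The primes `q < p` with `Q / p / q < q ^ 2`, where the recursion ends. -/
noncomputable def outerPrimes (Q : ℝ) (p : ℕ) : Finset ℕ :=
  {q ∈ Nat.primesBelow p | ¬ (p : ℝ) * (q : ℝ) ^ 3 ≤ Q}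

/-- The total mass of the model at scale `K * Q` on the pairs where the recursion ends. -/
noncomputable def outerMass (K Q : ℝ) (l : ℕ) : ℝ :=
  ∑ p ∈ Nat.primesBelow l, ∑ q ∈ outerPrimes Q p, parityModel 1 (K * (Q / p / q)) q

/-- The error made by one two-step Buchstab expansion. -/
noncomputable def expansionError (Q : ℝ) (l : ℕ) : ℝ :=
  154 * (√Q + ∑ p ∈ Nat.primesBelow l, √(Q / p)) +
    ∑ p ∈ Nat.primesBelow l, ∑ q ∈ innerPrimes Q p, 12 * (#(Nat.primesBelow q) : ℝ) ^ 2

/-- A potential pays at each pair `(Q, l)` for the error of one expansion and for its own values at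
the children of `(Q, l)`, with the help of the mass on the pairs where the recursion ends. -/
def IsPotential (ε K : ℝ) (P : ℝ → ℕ → ℝ) : Prop :=
  ∀ (Q : ℝ) (l : ℕ), 1 ≤ Q → (l : ℝ) ^ 2 ≤ Q →
    expansionError Q l + ∑ p ∈ Nat.primesBelow l, ∑ q ∈ innerPrimes Q p, P (Q / p / q) q ≤
      P Q l + modelDensity * ε / K * outerMass K Q l

lemma sum_innerPrimes_add_sum_outerPrimes (Q : ℝ) (p : ℕ) (f : ℕ → ℝ) :
    ∑ q ∈ innerPrimes Q p, f q + ∑ q ∈ outerPrimes Q p, f q = ∑ q ∈ Nat.primesBelow p, f q :=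
  sum_filter_add_sum_filter_not _ _ _

lemma outerMass_nonneg (K Q : ℝ) (l : ℕ) : 0 ≤ outerMass K Q l :=
  sum_nonneg fun _ _ ↦ sum_nonneg fun _ _ ↦ parityModel_nonneg _ _ _

lemma mem_innerPrimes {Q : ℝ} {p q : ℕ} (hp : 0 < p) :
    q ∈ innerPrimes Q p ↔ (q < p ∧ q.Prime) ∧ (q : ℝ) ^ 2 ≤ Q / p / q := by
  rw [innerPrimes, mem_filter, Nat.mem_primesBelow]
  refine and_congr_right fun hq ↦ ?_
  have := hq.2.pos
  rw [div_div, le_div_iff₀ (by positivity), show (q : ℝ) ^ 2 * (p * q) = p * q ^ 3 by ring]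

lemma mem_outerPrimes {Q : ℝ} {p q : ℕ} (hp : 0 < p) :
    q ∈ outerPrimes Q p ↔ (q < p ∧ q.Prime) ∧ Q / p / q < q ^ 2 := by
  rw [outerPrimes, mem_filter, Nat.mem_primesBelow]
  refine and_congr_right fun hq ↦ ?_
  have := hq.2.pos
  rw [not_le, div_div, div_lt_iff₀ (by positivity), show (q : ℝ) ^ 2 * (p * q) = p * q ^ 3 by ring]

lemma one_le_div_of_lt {Q : ℝ} {l p : ℕ} (hp : p.Prime) (hpl : p < l) (hl : (l : ℝ) ^ 2 ≤ Q) :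
    1 ≤ Q / p := by
  have hp1 : (1 : ℝ) ≤ p := by exact_mod_cast hp.one_lt.le
  have hpl' : (p : ℝ) ≤ l := by exact_mod_cast hpl.le
  rw [le_div_iff₀ (by linarith)]
  nlinarith

lemma card_primesBelow_mono {a b : ℕ} (h : a ≤ b) : (#(Nat.primesBelow a) : ℝ) ≤
    #(Nat.primesBelow b) := by
  exact_mod_cast card_le_card (Nat.primesBelow_mono h)

variable {ε K : ℝ} {a : ℕ → ℤ} {x₀ : ℤ} {W d l : ℕ} {r : ℤ} {P : ℝ → ℕ → ℝ}

/-- The conclusion of the comparison theorem for the primes below `l`. -/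
def ComparisonBound (ε K : ℝ) (P : ℝ → ℕ → ℝ) (a : ℕ → ℤ) (x₀ : ℤ) (W l : ℕ) : Prop :=
  ∀ (d : ℕ) (r : ℤ), 0 < d → (∀ p : ℕ, p.Prime → p < l → d.Coprime p) → (l : ℝ) ^ 2 ≤ W / d →
    1 ≤ (W : ℝ) / d → perturbedModel ε K 1 (W / d) l - 12 * (#(Nat.primesBelow l) : ℝ) ^ 2 -
      P (W / d) l ≤ #(sifted a (progression x₀ W d r) l)

lemma card_residueFiber_progression_le (hε : 0 ≤ ε) (hε' : ε ≤ 1) (hK : 1 ≤ K) (hd : 0 < d)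
    {p : ℕ} (hp : 0 < p) (hdp : d.Coprime p) (hQ : 1 ≤ (W : ℝ) / d / p) :
    (#(residueFiber a (progression x₀ W d r) p) : ℝ) ≤
      perturbedModel ε K (-1) (W / d / p) 0 + 154 * √(W / d / p) := by
  obtain ⟨r', hr'⟩ := exists_residueFiber_progression_eq a x₀ W hdp r
  have hcard := abs_le.1 (abs_card_progression_sub_le x₀ W (Nat.mul_pos hd hp) r')
  rw [Nat.cast_mul, ← div_div] at hcard
  have hmodel := abs_le.1 (abs_perturbedModel_zero_sub_le hε hε' hK hQ (-1))
  rw [hr']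
  linarith [hcard.2, hmodel.1, Real.one_le_sqrt.2 hQ]

lemma sub_le_card_sifted_of_mem_innerPrimes (hd : 0 < d)
    (hcop : ∀ p : ℕ, p.Prime → p < l → d.Coprime p) {p q : ℕ} (hp : p.Prime) (hpl : p < l)
    (hq : q ∈ innerPrimes (W / d) p) (hind : ComparisonBound ε K P a x₀ W q) :
    perturbedModel ε K 1 (W / d / p / q) q - 12 * (#(Nat.primesBelow q) : ℝ) ^ 2 -
      P (W / d / p / q) q ≤
        #(sifted a (residueFiber a (residueFiber a (progression x₀ W d r) p) q) q) := by
  obtain ⟨⟨hqp, hqprime⟩, hq2⟩ := (mem_innerPrimes hp.pos).1 hq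
  have hdpq : (d * p).Coprime q := (hcop q hqprime (hqp.trans hpl)).mul_left
    ((Nat.coprime_primes hp hqprime).2 hqp.ne')
  obtain ⟨r₁, hr₁⟩ := exists_residueFiber_progression_eq a x₀ W (hcop p hp hpl) r
  obtain ⟨r₂, hr₂⟩ := exists_residueFiber_progression_eq a x₀ W hdpq r₁
  have hcop' : ∀ p' : ℕ, p'.Prime → p' < q → (d * p * q).Coprime p' := fun p' hp' hlt ↦
    ((hcop p' hp' (hlt.trans (hqp.trans hpl))).mul_left
      ((Nat.coprime_primes hp hp').2 (hlt.trans hqp).ne')).mul_left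
      ((Nat.coprime_primes hqprime hp').2 hlt.ne')
  have hq1 : (1 : ℝ) ≤ q := by exact_mod_cast hqprime.one_lt.le
  have hscale : (W : ℝ) / (d * p * q : ℕ) = W / d / p / q := by push_cast; simp only [div_div]
  have := hind (d * p * q) r₂ (Nat.mul_pos (Nat.mul_pos hd hp.pos) hqprime.pos) hcop'
  rw [hscale] at this
  rw [hr₁, hr₂]
  exact this hq2 (by nlinarith)

lemma sum_perturbedModel_sub_le (hε : 0 ≤ ε) (hε' : ε ≤ 1) (hd : 0 < d)
    (hcop : ∀ p : ℕ, p.Prime → p < l → d.Coprime p) {p : ℕ} (hp : p.Prime) (hpl : p < l)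
    (hind : ∀ q < p, ComparisonBound ε K P a x₀ W q) :
    ∑ q ∈ Nat.primesBelow p, perturbedModel ε K 1 (W / d / p / q) q -
        ∑ q ∈ innerPrimes (W / d) p,
          (12 * (#(Nat.primesBelow q) : ℝ) ^ 2 + P (W / d / p / q) q) -
        12 * #(Nat.primesBelow l) +
        modelDensity * ε / K * ∑ q ∈ outerPrimes (W / d) p, parityModel 1 (K * (W / d / p / q)) q ≤
      ∑ q ∈ Nat.primesBelow p,
        (#(sifted a (residueFiber a (residueFiber a (progression x₀ W d r) p) q) q) : ℝ) := by
  have hinner := sum_le_sum fun q hq ↦ sub_le_card_sifted_of_mem_innerPrimes (r := r) hd hcop hp hpl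
    hq (hind q ((mem_innerPrimes hp.pos).1 hq).1.1)
  have houter := sum_le_sum (s := outerPrimes (W / d) p) fun q hq ↦
    perturbedModel_one_le (K := K) hε hε' ((mem_outerPrimes hp.pos).1 hq).2
  have hcard : (#(outerPrimes ((W : ℝ) / d) p) : ℝ) ≤ #(Nat.primesBelow l) :=
    (Nat.cast_le.2 (card_filter_le _ _)).trans (card_primesBelow_mono hpl.le)
  have hnonneg : (0 : ℝ) ≤ ∑ q ∈ outerPrimes (W / d) p,
      (#(sifted a (residueFiber a (residueFiber a (progression x₀ W d r) p) q) q) : ℝ) :=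
    sum_nonneg fun _ _ ↦ Nat.cast_nonneg _
  simp only [sub_sub, sum_sub_distrib, sum_const, nsmul_eq_mul, ← mul_sum] at hinner houter
  rw [← sum_innerPrimes_add_sum_outerPrimes (W / d) p (fun q ↦ perturbedModel _ _ _ _ q),
    ← sum_innerPrimes_add_sum_outerPrimes (W / d) p (fun q ↦ (#(sifted a _ q) : ℝ))]
  linarith

/-- Both sides satisfy the same two-step Buchstab recursion. The recursion has positive sign at the
second step, so that the lower bound propagates, and `P` pays for the errors. -/
theorem comparisonBound_of_isPotential (hε : 0 ≤ ε) (hε' : ε ≤ 1) (hK : 1 ≤ K)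
    (hP : IsPotential ε K P) (a : ℕ → ℤ) (x₀ : ℤ) (W l : ℕ) :
    ComparisonBound ε K P a x₀ W l := by
  induction l using Nat.strong_induction_on with
  | _ l ih =>
  intro d r hd hcop hl hQ
  have hpotential := hP (W / d) l hQ hl
  have hroot := abs_le.1 (abs_card_progression_sub_le x₀ W hd r)
  have hmodel := abs_le.1 (abs_perturbedModel_zero_sub_le hε hε' hK hQ 1)
  have hfirst := sum_le_sum fun p hp ↦ card_residueFiber_progression_le (a := a) (x₀ := x₀) (r := r)
    hε hε' hK hd (Nat.prime_of_mem_primesBelow hp).pos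
    (hcop p (Nat.prime_of_mem_primesBelow hp) (Nat.lt_of_mem_primesBelow hp))
    (one_le_div_of_lt (Nat.prime_of_mem_primesBelow hp) (Nat.lt_of_mem_primesBelow hp) hl)
  have hsecond := sum_le_sum fun p hp ↦ sum_perturbedModel_sub_le (r := r) hε hε' hd hcop
    (Nat.prime_of_mem_primesBelow hp) (Nat.lt_of_mem_primesBelow hp)
    fun q hq ↦ ih q (hq.trans (Nat.lt_of_mem_primesBelow hp))
  simp only [sum_add_distrib, sum_sub_distrib, sum_const, nsmul_eq_mul, ← mul_sum]
    at hfirst hsecond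
  rw [expansionError] at hpotential
  simp only [← mul_sum] at hpotential
  rw [card_sifted_eq_two_step, perturbedModel_eq_two_step]
  change _ + modelDensity * ε / K * outerMass K (W / d) l ≤ _ at hsecond
  linarith [hroot.1, hmodel.2, Real.one_le_sqrt.2 hQ]

end Comparison

/-! ### Sums over pairs of primes -/

section CappedCube

/-- The integral `∫₀^y min(1, t³) dt / t`, which bounds the two-prime sum below: the inner sum over
`q < p` grows like the cube of the outer variable until it saturates. -/
noncomputable def cappedCubeIntegral (y : ℝ) : ℝ := if y ≤ 1 then y ^ 3 / 3 else 1 / 3 + log y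

variable {L m x y : ℝ}

lemma cappedCubeIntegral_of_le_one (h : y ≤ 1) : cappedCubeIntegral y = y ^ 3 / 3 := if_pos h

lemma cappedCubeIntegral_of_one_le (h : 1 ≤ y) : cappedCubeIntegral y = 1 / 3 + log y := by
  rcases eq_or_lt_of_le h with rfl | h
  · simp [cappedCubeIntegral]
  · exact if_neg h.not_ge

lemma cappedCubeIntegral_nonneg (h : 0 ≤ y) : 0 ≤ cappedCubeIntegral y := by
  rcases le_total y 1 with h1 | h1
  · rw [cappedCubeIntegral_of_le_one h1]
    positivity
  · rw [cappedCubeIntegral_of_one_le h1]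
    have := log_nonneg h1
    linarith

lemma three_mul_sq_mul_sub_le_cube_sub (hx : 0 ≤ x) (hy : 0 ≤ y) :
    3 * x ^ 2 * (y - x) ≤ y ^ 3 - x ^ 3 := by
  have h : 0 ≤ (y - x) ^ 2 * (y + 2 * x) := by positivity
  linarith [show y ^ 3 - x ^ 3 - 3 * x ^ 2 * (y - x) = (y - x) ^ 2 * (y + 2 * x) by ring]

lemma cube_mul_log_div_le (hx : 0 < x) (hy : 0 < y) :
    x ^ 3 * log (y / x) ≤ (y ^ 3 - x ^ 3) / 3 := by
  have h_log : x ^ 3 * log (y / x) ≤ x ^ 3 * (y / x - 1) := by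
    gcongr
    exact log_le_sub_one_of_pos (by positivity)
  have h_eq : x ^ 3 * (y / x - 1) = x ^ 2 * (y - x) := by field_simp
  linarith [three_mul_sq_mul_sub_le_cube_sub hx.le hy.le]

lemma min_one_cube_mul_log_div_le (hx : 0 < x) (hxy : x ≤ y) :
    min 1 (x ^ 3) * log (y / x) ≤ cappedCubeIntegral y - cappedCubeIntegral x := by
  have hy : 0 < y := hx.trans_le hxy
  have hlog : 0 ≤ log (y / x) := log_nonneg ((one_le_div hx).2 hxy)
  have h_cube : min 1 (x ^ 3) * log (y / x) ≤ x ^ 3 * log (y / x) := by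
    gcongr
    exact min_le_right _ _
  rcases le_total y 1 with hy1 | hy1
  · rw [cappedCubeIntegral_of_le_one hy1, cappedCubeIntegral_of_le_one (hxy.trans hy1)]
    linarith [cube_mul_log_div_le hx hy]
  rw [cappedCubeIntegral_of_one_le hy1]
  rcases le_total x 1 with hx1 | hx1
  · have h_low := cube_mul_log_div_le hx one_pos
    have h_high : x ^ 3 * log y ≤ 1 * log y := by
      have := log_nonneg hy1
      gcongr
      exact pow_le_one₀ hx.le hx1
    rw [cappedCubeIntegral_of_le_one hx1]
    rw [log_div one_ne_zero hx.ne', log_one] at h_low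
    rw [log_div hy.ne' hx.ne'] at h_cube ⊢
    linarith
  · have h_one : min 1 (x ^ 3) * log (y / x) ≤ 1 * log (y / x) := by
      gcongr
      exact min_le_left _ _
    rw [cappedCubeIntegral_of_one_le hx1]
    rw [log_div hy.ne' hx.ne'] at h_one ⊢
    linarith

lemma cube_div_sub_pow_mul_log_div_le (hx : 0 < x) (hxy : x ≤ y) (hy : y < L) :
    x ^ 3 / (L - x) ^ 4 * log (y / x) ≤
      1 / (3 * L) * (y / (L - y)) ^ 3 - 1 / (3 * L) * (x / (L - x)) ^ 3 := by
  have hLx : 0 < L - x := by linarith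
  have hLy : 0 < L - y := by linarith
  have hL : 0 < L := by linarith
  have hy0 : 0 < y := by linarith
  have h_log : log (y / x) ≤ y / x - 1 := log_le_sub_one_of_pos (by positivity)
  have h_slope : (y - x) / (L - x) ^ 2 * L ≤ y / (L - y) - x / (L - x) := by
    rw [div_sub_div _ _ hLy.ne' hLx.ne', div_mul_eq_mul_div,
      show y * (L - x) - (L - y) * x = (y - x) * L by ring, sq]
    have : 0 ≤ y - x := by linarith
    gcongr
  rw [← mul_sub]
  calc x ^ 3 / (L - x) ^ 4 * log (y / x) ≤ x ^ 3 / (L - x) ^ 4 * (y / x - 1) := by gcongr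
    _ = 1 / (3 * L) * (3 * (x / (L - x)) ^ 2 * ((y - x) / (L - x) ^ 2 * L)) := by field_simp
    _ ≤ 1 / (3 * L) * (3 * (x / (L - x)) ^ 2 * (y / (L - y) - x / (L - x))) := by gcongr
    _ ≤ 1 / (3 * L) * ((y / (L - y)) ^ 3 - (x / (L - x)) ^ 3) := by
      gcongr
      exact three_mul_sq_mul_sub_le_cube_sub (by positivity) (by positivity)

lemma min_one_cube_div_mul_log_div_le (hm : 0 < m) (hx : 0 < x) (hxy : x ≤ y) (hy : y < L) :
    1 / (L - x) * min 1 ((x / (L - x) / m) ^ 3) * log (y / x) ≤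
      1 / L * cappedCubeIntegral (y / (L - y) / m) -
        1 / L * cappedCubeIntegral (x / (L - x) / m) := by
  have hLx : 0 < L - x := by linarith
  have hLy : 0 < L - y := by linarith
  have hL : 0 < L := by linarith
  have hy0 : 0 < y := by linarith
  have h_step := min_one_cube_mul_log_div_le (x := x / (L - x) / m) (y := y / (L - y) / m)
    (by positivity) (by gcongr)
  rw [show y / (L - y) / m / (x / (L - x) / m) = y / x / ((L - y) / (L - x)) by field_simp,
    log_div (by positivity) (by positivity)] at h_step
  have h_log : L / (L - x) * log (y / x) ≤ log (y / x) - log ((L - y) / (L - x)) := by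
    have h_log_ratio : log ((L - y) / (L - x)) ≤ (L - y) / (L - x) - 1 :=
      log_le_sub_one_of_pos (by positivity)
    have h_log_div : x / (L - x) * log (y / x) ≤ x / (L - x) * (y / x - 1) := by
      gcongr
      exact log_le_sub_one_of_pos (by positivity)
    have h_eq : x / (L - x) * (y / x - 1) = 1 - (L - y) / (L - x) := by field_simp; ring
    have h_coeff : L / (L - x) = 1 + x / (L - x) := by field_simp; ring
    rw [h_coeff]
    linarith
  have : 0 ≤ min 1 ((x / (L - x) / m) ^ 3) := le_min zero_le_one (by positivity)
  rw [← mul_sub]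
  calc 1 / (L - x) * min 1 ((x / (L - x) / m) ^ 3) * log (y / x)
      = 1 / L * (min 1 ((x / (L - x) / m) ^ 3) * (L / (L - x) * log (y / x))) := by field_simp
    _ ≤ 1 / L * (min 1 ((x / (L - x) / m) ^ 3) *
        (log (y / x) - log ((L - y) / (L - x)))) := by gcongr
    _ ≤ _ := by gcongr

lemma cappedCubeIntegral_le_of_one_le (h : 1 ≤ y) :
    cappedCubeIntegral y ≤ (2 * y + 3 * y ^ 2 - 3) / (6 * y) := by
  have h_sinh : log y ≤ (y - y⁻¹) / 2 := by
    rw [← sinh_log (by linarith)]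
    exact self_le_sinh_iff.2 (log_nonneg h)
  rw [cappedCubeIntegral_of_one_le h]
  calc 1 / 3 + log y ≤ 1 / 3 + (y - y⁻¹) / 2 := by gcongr
    _ = _ := by field_simp; ring

lemma cappedCubeIntegral_mul_three_add_cube_le (hy : 0 < y) (hy3 : y ≤ 3) :
    cappedCubeIntegral y * (3 + y) ^ 3 ≤ 23 * y ^ 3 := by
  rcases le_total y 1 with h | h
  · rw [cappedCubeIntegral_of_le_one h]
    calc y ^ 3 / 3 * (3 + y) ^ 3 ≤ y ^ 3 / 3 * (3 + 1) ^ 3 := by gcongr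
      _ ≤ 23 * y ^ 3 := by nlinarith [pow_pos hy 3]
  refine (mul_le_mul_of_nonneg_right (cappedCubeIntegral_le_of_one_le h) (by positivity)).trans ?_
  rw [div_mul_eq_mul_div, div_le_iff₀ (by positivity)]
  obtain ⟨t, rfl⟩ : ∃ t, y = 1 + t := ⟨y - 1, by ring⟩
  have ht : 0 ≤ t := by linarith
  have : 23 * (1 + t) ^ 3 * (6 * (1 + t)) -
      (2 * (1 + t) + 3 * (1 + t) ^ 2 - 3) * (3 + (1 + t)) ^ 3 =
      (10 - 56 * t + 228 * t ^ 2) + 310 * t ^ 3 + t ^ 4 * (94 - 3 * t) := by ring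
  have h_quad : 0 ≤ 10 - 56 * t + 228 * t ^ 2 := by nlinarith [sq_nonneg (t - 1 / 8)]
  have h_quart : 0 ≤ t ^ 4 * (94 - 3 * t) := mul_nonneg (by positivity) (by linarith)
  have h_cube : 0 ≤ 310 * t ^ 3 := by positivity
  linarith

lemma cappedCubeIntegral_mul_one_add_pow_le (hy : 0 < y) (hy' : y ≤ 1.68) :
    cappedCubeIntegral y * (1 + 0.204 * y) ^ 5 ≤ 0.92 * y ^ 3 := by
  rcases le_total y 1 with h | h
  · rw [cappedCubeIntegral_of_le_one h]
    calc y ^ 3 / 3 * (1 + 0.204 * y) ^ 5 ≤ y ^ 3 / 3 * (1 + 0.204 * 1) ^ 5 := by gcongr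
      _ ≤ 0.92 * y ^ 3 := by nlinarith [pow_pos hy 3]
  refine (mul_le_mul_of_nonneg_right (cappedCubeIntegral_le_of_one_le h) (by positivity)).trans ?_
  rw [div_mul_eq_mul_div, div_le_iff₀ (by positivity)]
  obtain ⟨t, rfl⟩ : ∃ t, y = 1 + t := ⟨y - 1, by ring⟩
  have ht : 0 ≤ t := by linarith
  have h_pow (k : ℕ) (hk : 3 ≤ k) : t ^ k ≤ t ^ 3 := pow_le_pow_of_le_one ht (by linarith) hk
  have h_quad : 0 ≤ 0.45 - 2.448 * t + 6.92 * t ^ 2 := by nlinarith [sq_nonneg (t - 0.177)]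
  nlinarith [h_pow 5 (by norm_num), h_pow 6 (by norm_num), h_pow 7 (by norm_num),
    pow_nonneg ht 2, pow_nonneg ht 3, pow_nonneg ht 4]

end CappedCube

lemma log_le_half_log_of_sq_le {x y : ℝ} (hx : 0 < x) (h : x ^ 2 ≤ y) : log x ≤ log y / 2 := by
  have := log_le_log (by positivity) h
  rw [log_pow] at this
  push_cast at this
  linarith

lemma sq_le_of_mem_primesBelow {Q : ℝ} {l p : ℕ} (hl : (l : ℝ) ^ 2 ≤ Q)
    (hp : p ∈ Nat.primesBelow l) : (p : ℝ) ^ 2 ≤ Q :=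
  le_trans (by gcongr; exact (Nat.lt_of_mem_primesBelow hp).le) hl

lemma cube_le_of_mem_innerPrimes {Q : ℝ} {p q : ℕ} (hp : 0 < p) (hq : q ∈ innerPrimes Q p) :
    (q : ℝ) ^ 3 ≤ Q / p := by
  obtain ⟨⟨-, hqprime⟩, hq2⟩ := (mem_innerPrimes hp).1 hq
  have hq0 : (0 : ℝ) < q := mod_cast hqprime.pos
  rw [le_div_iff₀ hq0] at hq2
  linarith [pow_succ (q : ℝ) 2]

lemma min_one_cube_div_mul_le {c m t L L' : ℝ} (hc : 0 < c) (hc1 : c ≤ 1) (ht : 0 ≤ t) (hm : 0 < m)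
    (hL' : 0 < L') (h : c * L' ≤ L) :
    min 1 ((t / (m * L)) ^ 3) ≤ (1 / c) ^ 3 * min 1 ((t / L' / m) ^ 3) := by
  rcases le_total 1 ((t / L' / m) ^ 3) with h1 | h1
  · rw [min_eq_left h1, mul_one]
    exact (min_le_left _ _).trans (one_le_pow₀ ((one_le_div hc).2 hc1))
  · rw [min_eq_right h1, ← mul_pow]
    refine (min_le_right _ _).trans ?_
    have hL : 0 < L := (by positivity : 0 < c * L').trans_le h
    rw [show 1 / c * (t / L' / m) = t / (m * (c * L')) by field_simp]
    gcongr

namespace PrimeClock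

variable (T : PrimeClock)

/-- The shift that keeps `logScale` large compared with the lag of the clock. -/
noncomputable def shift : ℝ := 20000 * (T.lag + 3)

/-- The logarithm of `Q`, shifted to make the errors of the clock relatively small. -/
noncomputable def logScale (Q : ℝ) : ℝ := log Q + T.shift

/-- The function `Q t³ / L ^ k`, where `t` is the time of the clock at `l` and `L` is the scale of
`Q`. It is the shape of the error terms in the comparison of a sifted set with the parity model. -/
noncomputable def potential (k : ℕ) (Q : ℝ) (l : ℕ) : ℝ :=
  Q * (T.time l ^ 3 / T.logScale Q ^ k)

variable {T} {Q L m : ℝ} {l p : ℕ} {S : Finset ℕ}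

lemma shift_le_logScale (hQ : 1 ≤ Q) : T.shift ≤ T.logScale Q := by
  have := log_nonneg hQ
  unfold logScale
  linarith

lemma logScale_div {x : ℝ} (hQ : 0 < Q) (hx : 0 < x) :
    T.logScale (Q / x) = T.logScale Q - log x := by
  unfold logScale
  rw [log_div hQ.ne' hx.ne']
  ring

lemma time_le_half_logScale (hQ : 1 ≤ Q) (hl : (l : ℝ) ^ 2 ≤ Q) :
    T.time l ≤ T.logScale Q / 2 := by
  have h_log : log l ≤ log Q / 2 := by
    rcases Nat.eq_zero_or_pos l with rfl | hl0
    · have := log_nonneg hQ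
      simp only [CharP.cast_eq_zero, log_zero]
      linarith
    · exact log_le_half_log_of_sq_le (mod_cast hl0) hl
  have := T.time_le l
  have := T.one_le_lag
  unfold logScale shift
  linarith

lemma mul_sub_time_le_logScale_div (hQ : 0 < Q) (hp : 0 < p)
    (h : 10000 * T.lag ≤ T.logScale Q - T.time p) :
    0.9999 * (T.logScale Q - T.time p) ≤ T.logScale (Q / p) := by
  rw [logScale_div hQ (mod_cast hp)]
  linarith [T.log_sub_lag_le p]

lemma mul_sub_time_le_logScale_div_of_sq_le (hQ : 1 ≤ Q) (hp : 0 < p) (hpQ : (p : ℝ) ^ 2 ≤ Q) :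
    0.9999 * (T.logScale Q - T.time p) ≤ T.logScale (Q / p) := by
  refine mul_sub_time_le_logScale_div (by linarith) hp ?_
  have h_half := T.time_le_half_logScale hQ hpQ
  have h_shift := T.shift_le_logScale hQ
  rw [shift] at h_shift
  linarith

lemma shift_le_logScale_div (hp : 0 < p) (hpQ : (p : ℝ) ^ 2 ≤ Q) :
    T.shift ≤ T.logScale (Q / p) := by
  have hp1 : (1 : ℝ) ≤ p := mod_cast hp
  refine shift_le_logScale ((one_le_div (by linarith)).2 ?_)
  nlinarith

lemma exists_subset_primesBelow_time_le {B : ℝ} (hB : T.lag + 2 ≤ B)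
    (hS : S ⊆ Nat.primesBelow p) (hSB : ∀ q ∈ S, T.time q ≤ B - (T.lag + 2)) :
    ∃ r ≤ p, S ⊆ Nat.primesBelow r ∧ T.time r ≤ B := by
  rcases S.eq_empty_or_nonempty with rfl | hne
  · have h := T.time_le 0
    rw [CharP.cast_eq_zero, log_zero] at h
    exact ⟨0, p.zero_le, empty_subset _, by linarith [T.one_le_lag]⟩
  have hmax := S.max'_mem hne
  refine ⟨S.max' hne + 1, Nat.lt_of_mem_primesBelow (hS hmax), fun q hq ↦ ?_, ?_⟩
  · exact Nat.mem_primesBelow.2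
      ⟨Nat.lt_succ_of_le (S.le_max' q hq), Nat.prime_of_mem_primesBelow (hS hq)⟩
  · have h_log := log_natCast_succ_le (Nat.prime_of_mem_primesBelow (hS hmax)).one_lt.le
    linarith [hSB _ hmax, T.time_le (S.max' hne + 1), T.log_sub_lag_le (S.max' hne)]

lemma sum_inner_le (hL : 0 < L) (hm : 0 < m) (hm1 : m < 1) (hmL : T.lag + 2 ≤ m * L)
    (hS : S ⊆ Nat.primesBelow p) (hSm : ∀ q ∈ S, T.time q ≤ m * L - (T.lag + 2)) :
    ∑ q ∈ S, 1 / (q : ℝ) * (T.time q ^ 3 / (L - T.time q) ^ 4) ≤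
      1 / (3 * L) * (m / (1 - m)) ^ 3 * min 1 ((T.time p / (m * L)) ^ 3) := by
  obtain ⟨r, hrp, hSr, hr⟩ := exists_subset_primesBelow_time_le hmL hS hSm
  have hmL' : m * L < L := by nlinarith
  have hm0 : 0 < 1 - m := by linarith
  have hr0 := T.time_pos r
  have hr1 : 0 < L - T.time r := by linarith
  have h_ratio : T.time r / (L - T.time r) ≤ m / (1 - m) * (T.time r / (m * L)) := by
    rw [show m / (1 - m) * (T.time r / (m * L)) = T.time r / ((1 - m) * L) by field_simp]
    gcongr
    linarith
  calc ∑ q ∈ S, 1 / (q : ℝ) * (T.time q ^ 3 / (L - T.time q) ^ 4)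
      ≤ ∑ q ∈ Nat.primesBelow r, 1 / (q : ℝ) * (T.time q ^ 3 / (L - T.time q) ^ 4) := by
        refine sum_le_sum_of_subset_of_nonneg hSr fun q _ _ ↦ ?_
        have := T.time_pos q
        positivity
    _ ≤ 1 / (3 * L) * (T.time r / (L - T.time r)) ^ 3 := by
        refine T.sum_one_div_mul_le (R := fun x ↦ 1 / (3 * L) * (x / (L - x)) ^ 3)
          (w := fun x ↦ x ^ 3 / (L - x) ^ 4) (fun x hx hxr ↦ ?_) (fun x hx hxr ↦ ?_)
          fun x y hx hxy hyr ↦ cube_div_sub_pow_mul_log_div_le hx hxy (by linarith)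
        all_goals
          have : 0 < L - x := by linarith
          positivity
    _ ≤ 1 / (3 * L) * (m / (1 - m) * (T.time r / (m * L))) ^ 3 := by gcongr
    _ = 1 / (3 * L) * (m / (1 - m)) ^ 3 * (T.time r / (m * L)) ^ 3 := by rw [mul_pow]; ring
    _ ≤ 1 / (3 * L) * (m / (1 - m)) ^ 3 * min 1 ((T.time p / (m * L)) ^ 3) := by
        gcongr
        refine le_min (pow_le_one₀ (by positivity) ((div_le_one (by positivity)).2 hr)) ?_
        gcongr
        exact T.monotone_time hrp

lemma sum_outer_le (hm : 0 < m) (hl : T.time l < L) :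
    ∑ p ∈ Nat.primesBelow l, 1 / (p : ℝ) *
        (1 / (L - T.time p) * min 1 ((T.time p / (L - T.time p) / m) ^ 3)) ≤
      1 / L * cappedCubeIntegral (T.time l / (L - T.time l) / m) := by
  refine T.sum_one_div_mul_le (R := fun x ↦ 1 / L * cappedCubeIntegral (x / (L - x) / m))
    (w := fun x ↦ 1 / (L - x) * min 1 ((x / (L - x) / m) ^ 3))
    (fun x hx hxl ↦ ?_) (fun x hx hxl ↦ ?_)
    fun x y hx hxy hyl ↦ min_one_cube_div_mul_log_div_le hm hx hxy (by linarith)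
  · have : 0 < L - x := by linarith
    have := cappedCubeIntegral_nonneg (y := x / (L - x) / m) (by positivity)
    have : 0 < L := by linarith
    positivity
  · have : 0 < L - x := by linarith
    have : 0 ≤ min 1 ((x / (L - x) / m) ^ 3) := le_min zero_le_one (by positivity)
    positivity

lemma potential_four_div_le (hQ : 0 < Q) (hp : 0 < p)
    (h : 10000 * T.lag ≤ T.logScale Q - T.time p) :
    T.potential 4 (Q / p) p ≤ Q * (1 / 0.9999) ^ 4 *
      (1 / (p : ℝ) * (T.time p ^ 3 / (T.logScale Q - T.time p) ^ 4)) := by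
  have h_scale := mul_sub_time_le_logScale_div hQ hp h
  have := T.one_le_lag
  have h_pos : 0 < T.logScale Q - T.time p := by linarith
  have := T.time_pos p
  have : (0 : ℝ) < p := mod_cast hp
  calc Q / p * (T.time p ^ 3 / T.logScale (Q / p) ^ 4)
      ≤ Q / p * (T.time p ^ 3 / (0.9999 * (T.logScale Q - T.time p)) ^ 4) := by gcongr
    _ = _ := by rw [mul_pow, one_div_pow]; field_simp

lemma sum_potential_four_div_div_le (hm : 1 / 10 ≤ m) (hm' : m ≤ 1 / 2) (hQ : 1 ≤ Q) (hp : 0 < p)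
    (hpQ : (p : ℝ) ^ 2 ≤ Q) (hS : S ⊆ Nat.primesBelow p)
    (hSm : ∀ q ∈ S, T.time q ≤ m * T.logScale (Q / p) - (T.lag + 2)) :
    ∑ q ∈ S, T.potential 4 (Q / p / q) q ≤ Q * (1.001 * (1 / 3 * (m / (1 - m)) ^ 3)) *
      (1 / (p : ℝ) * (1 / (T.logScale Q - T.time p) *
        min 1 ((T.time p / (T.logScale Q - T.time p) / m) ^ 3))) := by
  set L := T.logScale (Q / p)
  set L' := T.logScale Q - T.time p
  set M := min 1 ((T.time p / L' / m) ^ 3)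
  have hlag := T.one_le_lag
  have : (0 : ℝ) < p := mod_cast hp
  have hL : 20000 * (T.lag + 3) ≤ L := T.shift_le_logScale_div hp hpQ
  have hL'L : 0.9999 * L' ≤ L := T.mul_sub_time_le_logScale_div_of_sq_le hQ hp hpQ
  have hL' : 0 < L' := by
    have h_half := T.time_le_half_logScale hQ hpQ
    have h_shift : 20000 * (T.lag + 3) ≤ T.logScale Q := T.shift_le_logScale hQ
    simp only [L']
    linarith
  have hm0 : 0 < m := by linarith
  have hm1 : 0 < 1 - m := by linarith
  have h_min := min_one_cube_div_mul_le (by norm_num) (by norm_num) (T.time_pos p).le hm0 hL' hL'L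
  have ht := T.time_pos p
  have hL0 : 0 < L := by linarith
  have : 0 ≤ M := le_min zero_le_one (by positivity)
  have : 0 ≤ min 1 ((T.time p / (m * L)) ^ 3) :=
    le_min zero_le_one (by positivity)
  calc ∑ q ∈ S, T.potential 4 (Q / p / q) q
      ≤ ∑ q ∈ S, Q / p * (1 / 0.9999) ^ 4 *
          (1 / (q : ℝ) * (T.time q ^ 3 / (L - T.time q) ^ 4)) := by
        refine sum_le_sum fun q hq ↦ potential_four_div_le (by positivity)
          (Nat.prime_of_mem_primesBelow (hS hq)).pos ?_
        nlinarith [hSm q hq]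
    _ ≤ Q / p * (1 / 0.9999) ^ 4 *
          (1 / (3 * L) * (m / (1 - m)) ^ 3 * min 1 ((T.time p / (m * L)) ^ 3)) := by
        rw [← mul_sum]
        gcongr
        exact sum_inner_le (by linarith) hm0 (by linarith) (by nlinarith) hS hSm
    _ ≤ Q / p * (1 / 0.9999) ^ 4 *
          (1 / (3 * (0.9999 * L')) * (m / (1 - m)) ^ 3 * ((1 / 0.9999) ^ 3 * M)) := by
        gcongr
    _ = (1 / 0.9999) ^ 8 * (Q / p * (1 / 3 * (m / (1 - m)) ^ 3) * (1 / L' * M)) := by field_simp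
    _ ≤ 1.001 * (Q / p * (1 / 3 * (m / (1 - m)) ^ 3) * (1 / L' * M)) := by
        gcongr
        norm_num
    _ = _ := by ring

lemma sum_sum_potential_four_le (hm : 1 / 10 ≤ m) (hm' : m ≤ 1 / 2) (hQ : 1 ≤ Q)
    (hl : (l : ℝ) ^ 2 ≤ Q) {S : ℕ → Finset ℕ}
    (hS : ∀ p ∈ Nat.primesBelow l, S p ⊆ Nat.primesBelow p)
    (hSm : ∀ p ∈ Nat.primesBelow l, ∀ q ∈ S p,
      T.time q ≤ m * T.logScale (Q / p) - (T.lag + 2)) :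
    ∑ p ∈ Nat.primesBelow l, ∑ q ∈ S p, T.potential 4 (Q / p / q) q ≤
      Q * (1.001 * (1 / 3 * (m / (1 - m)) ^ 3)) * (1 / T.logScale Q *
        cappedCubeIntegral (T.time l / (T.logScale Q - T.time l) / m)) := by
  refine (sum_le_sum fun p hp ↦ sum_potential_four_div_div_le hm hm' hQ
    (Nat.prime_of_mem_primesBelow hp).pos (sq_le_of_mem_primesBelow hl hp) (hS p hp)
    (hSm p hp)).trans ?_
  have hm1 : 0 < 1 - m := by linarith
  rw [← mul_sum]
  gcongr
  have h := T.shift_le_logScale hQ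
  rw [shift] at h
  exact sum_outer_le (by linarith) (by linarith [T.time_le_half_logScale hQ hl, T.one_le_lag])

lemma time_le_of_mem_innerPrimes (hp : 0 < p) {q : ℕ}
    (hq : q ∈ innerPrimes Q p) : T.time q ≤ 1 / 3 * T.logScale (Q / p) - (T.lag + 2) := by
  have hq0 : (0 : ℝ) < q := mod_cast (((mem_innerPrimes hp).1 hq).1.2).pos
  have h := log_le_log (by positivity) (cube_le_of_mem_innerPrimes hp hq)
  rw [log_pow] at h
  push_cast at h
  have := T.time_le q
  have := T.one_le_lag
  unfold logScale shift
  linarith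

theorem sum_sum_innerPrimes_potential_four_le (hQ : 1 ≤ Q) (hl : (l : ℝ) ^ 2 ≤ Q) :
    ∑ p ∈ Nat.primesBelow l, ∑ q ∈ innerPrimes Q p, T.potential 4 (Q / p / q) q ≤
      0.96 * T.potential 4 Q l := by
  have h := sum_sum_potential_four_le (T := T) (m := 1 / 3) (S := innerPrimes Q) (by norm_num)
    (by norm_num) hQ hl (fun p _ ↦ filter_subset _ _) fun p hp q hq ↦
      T.time_le_of_mem_innerPrimes (Nat.prime_of_mem_primesBelow hp).pos hq
  refine h.trans ?_
  have hT := T.time_le_half_logScale hQ hl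
  have hT0 := T.time_pos l
  rw [potential]
  set L := T.logScale Q
  set t := T.time l
  set y := t / (L - t) / (1 / 3)
  have hL : 0 < L := by linarith
  have hLt : 0 < L - t := by linarith
  have hy := cappedCubeIntegral_mul_three_add_cube_le (y := y) (by positivity) (by
    simp only [y]
    rw [div_div, div_le_iff₀ (by positivity)]
    linarith)
  have h_integral : cappedCubeIntegral y ≤ 23 * t ^ 3 / L ^ 3 := by
    have hL_pow : L ^ 3 = (3 + y) ^ 3 * ((L - t) ^ 3 / 27) := by simp only [y]; field_simp; ring
    rw [le_div_iff₀ (by positivity), hL_pow, ← mul_assoc]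
    calc cappedCubeIntegral y * (3 + y) ^ 3 * ((L - t) ^ 3 / 27)
        ≤ 23 * y ^ 3 * ((L - t) ^ 3 / 27) := by gcongr
      _ = 23 * t ^ 3 := by simp only [y]; field_simp; ring
  calc Q * (1.001 * (1 / 3 * (1 / 3 / (1 - 1 / 3)) ^ 3)) * (1 / L * cappedCubeIntegral y)
      ≤ Q * (1.001 * (1 / 3 * (1 / 3 / (1 - 1 / 3)) ^ 3)) * (1 / L * (23 * t ^ 3 / L ^ 3)) := by
        gcongr
    _ = 1.001 * 23 / 24 * (Q * (t ^ 3 / L ^ 4)) := by field_simp; ring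
    _ ≤ 0.96 * (Q * (t ^ 3 / L ^ 4)) := by
        gcongr
        norm_num

/-- The inner primes `q` that come early compared with the scale of the quotient `Q / p / q`. -/
noncomputable def earlyPrimes (T : PrimeClock) (Q : ℝ) (p : ℕ) : Finset ℕ :=
  {q ∈ innerPrimes Q p | T.time q ≤ 0.255 * T.logScale (Q / p / q)}

lemma time_le_of_mem_earlyPrimes (hp : 0 < p) (hpQ : (p : ℝ) ^ 2 ≤ Q) {q : ℕ}
    (hq : q ∈ T.earlyPrimes Q p) : T.time q ≤ 0.204 * T.logScale (Q / p) - (T.lag + 2) := by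
  obtain ⟨hq', hqT⟩ := mem_filter.1 hq
  have hp0 : (0 : ℝ) < p := mod_cast hp
  have hq0 : (0 : ℝ) < q := mod_cast (((mem_innerPrimes hp).1 hq').1.2).pos
  have hQ : 0 < Q := (by positivity : (0 : ℝ) < p ^ 2).trans_le hpQ
  have hL : 20000 * (T.lag + 3) ≤ T.logScale (Q / p) := T.shift_le_logScale_div hp hpQ
  rw [logScale_div (by positivity) hq0] at hqT
  linarith [T.time_le q, T.one_le_lag]

lemma mul_sub_time_le_logScale_div_div (hQ : 1 ≤ Q) (hl : (l : ℝ) ^ 2 ≤ Q)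
    (hp : p ∈ Nat.primesBelow l) {q : ℕ} (hq : q ∈ T.earlyPrimes Q p) :
    0.7958 * (T.logScale Q - T.time l) ≤ T.logScale (Q / p / q) := by
  have hp0 := (Nat.prime_of_mem_primesBelow hp).pos
  have hpQ := sq_le_of_mem_primesBelow hl hp
  have hq0 := ((mem_innerPrimes hp0).1 (mem_filter.1 hq).1).1.2.pos
  have hL : 20000 * (T.lag + 3) ≤ T.logScale (Q / p) := T.shift_le_logScale_div hp0 hpQ
  have hqT := T.time_le_of_mem_earlyPrimes hp0 hpQ hq
  have hlag := T.one_le_lag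
  have h_outer := T.mul_sub_time_le_logScale_div_of_sq_le hQ hp0 hpQ
  have h_inner := T.mul_sub_time_le_logScale_div (p := q) (Q := Q / p) (by positivity) hq0
    (by linarith)
  have hTpl := T.monotone_time (Nat.lt_of_mem_primesBelow hp).le
  linarith

lemma sum_sum_earlyPrimes_potential_six_le_mul (hQ : 1 ≤ Q) (hl : (l : ℝ) ^ 2 ≤ Q)
    (hTl : T.time l ≤ 0.255 * T.logScale Q) :
    ∑ p ∈ Nat.primesBelow l, ∑ q ∈ T.earlyPrimes Q p, T.potential 6 (Q / p / q) q ≤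
      1 / (0.7958 * (T.logScale Q - T.time l)) ^ 2 *
        ∑ p ∈ Nat.primesBelow l, ∑ q ∈ T.earlyPrimes Q p, T.potential 4 (Q / p / q) q := by
  simp only [mul_sum]
  refine sum_le_sum fun p hp ↦ sum_le_sum fun q hq ↦ ?_
  have hL := T.mul_sub_time_le_logScale_div_div hQ hl hp hq
  have hlt : 0 < T.logScale Q - T.time l := by linarith [T.time_pos l]
  have hL0 : 0 < T.logScale (Q / p / q) := by linarith
  have := T.time_pos q
  calc Q / p / q * (T.time q ^ 3 / T.logScale (Q / p / q) ^ 6)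
      = 1 / T.logScale (Q / p / q) ^ 2 *
          (Q / p / q * (T.time q ^ 3 / T.logScale (Q / p / q) ^ 4)) := by field_simp
    _ ≤ _ := by
        rw [potential]
        gcongr

theorem sum_sum_earlyPrimes_potential_six_le (hQ : 1 ≤ Q) (hl : (l : ℝ) ^ 2 ≤ Q)
    (hTl : T.time l ≤ 0.255 * T.logScale Q) :
    ∑ p ∈ Nat.primesBelow l, ∑ q ∈ T.earlyPrimes Q p, T.potential 6 (Q / p / q) q ≤
      0.97 * T.potential 6 Q l := by
  have h := sum_sum_potential_four_le (T := T) (m := 0.204) (S := T.earlyPrimes Q) (by norm_num)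
    (by norm_num) hQ hl (fun p _ ↦ (filter_subset _ _).trans (filter_subset _ _)) fun p hp q hq ↦
      T.time_le_of_mem_earlyPrimes (Nat.prime_of_mem_primesBelow hp).pos
        (sq_le_of_mem_primesBelow hl hp) hq
  refine (sum_sum_earlyPrimes_potential_six_le_mul hQ hl hTl).trans
    ((mul_le_mul_of_nonneg_left h (by positivity)).trans ?_)
  have hT0 := T.time_pos l
  rw [potential]
  set L := T.logScale Q
  set t := T.time l
  set y := t / (L - t) / 0.204
  have hL : 0 < L := by linarith
  have hLt : 0 < L - t := by linarith
  have hy := cappedCubeIntegral_mul_one_add_pow_le (y := y) (by positivity) (by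
    simp only [y]
    rw [div_div, div_le_iff₀ (by positivity)]
    linarith)
  have h_integral : cappedCubeIntegral y / (L - t) ^ 2 ≤ 0.92 * t ^ 3 / (0.204 ^ 3 * L ^ 5) := by
    have hL_pow : L ^ 5 = (1 + 0.204 * y) ^ 5 * (L - t) ^ 5 := by simp only [y]; field_simp; ring
    rw [le_div_iff₀ (by positivity)]
    calc cappedCubeIntegral y / (L - t) ^ 2 * (0.204 ^ 3 * L ^ 5)
        = cappedCubeIntegral y * (1 + 0.204 * y) ^ 5 * ((L - t) ^ 3 * 0.204 ^ 3) := by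
          rw [hL_pow]; field_simp
      _ ≤ 0.92 * y ^ 3 * ((L - t) ^ 3 * 0.204 ^ 3) := by gcongr
      _ = 0.92 * t ^ 3 := by simp only [y]; field_simp
  calc 1 / (0.7958 * (L - t)) ^ 2 *
        (Q * (1.001 * (1 / 3 * (0.204 / (1 - 0.204)) ^ 3)) * (1 / L * cappedCubeIntegral y))
      = Q * (1 / 0.7958 ^ 2 * (1.001 * (1 / 3 * (0.204 / (1 - 0.204)) ^ 3))) *
          (1 / L * (cappedCubeIntegral y / (L - t) ^ 2)) := by field_simp
    _ ≤ Q * (1 / 0.7958 ^ 2 * (1.001 * (1 / 3 * (0.204 / (1 - 0.204)) ^ 3))) *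
          (1 / L * (0.92 * t ^ 3 / (0.204 ^ 3 * L ^ 5))) := by gcongr
    _ = 1 / 0.7958 ^ 2 * 1.001 * (1 / 3) * (1 / (1 - 0.204)) ^ 3 * 0.92 *
          (Q * (t ^ 3 / L ^ 6)) := by field_simp
    _ ≤ 0.97 * (Q * (t ^ 3 / L ^ 6)) := by
        gcongr
        norm_num

end PrimeClock

section InnerPrimes

variable {Q : ℝ} {p : ℕ}

lemma card_primesBelow_le_self (l : ℕ) : #(Nat.primesBelow l) ≤ l :=
  (card_filter_le _ _).trans (card_range l).le

lemma sum_innerPrimes_sq_card_le (Q : ℝ) (p : ℕ) :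
    ∑ q ∈ innerPrimes Q p, (#(Nat.primesBelow q) : ℝ) ^ 2 ≤ p ^ 3 := by
  have h_term : ∀ q ∈ innerPrimes Q p, (#(Nat.primesBelow q) : ℝ) ^ 2 ≤ p ^ 2 := fun q hq ↦ by
    gcongr
    exact (card_primesBelow_le_self q).trans
      (Nat.lt_of_mem_primesBelow (mem_of_mem_filter q hq)).le
  have h_card : #(innerPrimes Q p) ≤ p :=
    (card_filter_le _ _).trans (card_primesBelow_le_self p)
  calc ∑ q ∈ innerPrimes Q p, (#(Nat.primesBelow q) : ℝ) ^ 2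
      ≤ #(innerPrimes Q p) * (p : ℝ) ^ 2 := by
        rw [← nsmul_eq_mul]
        exact sum_le_card_nsmul _ _ _ h_term
    _ ≤ p * (p : ℝ) ^ 2 := by gcongr
    _ = p ^ 3 := by ring

lemma card_innerPrimes_le {y : ℝ} (hy : 1 < y) (h : ∀ q ∈ innerPrimes Q p, (q : ℝ) ≤ y) :
    (#(innerPrimes Q p) : ℝ) ≤ 5 * y / log y := by
  have h_sub : innerPrimes Q p ⊆ Nat.primesBelow (⌊y⌋₊ + 1) := fun q hq ↦
    Nat.mem_primesBelow.2 ⟨Nat.lt_succ_of_le (Nat.le_floor (h q hq)),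
      Nat.prime_of_mem_primesBelow (mem_of_mem_filter q hq)⟩
  refine (Nat.cast_le.2 (card_le_card h_sub)).trans ?_
  rw [Nat.primesBelow_card_eq_primeCounting']
  exact primeCounting_floor_le hy

lemma sum_innerPrimes_sq_card_le_div (hQ : 1 < Q) (hp : 0 < p) (hpQ : (p : ℝ) ^ 2 ≤ Q) :
    ∑ q ∈ innerPrimes Q p, (#(Nat.primesBelow q) : ℝ) ^ 2 ≤
      27000 * (Q / p) / log Q ^ 3 := by
  have hp0 : (0 : ℝ) < p := mod_cast hp
  have hlogQ := log_pos hQ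
  set y : ℝ := (Q / p) ^ (1 / 3 : ℝ) with hy
  have hy0 : 0 < y := by positivity
  have hy3 : y ^ 3 = Q / p := by
    rw [hy, ← rpow_natCast, ← rpow_mul (by positivity)]
    norm_num
  have hlogy : log Q / 6 ≤ log y := by
    rw [hy, log_rpow (by positivity), log_div (by positivity) hp0.ne']
    linarith [log_le_half_log_of_sq_le hp0 hpQ]
  have hy1 : 1 < y := (log_pos_iff hy0.le).1 (by linarith)
  have hqy : ∀ q ∈ innerPrimes Q p, (q : ℝ) ≤ y := fun q hq ↦
    le_of_pow_le_pow_left₀ three_ne_zero hy0.le (hy3 ▸ cube_le_of_mem_innerPrimes hp hq)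
  calc ∑ q ∈ innerPrimes Q p, (#(Nat.primesBelow q) : ℝ) ^ 2
      ≤ #(innerPrimes Q p) * (5 * y / log y) ^ 2 := by
        rw [← nsmul_eq_mul]
        refine sum_le_card_nsmul _ _ _ fun q hq ↦ ?_
        gcongr
        exact card_primesBelow_le hy1 (hqy q hq)
    _ ≤ 5 * y / log y * (5 * y / log y) ^ 2 := by
        gcongr
        exact card_innerPrimes_le hy1 hqy
    _ = 125 * y ^ 3 / log y ^ 3 := by ring
    _ ≤ 125 * y ^ 3 / (log Q / 6) ^ 3 := by gcongr
    _ = 27000 * (Q / p) / log Q ^ 3 := by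
        rw [hy3]
        ring

end InnerPrimes

lemma sqrt_div_le_rpow_div {Q x : ℝ} (hx : 0 < x) (hxQ : x ^ 2 ≤ Q) :
    √(Q / x) ≤ Q ^ (3 / 4 : ℝ) / x := by
  have hQ : 0 < Q := (pow_pos hx 2).trans_le hxQ
  refine sqrt_le_iff.2 ⟨by positivity, ?_⟩
  have h_sq : (Q ^ (3 / 4 : ℝ)) ^ 2 = Q * √Q := by
    rw [← rpow_natCast, ← rpow_mul hQ.le, sqrt_eq_rpow, ← rpow_one_add' hQ.le (by norm_num)]
    norm_num
  rw [div_pow, h_sq, div_le_div_iff₀ hx (by positivity)]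
  calc Q * x ^ 2 = Q * x * x := by ring
    _ ≤ Q * √Q * x := by
        gcongr
        exact le_sqrt_of_sq_le hxQ

namespace PrimeClock

variable {T : PrimeClock} {Q : ℝ} {k l p : ℕ}

lemma one_le_shift : 1 ≤ T.shift := by
  unfold shift
  linarith [T.one_le_lag]

lemma logScale_pos (hQ : 1 ≤ Q) : 0 < T.logScale Q :=
  one_pos.trans_le (T.one_le_shift.trans (shift_le_logScale hQ))

lemma potential_pos (hQ : 1 ≤ Q) : 0 < T.potential k Q l := by
  have := T.time_pos l
  have := T.logScale_pos hQ
  unfold potential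
  positivity

variable (T) in
lemma exists_logScale_pow_six_le :
    ∃ C > 0, ∀ Q : ℝ, 1 ≤ Q → T.logScale Q ^ 6 ≤ C * Q ^ (1 / 4 : ℝ) := by
  have h_shift := T.one_le_shift
  refine ⟨(24 + T.shift) ^ 6, by positivity, fun Q hQ ↦ ?_⟩
  have h_log := log_le_rpow_div (x := Q) (by linarith) (ε := 1 / 24) (by norm_num)
  have h_one : 1 ≤ Q ^ (1 / 24 : ℝ) := one_le_rpow hQ (by norm_num)
  have h_scale : T.logScale Q ≤ (24 + T.shift) * Q ^ (1 / 24 : ℝ) := by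
    unfold logScale
    nlinarith
  calc T.logScale Q ^ 6 ≤ ((24 + T.shift) * Q ^ (1 / 24 : ℝ)) ^ 6 := by
        have := T.logScale_pos hQ
        gcongr
    _ = (24 + T.shift) ^ 6 * Q ^ (1 / 4 : ℝ) := by
        rw [mul_pow, ← rpow_natCast (Q ^ (1 / 24 : ℝ)), ← rpow_mul (by linarith)]
        norm_num

variable (T) in
lemma exists_mul_log_le_time : ∃ c > 0, ∀ n : ℕ, c * log n ≤ T.time n := by
  have h_lag := T.one_le_lag
  have h_zero := T.time_pos 0
  refine ⟨min (1 / 2) (T.time 0 / (2 * T.lag)), by positivity, fun n ↦ ?_⟩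
  have := log_natCast_nonneg n
  rcases le_total (log n) (2 * T.lag) with h | h
  · calc min (1 / 2) (T.time 0 / (2 * T.lag)) * log n
        ≤ T.time 0 / (2 * T.lag) * (2 * T.lag) := by
          gcongr
          exact min_le_right _ _
      _ = T.time 0 := by field_simp
      _ ≤ T.time n := T.monotone_time n.zero_le
  · calc min (1 / 2) (T.time 0 / (2 * T.lag)) * log n ≤ 1 / 2 * log n := by
          gcongr
          exact min_le_left _ _
      _ ≤ T.time n := by linarith [T.log_sub_lag_le n]

lemma sum_one_div_mul_potential_le (hQ : 1 ≤ Q) :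
    ∑ p ∈ Nat.primesBelow l, 1 / (p : ℝ) * T.potential k Q p ≤ T.potential k Q l := by
  have h_cube : ∑ p ∈ Nat.primesBelow l, 1 / (p : ℝ) * T.time p ^ 3 ≤ T.time l ^ 3 / 3 :=
    T.sum_one_div_mul_le (R := fun x ↦ x ^ 3 / 3) (w := fun x ↦ x ^ 3)
      (fun x hx _ ↦ by positivity) (fun x hx _ ↦ by positivity)
      fun x y hx hxy _ ↦ (cube_mul_log_div_le hx (hx.trans_le hxy)).trans_eq (by ring)
  have := T.logScale_pos hQ
  have := T.time_pos l
  calc ∑ p ∈ Nat.primesBelow l, 1 / (p : ℝ) * T.potential k Q p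
      = Q / T.logScale Q ^ k * ∑ p ∈ Nat.primesBelow l, 1 / (p : ℝ) * T.time p ^ 3 := by
        rw [mul_sum]
        refine sum_congr rfl fun p _ ↦ ?_
        unfold potential
        ring
    _ ≤ Q / T.logScale Q ^ k * T.time l ^ 3 := by
        gcongr
        refine h_cube.trans (div_le_self (by positivity) (by norm_num))
    _ = T.potential k Q l := by
        unfold potential
        ring

variable (T) in
lemma exists_rpow_le_mul_potential :
    ∃ D > 0, ∀ (Q : ℝ) (l : ℕ), 1 ≤ Q → Q ^ (3 / 4 : ℝ) ≤ D * T.potential 6 Q l := by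
  obtain ⟨C, hC, h_scale⟩ := T.exists_logScale_pow_six_le
  have h_zero := T.time_pos 0
  refine ⟨C / T.time 0 ^ 3, by positivity, fun Q l hQ ↦ ?_⟩
  have := T.logScale_pos hQ
  have h_split : Q ^ (3 / 4 : ℝ) * Q ^ (1 / 4 : ℝ) = Q := by
    rw [← rpow_add (by linarith)]
    norm_num
  calc Q ^ (3 / 4 : ℝ) ≤ C * Q / T.logScale Q ^ 6 := by
        rw [le_div_iff₀ (by positivity)]
        calc Q ^ (3 / 4 : ℝ) * T.logScale Q ^ 6
            ≤ Q ^ (3 / 4 : ℝ) * (C * Q ^ (1 / 4 : ℝ)) := by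
              gcongr
              exact h_scale Q hQ
          _ = C * Q := by linear_combination C * h_split
    _ = C / T.time 0 ^ 3 * (Q * (T.time 0 ^ 3 / T.logScale Q ^ 6)) := by field_simp
    _ ≤ C / T.time 0 ^ 3 * T.potential 6 Q l := by
        unfold potential
        gcongr
        exact T.monotone_time l.zero_le

variable (T) in
lemma exists_logScale_pow_six_le_of_le_pow_eight :
    ∃ C > 0, ∀ (Q : ℝ) (p : ℕ), 4 ≤ Q → Q ≤ (p : ℝ) ^ 8 →
      T.logScale Q ^ 6 ≤ C * (log Q ^ 3 * T.time p ^ 3) := by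
  obtain ⟨c, hc, h_time⟩ := T.exists_mul_log_le_time
  have h_shift := T.one_le_shift
  refine ⟨(1 + T.shift) ^ 6 * (8 / c) ^ 3, by positivity, fun Q p hQ hQp ↦ ?_⟩
  have h_log_one : 1 ≤ log Q := one_lt_log_four.le.trans (log_le_log (by norm_num) hQ)
  have h_scale : T.logScale Q ≤ (1 + T.shift) * log Q := by
    unfold logScale
    nlinarith
  have h_log_time : log Q ≤ 8 / c * T.time p := by
    have h_log := log_le_log (by linarith) hQp
    rw [log_pow] at h_log
    push_cast at h_log
    rw [div_mul_eq_mul_div, le_div_iff₀ hc]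
    nlinarith [h_time p]
  calc T.logScale Q ^ 6 ≤ ((1 + T.shift) * log Q) ^ 6 := by
        have := T.logScale_pos (by linarith : 1 ≤ Q)
        gcongr
    _ = (1 + T.shift) ^ 6 * (log Q ^ 3 * log Q ^ 3) := by ring
    _ ≤ (1 + T.shift) ^ 6 * (log Q ^ 3 * (8 / c * T.time p) ^ 3) := by gcongr
    _ = (1 + T.shift) ^ 6 * (8 / c) ^ 3 * (log Q ^ 3 * T.time p ^ 3) := by ring

variable (T) in
lemma exists_sum_innerPrimes_sq_card_le :
    ∃ C > 0, ∀ (Q : ℝ) (p : ℕ), p.Prime → (p : ℝ) ^ 2 ≤ Q →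
      ∑ q ∈ innerPrimes Q p, 12 * (#(Nat.primesBelow q) : ℝ) ^ 2 ≤
        C * (1 / (p : ℝ) * T.potential 6 Q p) := by
  obtain ⟨D, hD, h_rpow⟩ := T.exists_rpow_le_mul_potential
  obtain ⟨C, hC, h_scale⟩ := T.exists_logScale_pow_six_le_of_le_pow_eight
  refine ⟨12 * (D + 27000 * C), by positivity, fun Q p hp hpQ ↦ ?_⟩
  have hp2 : (2 : ℝ) ≤ p := mod_cast hp.two_le
  have hQ : 4 ≤ Q := by nlinarith
  have h_pot := T.potential_pos (k := 6) (l := p) (by linarith : 1 ≤ Q)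
  rw [← mul_sum, mul_assoc]
  gcongr
  rcases le_total ((p : ℝ) ^ 8) Q with h8 | h8
  · have h_four : (p : ℝ) ^ 4 ≤ Q ^ (3 / 4 : ℝ) := calc
      (p : ℝ) ^ 4 ≤ Q ^ (1 / 2 : ℝ) := by
        rw [← sqrt_eq_rpow]
        exact le_sqrt_of_sq_le (by linarith [show ((p : ℝ) ^ 4) ^ 2 = p ^ 8 by ring])
      _ ≤ Q ^ (3 / 4 : ℝ) := rpow_le_rpow_of_exponent_le (by linarith) (by norm_num)
    calc ∑ q ∈ innerPrimes Q p, (#(Nat.primesBelow q) : ℝ) ^ 2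
        ≤ (p : ℝ) ^ 3 := sum_innerPrimes_sq_card_le Q p
      _ = 1 / (p : ℝ) * p ^ 4 := by field_simp
      _ ≤ 1 / (p : ℝ) * (D * T.potential 6 Q p) := by
          gcongr
          exact h_four.trans (h_rpow Q p (by linarith))
      _ = D * (1 / (p : ℝ) * T.potential 6 Q p) := by ring
      _ ≤ (D + 27000 * C) * (1 / (p : ℝ) * T.potential 6 Q p) := by
          gcongr
          linarith
  · have h_log : 0 < log Q := log_pos (by linarith)
    have h_logScale := T.logScale_pos (by linarith : 1 ≤ Q)
    have h_inv : 1 / log Q ^ 3 ≤ C * (T.time p ^ 3 / T.logScale Q ^ 6) := by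
      rw [← mul_div_assoc, div_le_div_iff₀ (by positivity) (by positivity)]
      linarith [h_scale Q p hQ h8]
    calc ∑ q ∈ innerPrimes Q p, (#(Nat.primesBelow q) : ℝ) ^ 2
        ≤ 27000 * (Q / p) * (1 / log Q ^ 3) :=
          (sum_innerPrimes_sq_card_le_div (by linarith) hp.pos hpQ).trans_eq (by ring)
      _ ≤ 27000 * (Q / p) * (C * (T.time p ^ 3 / T.logScale Q ^ 6)) := by gcongr
      _ = 27000 * C * (1 / (p : ℝ) * T.potential 6 Q p) := by
          unfold potential
          ring
      _ ≤ (D + 27000 * C) * (1 / (p : ℝ) * T.potential 6 Q p) := by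
          gcongr
          linarith

variable (T) in
theorem exists_expansionError_le :
    ∃ C > 0, ∀ (Q : ℝ) (l : ℕ), 1 ≤ Q → (l : ℝ) ^ 2 ≤ Q →
      expansionError Q l ≤ C * T.potential 6 Q l := by
  obtain ⟨D, hD, h_rpow⟩ := T.exists_rpow_le_mul_potential
  obtain ⟨C, hC, h_inner⟩ := T.exists_sum_innerPrimes_sq_card_le
  refine ⟨154 * (D + D) + C, by positivity, fun Q l hQ hl ↦ ?_⟩
  have h_sum : ∑ p ∈ Nat.primesBelow l, 1 / (p : ℝ) * T.potential 6 Q p ≤ T.potential 6 Q l :=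
    sum_one_div_mul_potential_le hQ
  have h_root : √Q ≤ D * T.potential 6 Q l := by
    refine le_trans ?_ (h_rpow Q l hQ)
    rw [sqrt_eq_rpow]
    exact rpow_le_rpow_of_exponent_le hQ (by norm_num)
  have h_first : ∑ p ∈ Nat.primesBelow l, √(Q / p) ≤ D * T.potential 6 Q l := by
    refine le_trans ?_ (mul_le_mul_of_nonneg_left h_sum hD.le)
    rw [mul_sum]
    refine sum_le_sum fun p hp ↦ ?_
    have hp0 : (0 : ℝ) < p := mod_cast (Nat.prime_of_mem_primesBelow hp).pos
    calc √(Q / p) ≤ Q ^ (3 / 4 : ℝ) / p :=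
          sqrt_div_le_rpow_div hp0 (sq_le_of_mem_primesBelow hl hp)
      _ ≤ D * T.potential 6 Q p / p := by
          gcongr
          exact h_rpow Q p hQ
      _ = D * (1 / p * T.potential 6 Q p) := by ring
  have h_second : ∑ p ∈ Nat.primesBelow l, ∑ q ∈ innerPrimes Q p,
      12 * (#(Nat.primesBelow q) : ℝ) ^ 2 ≤ C * T.potential 6 Q l := by
    refine le_trans ?_ (mul_le_mul_of_nonneg_left h_sum hC.le)
    rw [mul_sum]
    exact sum_le_sum fun p hp ↦ h_inner Q p (Nat.prime_of_mem_primesBelow hp)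
      (sq_le_of_mem_primesBelow hl hp)
  rw [expansionError]
  linarith

end PrimeClock

/-! ### Lower bounds for the model -/

section PrimesIoc

/-- The primes in the real interval `(w, b]`. -/
noncomputable def primesIoc (w b : ℝ) : Finset ℕ := {p ∈ Ioc ⌊w⌋₊ ⌊b⌋₊ | p.Prime}

variable {w b : ℝ} {p : ℕ}

lemma mem_primesIoc (hw : 0 ≤ w) (hb : 0 ≤ b) :
    p ∈ primesIoc w b ↔ p.Prime ∧ w < p ∧ (p : ℝ) ≤ b := by
  rw [primesIoc, mem_filter, mem_Ioc, Nat.floor_lt hw, Nat.le_floor_iff hb, and_comm]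

lemma sum_primesIoc {M : Type*} [AddCommGroup M] (f : ℕ → M) (hwb : w ≤ b) :
    ∑ p ∈ primesIoc w b, f p =
      ∑ p ∈ Nat.primesBelow (⌊b⌋₊ + 1), f p - ∑ p ∈ Nat.primesBelow (⌊w⌋₊ + 1), f p := by
  have h_floor := Nat.floor_le_floor hwb
  have h_union : primesIoc w b = Nat.primesBelow (⌊b⌋₊ + 1) \ Nat.primesBelow (⌊w⌋₊ + 1) := by
    ext p
    simp only [primesIoc, mem_filter, mem_Ioc, mem_sdiff, Nat.mem_primesBelow, Nat.lt_succ_iff]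
    grind
  rw [h_union, sum_sdiff_eq_sub (Nat.primesBelow_mono (by omega))]

lemma card_primesIoc_le (w : ℝ) (hb : 1 < b) : (#(primesIoc w b) : ℝ) ≤ 5 * b / log b := by
  have h_sub : primesIoc w b ⊆ Nat.primesBelow (⌊b⌋₊ + 1) := fun p hp ↦ by
    rw [primesIoc, mem_filter, mem_Ioc] at hp
    exact Nat.mem_primesBelow.2 ⟨Nat.lt_succ_of_le hp.1.2, hp.2⟩
  refine (Nat.cast_le.2 (card_le_card h_sub)).trans ?_
  rw [Nat.primesBelow_card_eq_primeCounting']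
  exact primeCounting_floor_le hb

lemma exists_le_card_primesIoc :
    ∃ x₀ : ℝ, ∀ x, x₀ ≤ x → x / (10 * log x) ≤ #(primesIoc (x / 4) x) := by
  obtain ⟨x₀, h⟩ := Filter.eventually_atTop.1 eventually_div_log_le_card_primes
  refine ⟨max x₀ 0, fun x hx ↦ h x ((le_max_left _ _).trans hx) _ fun p hp hp4 hpx ↦ ?_⟩
  have hx0 : 0 ≤ x := (le_max_right _ _).trans hx
  exact (mem_primesIoc (by positivity) hx0).2 ⟨hp, hp4, hpx⟩

lemma exists_abs_sumLogDiv_sub_log_le :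
    ∃ A : ℝ, 1 ≤ A ∧ ∀ x : ℝ, 1 ≤ x → |sumLogDiv (⌊x⌋₊ + 1) - log x| ≤ A := by
  obtain ⟨A, hA, h_pred⟩ := exists_sumLogDivPred_bounds
  obtain ⟨B, hB, h_diff⟩ := exists_sumLogDivPred_sub_sumLogDiv_le
  refine ⟨A + B + 1, by linarith, fun x hx ↦ abs_le.2 ?_⟩
  obtain ⟨h_lower, h_upper⟩ := h_pred (⌊x⌋₊ + 1) (by omega)
  have h_floor : 1 ≤ ⌊x⌋₊ := Nat.floor_pos.2 hx
  have h_log_floor : log ⌊x⌋₊ ≤ log x :=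
    log_le_log (mod_cast h_floor) (Nat.floor_le (by linarith))
  have h_log : log x ≤ log (⌊x⌋₊ + 1 : ℕ) := by
    refine log_le_log (by linarith) ?_
    push_cast
    exact (Nat.lt_floor_add_one x).le
  have := log_natCast_succ_le h_floor
  have := h_diff (⌊x⌋₊ + 1)
  have := sumLogDiv_le_sumLogDivPred (⌊x⌋₊ + 1)
  constructor <;> linarith

theorem exists_sum_one_div_primesIoc_bounds :
    ∃ A : ℝ, 1 ≤ A ∧ ∀ w b : ℝ, 1 < w → w ≤ b →
      (log b - log w - A) / log b ≤ ∑ p ∈ primesIoc w b, 1 / (p : ℝ) ∧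
      ∑ p ∈ primesIoc w b, 1 / (p : ℝ) ≤ (log b - log w + A) / log w := by
  obtain ⟨A, hA, h⟩ := exists_abs_sumLogDiv_sub_log_le
  refine ⟨2 * A, by linarith, fun w b hw hwb ↦ ?_⟩
  have h_sum := sum_primesIoc (fun p ↦ log p / (p : ℝ)) hwb
  rw [← sumLogDiv, ← sumLogDiv] at h_sum
  have h_w := abs_le.1 (h w hw.le)
  have h_b := abs_le.1 (h b (by linarith))
  rw [div_le_iff₀ (log_pos (by linarith)), le_div_iff₀ (log_pos hw), sum_mul, sum_mul]
  constructor
  · calc log b - log w - 2 * A ≤ ∑ p ∈ primesIoc w b, log p / (p : ℝ) := by linarith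
      _ ≤ ∑ p ∈ primesIoc w b, 1 / (p : ℝ) * log b := by
        refine sum_le_sum fun p hp ↦ ?_
        obtain ⟨-, hwp, hpb⟩ := (mem_primesIoc (by linarith) (by linarith)).1 hp
        have : (0 : ℝ) < p := by linarith
        rw [one_div_mul_eq_div]
        gcongr
  · calc ∑ p ∈ primesIoc w b, 1 / (p : ℝ) * log w
        ≤ ∑ p ∈ primesIoc w b, log p / (p : ℝ) := by
          refine sum_le_sum fun p hp ↦ ?_
          obtain ⟨-, hwp, -⟩ := (mem_primesIoc (by linarith) (by linarith)).1 hp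
          rw [one_div_mul_eq_div]
          gcongr
      _ ≤ log b - log w + 2 * A := by linarith

end PrimesIoc

section PrimePairs

lemma eq_and_eq_of_prime_mul_prime_eq {p q p' q' : ℕ} (hp : p.Prime) (hp' : p'.Prime)
    (hq' : q'.Prime) (hpq : p < q) (hpq' : p' < q') (h : p * q = p' * q') : p = p' ∧ q = q' := by
  rcases hp.dvd_mul.1 (h ▸ dvd_mul_right p q) with hdvd | hdvd
  · obtain rfl := (Nat.prime_dvd_prime_iff_eq hp hp').1 hdvd
    exact ⟨rfl, Nat.eq_of_mul_eq_mul_left hp.pos h⟩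
  · obtain rfl := (Nat.prime_dvd_prime_iff_eq hp hq').1 hdvd
    rw [mul_comm p'] at h
    have := Nat.eq_of_mul_eq_mul_left hp.pos h
    omega

variable {Y : ℝ} {z : ℕ}

/- The multiple `⌊Y⌋ / (p * q)` is `1`, `2` or `3`, so that each product `p * q` has positive weight
in the model. -/
lemma sum_card_le_parityModel_one {s : Finset ℕ} {t : ℕ → Finset ℕ}
    (hs : ∀ p ∈ s, p.Prime ∧ z ≤ p)
    (ht : ∀ p ∈ s, ∀ q ∈ t p, q.Prime ∧ p < q ∧ (p * q : ℝ) ≤ Y ∧ Y < 4 * (p * q)) :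
    (∑ p ∈ s, #(t p) : ℝ) ≤ parityModel 1 Y z := by
  have h_floor : ∀ x ∈ s.sigma t, x.1 * x.2 ≤ ⌊Y⌋₊ ∧ ⌊Y⌋₊ < 4 * (x.1 * x.2) := fun x hx ↦ by
    obtain ⟨hp, hq⟩ := mem_sigma.1 hx
    obtain ⟨-, -, h_le, h_lt⟩ := ht _ hp _ hq
    have h_nonneg : 0 ≤ Y := le_trans (by positivity) h_le
    refine ⟨Nat.le_floor (mod_cast h_le), (Nat.floor_lt h_nonneg).2 (mod_cast h_lt)⟩
  have h_inj : Set.InjOn (fun x : (_ : ℕ) × ℕ ↦ x.1 * x.2) (s.sigma t) := by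
    rintro ⟨p, q⟩ hx ⟨p', q'⟩ hx' h
    obtain ⟨hp, hq⟩ := mem_sigma.1 hx
    obtain ⟨hp', hq'⟩ := mem_sigma.1 hx'
    obtain ⟨rfl, rfl⟩ := eq_and_eq_of_prime_mul_prime_eq (hs _ hp).1 (hs _ hp').1
      (ht _ hp' _ hq').1 (ht _ hp _ hq).2.1 (ht _ hp' _ hq').2.1 h
    rfl
  have h_maps : ∀ x ∈ s.sigma t, x.1 * x.2 ∈ modelSet 1 Y z := fun x hx ↦ by
    obtain ⟨hp, hq⟩ := mem_sigma.1 hx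
    obtain ⟨hp_prime, hzp⟩ := hs _ hp
    obtain ⟨hq_prime, hpq, -⟩ := ht _ hp _ hq
    refine mem_modelSet.2 ⟨⟨Nat.mul_pos hp_prime.pos hq_prime.pos, (h_floor x hx).1⟩,
      fun r hr hdvd ↦ ?_, ?_⟩
    · rcases hr.dvd_mul.1 hdvd with h | h
      · rwa [(Nat.prime_dvd_prime_iff_eq hr hp_prime).1 h]
      · rw [(Nat.prime_dvd_prime_iff_eq hr hq_prime).1 h]
        exact hzp.trans hpq.le
    · rw [ArithmeticFunction.liouville_apply_mul, liouville_apply_prime hp_prime,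
        liouville_apply_prime hq_prime]
      rfl
  calc (∑ p ∈ s, #(t p) : ℝ) = ∑ _x ∈ s.sigma t, (1 : ℝ) := by simp
    _ ≤ ∑ x ∈ s.sigma t, ((⌊Y⌋₊ / (x.1 * x.2) % 4 : ℕ) : ℝ) := sum_le_sum fun x hx ↦ by
        obtain ⟨h_le, h_lt⟩ := h_floor x hx
        have h_pos : 0 < x.1 * x.2 := by omega
        have h_one : 1 ≤ ⌊Y⌋₊ / (x.1 * x.2) := (Nat.one_le_div_iff h_pos).2 h_le
        have h_four : ⌊Y⌋₊ / (x.1 * x.2) < 4 := (Nat.div_lt_iff_lt_mul h_pos).2 h_lt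
        rw [Nat.mod_eq_of_lt h_four]
        exact_mod_cast h_one
    _ = ∑ n ∈ (s.sigma t).image fun x ↦ x.1 * x.2, ((⌊Y⌋₊ / n % 4 : ℕ) : ℝ) :=
        (sum_image (f := fun n ↦ ((⌊Y⌋₊ / n % 4 : ℕ) : ℝ)) h_inj).symm
    _ ≤ parityModel 1 Y z :=
        sum_le_sum_of_subset_of_nonneg (image_subset_iff.2 h_maps) fun _ _ _ ↦ Nat.cast_nonneg _

lemma prime_pair_bounds {s : ℝ} (hY : Y = (z * s) ^ 2) {p q : ℕ} (hzp : (z : ℝ) < p)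
    (hp : (p : ℝ) ≤ z * s / 4) (hq : Y / p / 4 < q) (hqY : (q : ℝ) ≤ Y / p) :
    p < q ∧ (p * q : ℝ) ≤ Y ∧ Y < 4 * (p * q) := by
  have hp0 : (0 : ℝ) < p := (Nat.cast_nonneg z).trans_lt hzp
  rw [div_div, div_lt_iff₀ (by positivity)] at hq
  rw [le_div_iff₀ hp0] at hqY
  refine ⟨?_, by linarith, by linarith⟩
  have h_four : 4 * (p : ℝ) ≤ z * s := by linarith
  have h_sq : (4 * (p : ℝ)) ^ 2 ≤ Y := by
    rw [hY]
    gcongr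
  have : (p : ℝ) < q := by nlinarith
  exact_mod_cast this

lemma exists_le_card_primesIoc_div :
    ∃ x₀ : ℝ, ∀ (Y : ℝ) (p : ℕ), 0 < p → x₀ ≤ Y / p →
      1 / (p : ℝ) * (Y / (10 * log Y)) ≤ #(primesIoc (Y / p / 4) (Y / p)) := by
  obtain ⟨x₀, h_card⟩ := exists_le_card_primesIoc
  refine ⟨max 2 x₀, fun Y p hp hYp ↦ ?_⟩
  obtain ⟨hY2, hYx⟩ := max_le_iff.1 hYp
  have hp1 : (1 : ℝ) ≤ p := mod_cast hp
  have hY : 0 ≤ Y := by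
    rw [le_div_iff₀ (by linarith)] at hY2
    linarith
  have h_log : 0 < log (Y / p) := log_pos (by linarith)
  have : 0 < Y / p := by linarith
  calc 1 / (p : ℝ) * (Y / (10 * log Y)) = Y / p / (10 * log Y) := by ring
    _ ≤ Y / p / (10 * log (Y / p)) := by
        gcongr
        exact div_le_self hY hp1
    _ ≤ #(primesIoc (Y / p / 4) (Y / p)) := h_card _ hYx

lemma exists_le_parityModel_one_sq :
    ∃ s₀ : ℝ, 4 ≤ s₀ ∧ ∀ (s : ℝ) (z : ℕ), s₀ ≤ s → 2 ≤ z →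
      1 / 20 * log s * (z * s) ^ 2 / log ((z * s) ^ 2) ^ 2 ≤ parityModel 1 ((z * s) ^ 2) z := by
  obtain ⟨A, hA, h_recip⟩ := exists_sum_one_div_primesIoc_bounds
  obtain ⟨x₀, h_card⟩ := exists_le_card_primesIoc_div
  refine ⟨max 4 (max x₀ (exp (2 * (A + 2)))), le_max_left _ _, fun s z hs hz ↦ ?_⟩
  rw [max_le_iff, max_le_iff] at hs
  obtain ⟨hs4, hsx, hsA⟩ := hs
  have hz2 : (2 : ℝ) ≤ z := mod_cast hz
  have h_log_s : 2 * (A + 2) ≤ log s := (le_log_iff_exp_le (by linarith)).2 hsA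
  have h_zs : s ≤ z * s := by nlinarith
  set Y : ℝ := (z * s) ^ 2 with hY
  set b : ℝ := z * s / 4 with hb
  have hzb : (z : ℝ) ≤ b := by nlinarith
  have hbY : b ≤ Y := by nlinarith
  have h_log_b : log b = log z + log s - log 4 := by
    rw [hb, log_div (by positivity) four_ne_zero, log_mul (by positivity) (by positivity)]
  have h_log_b_pos : 0 < log b := log_pos (by linarith)
  have h_log_bY : log b ≤ log Y := log_le_log (by linarith) hbY
  have h_sum : log s / 2 / log Y ≤ ∑ p ∈ primesIoc z b, 1 / (p : ℝ) := by
    refine le_trans ?_ (h_recip z b (by linarith) hzb).1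
    have : log s / 2 ≤ log b - log z - A := by
      linarith [log_four_eq, log_two_lt_d9]
    gcongr
    linarith
  have h_mem : ∀ p ∈ primesIoc z b, p.Prime ∧ (z : ℝ) < p ∧ (p : ℝ) ≤ b := fun p hp ↦
    (mem_primesIoc (by positivity) (by positivity)).1 hp
  have h_count : ∀ p ∈ primesIoc z b,
      1 / (p : ℝ) * (Y / (10 * log Y)) ≤ #(primesIoc (Y / p / 4) (Y / p)) := fun p hp ↦ by
    obtain ⟨hp_prime, hzp, hpb⟩ := h_mem p hp
    have h_div : z * s ≤ Y / p := by
      rw [le_div_iff₀ (by linarith)]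
      nlinarith
    exact h_card Y p hp_prime.pos (by linarith)
  calc 1 / 20 * log s * Y / log Y ^ 2 = log s / 2 / log Y * (Y / (10 * log Y)) := by ring
    _ ≤ (∑ p ∈ primesIoc z b, 1 / (p : ℝ)) * (Y / (10 * log Y)) := by
        have : 0 ≤ Y / (10 * log Y) := div_nonneg (by positivity) (by linarith)
        gcongr
    _ ≤ ∑ p ∈ primesIoc z b, (#(primesIoc (Y / p / 4) (Y / p)) : ℝ) := by
        rw [sum_mul]
        exact sum_le_sum h_count
    _ ≤ parityModel 1 Y z := by
        refine sum_card_le_parityModel_one (fun p hp ↦ ⟨(h_mem p hp).1, ?_⟩) fun p hp q hq ↦ ?_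
        · exact_mod_cast (h_mem p hp).2.1.le
        · obtain ⟨hq_prime, hq_lower, hq_upper⟩ :=
            (mem_primesIoc (by positivity) (by positivity)).1 hq
          exact ⟨hq_prime,
            prime_pair_bounds hY (h_mem p hp).2.1 (h_mem p hp).2.2 hq_lower hq_upper⟩

theorem exists_le_parityModel_one :
    ∃ B₀ : ℝ, 16 ≤ B₀ ∧ ∀ (Y : ℝ) (z : ℕ), 2 ≤ z → B₀ * (z : ℝ) ^ 2 ≤ Y →
      1 / 40 * log (Y / (z : ℝ) ^ 2) * Y / log Y ^ 2 ≤ parityModel 1 Y z := by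
  obtain ⟨s₀, hs₀, h⟩ := exists_le_parityModel_one_sq
  refine ⟨s₀ ^ 2, by nlinarith, fun Y z hz hY ↦ ?_⟩
  have hz0 : (0 : ℝ) < z := by positivity
  rw [← le_div_iff₀ (by positivity)] at hY
  have hB : 0 ≤ Y / (z : ℝ) ^ 2 := (sq_nonneg s₀).trans hY
  have hYs : (z * √(Y / (z : ℝ) ^ 2)) ^ 2 = Y := by
    rw [mul_pow, sq_sqrt hB]
    field_simp
  have h_model := h (√(Y / (z : ℝ) ^ 2)) z (le_sqrt_of_sq_le hY) hz
  rw [hYs, log_sqrt hB] at h_model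
  exact h_model.trans_eq' (by ring)

lemma parityModel_le_three_mul_card (σ : ℤˣ) (Q : ℝ) (l : ℕ) :
    parityModel σ Q l ≤ 3 * #(modelSet σ Q l) := by
  rw [mul_comm, ← nsmul_eq_mul]
  refine sum_le_card_nsmul _ _ _ fun n _ ↦ ?_
  exact_mod_cast Nat.le_of_lt_succ (Nat.mod_lt (⌊Q⌋₊ / n) four_pos)

lemma prime_or_exists_prime_mul_prime_eq {n z : ℕ} (hn0 : n ≠ 0) (hn1 : n ≠ 1) (hnz : n < z ^ 3)
    (h_rough : ∀ p : ℕ, p.Prime → p ∣ n → z ≤ p) :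
    n.Prime ∨ ∃ p q : ℕ, (p.Prime ∧ z ≤ p) ∧ (q.Prime ∧ z ≤ q) ∧ p * q = n := by
  obtain ⟨p, hp, m, rfl⟩ := Nat.exists_prime_and_dvd hn1
  obtain rfl | hm1 := eq_or_ne m 1
  · exact .inl (by rwa [mul_one])
  obtain ⟨q, hq, k, rfl⟩ := Nat.exists_prime_and_dvd hm1
  have hp_le := h_rough p hp (dvd_mul_right _ _)
  have hq_le := h_rough q hq ((dvd_mul_right q k).mul_left p)
  obtain rfl | hk1 := eq_or_ne k 1
  · exact .inr ⟨p, q, ⟨hp, hp_le⟩, ⟨hq, hq_le⟩, by rw [mul_one]⟩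
  obtain ⟨r, hr, hrk⟩ := Nat.exists_prime_and_dvd hk1
  have hk_le : z ≤ k := (h_rough r hr ((hrk.mul_left q).mul_left p)).trans
    (Nat.le_of_dvd (Nat.pos_of_ne_zero (by rintro rfl; simp at hn0)) hrk)
  have h_cube : z ^ 3 ≤ p * (q * k) := calc
    z ^ 3 = z * (z * z) := by ring
    _ ≤ p * (q * k) := by gcongr
  exact absurd h_cube hnz.not_ge

lemma prime_or_exists_prime_mul_prime_eq_of_mem_modelSet {σ : ℤˣ} {n : ℕ} (hY : Y < (z : ℝ) ^ 3)
    (hn : n ∈ modelSet σ Y z) (hn1 : n ≠ 1) :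
    n.Prime ∨ ∃ p q : ℕ, (p.Prime ∧ z ≤ p) ∧ (q.Prime ∧ z ≤ q) ∧ p * q = n := by
  obtain ⟨⟨hn0, hnY⟩, h_rough, -⟩ := mem_modelSet.1 hn
  have h_lt : (n : ℝ) < (z : ℝ) ^ 3 := ((Nat.le_floor_iff' hn0.ne').1 hnY).trans_lt hY
  exact prime_or_exists_prime_mul_prime_eq hn0.ne' hn1 (mod_cast h_lt) h_rough

lemma exists_prime_mul_prime_eq_of_mem_modelSet_one {n : ℕ} (hY : Y < (z : ℝ) ^ 3)
    (hn : n ∈ modelSet 1 Y z) (hn1 : n ≠ 1) :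
    ∃ p q : ℕ, (p.Prime ∧ z ≤ p) ∧ (q.Prime ∧ z ≤ q) ∧ p * q = n := by
  refine (prime_or_exists_prime_mul_prime_eq_of_mem_modelSet hY hn hn1).resolve_left fun hp ↦ ?_
  have h_liouville := (mem_modelSet.1 hn).2.2
  rw [liouville_apply_prime hp] at h_liouville
  norm_num at h_liouville

lemma prime_of_mem_modelSet_neg_one {n : ℕ} (hY : Y < (z : ℝ) ^ 3)
    (hn : n ∈ modelSet (-1) Y z) : n.Prime := by
  have h_liouville := (mem_modelSet.1 hn).2.2
  have hn1 : n ≠ 1 := by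
    rintro rfl
    rw [ArithmeticFunction.liouville_apply_one] at h_liouville
    norm_num at h_liouville
  refine (prime_or_exists_prime_mul_prime_eq_of_mem_modelSet hY hn hn1).resolve_right ?_
  rintro ⟨p, q, ⟨hp, -⟩, ⟨hq, -⟩, rfl⟩
  rw [ArithmeticFunction.liouville_apply_mul, liouville_apply_prime hp,
    liouville_apply_prime hq] at h_liouville
  norm_num at h_liouville

lemma parityModel_neg_one_le (hY1 : 1 < Y) (hY : Y < (z : ℝ) ^ 3) :
    parityModel (-1) Y z ≤ 15 * (Y / log Y) := by
  have h_sub : modelSet (-1) Y z ⊆ Nat.primesBelow (⌊Y⌋₊ + 1) := fun n hn ↦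
    Nat.mem_primesBelow.2 ⟨Nat.lt_succ_of_le (mem_modelSet.1 hn).1.2,
      prime_of_mem_modelSet_neg_one hY hn⟩
  calc parityModel (-1) Y z ≤ 3 * #(modelSet (-1) Y z) := parityModel_le_three_mul_card _ Y z
    _ ≤ 3 * #(Nat.primesBelow (⌊Y⌋₊ + 1)) := by gcongr
    _ ≤ 3 * (5 * Y / log Y) := by
        rw [Nat.primesBelow_card_eq_primeCounting']
        gcongr
        exact primeCounting_floor_le hY1
    _ = 15 * (Y / log Y) := by ring

lemma card_modelSet_one_le {w : ℝ} (hw : 0 ≤ w) (hwz : w < z) (hY : Y < (z : ℝ) ^ 3) (hY0 : 0 ≤ Y) :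
    (#(modelSet 1 Y z) : ℝ) ≤ ∑ p ∈ primesIoc w (Y / z), (#(primesIoc w (Y / p)) : ℝ) + 1 := by
  have hz0 : (0 : ℝ) < z := hw.trans_lt hwz
  set U := (primesIoc w (Y / z)).sigma fun p ↦ primesIoc w (Y / p)
  have h_sub : modelSet 1 Y z ⊆ insert 1 (U.image fun x ↦ x.1 * x.2) := fun n hn ↦ by
    refine mem_insert.2 (or_iff_not_imp_left.2 fun hn1 ↦ ?_)
    obtain ⟨⟨hn0, hnY⟩, -⟩ := mem_modelSet.1 hn
    obtain ⟨p, q, ⟨hp, hzp⟩, ⟨hq, hzq⟩, rfl⟩ :=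
      exists_prime_mul_prime_eq_of_mem_modelSet_one hY hn hn1
    have h_le : (p * q : ℝ) ≤ Y := by exact_mod_cast (Nat.le_floor_iff' hn0.ne').1 hnY
    have hzp' : (z : ℝ) ≤ p := mod_cast hzp
    have hzq' : (z : ℝ) ≤ q := mod_cast hzq
    refine mem_image.2 ⟨⟨p, q⟩, mem_sigma.2 ⟨(mem_primesIoc hw (by positivity)).2 ⟨hp, ?_, ?_⟩,
      (mem_primesIoc hw (by positivity)).2 ⟨hq, by linarith, ?_⟩⟩, rfl⟩
    · linarith
    · rw [le_div_iff₀ hz0]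
      nlinarith
    · rw [le_div_iff₀ (by linarith)]
      linarith
  have h_card : #(modelSet 1 Y z) ≤ #U + 1 := (card_le_card h_sub).trans
    ((card_insert_le _ _).trans (Nat.add_le_add_right card_image_le 1))
  rw [card_sigma] at h_card
  exact_mod_cast h_card

lemma card_primesIoc_div_le (w : ℝ) {p : ℕ} (hz : 1 < z) (hp : 0 < p) (hpz : (p : ℝ) ≤ Y / z) :
    (#(primesIoc w (Y / p)) : ℝ) ≤ 1 / (p : ℝ) * (5 * Y / log z) := by
  have hz1 : (1 : ℝ) < z := mod_cast hz
  have hp0 : (0 : ℝ) < p := mod_cast hp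
  have hzp : (z : ℝ) ≤ Y / p := by rwa [le_div_comm₀ (by linarith) hp0]
  have hlog := log_pos hz1
  calc (#(primesIoc w (Y / p)) : ℝ) ≤ 5 * (Y / p) / log (Y / p) :=
        card_primesIoc_le w (by linarith)
    _ ≤ 5 * (Y / p) / log z := by
        have : 0 ≤ Y / p := by linarith
        gcongr
    _ = 1 / (p : ℝ) * (5 * Y / log z) := by ring

lemma half_log_le_log_sub_one {x : ℝ} (hx : 3 ≤ x) : log x / 2 ≤ log (x - 1) := by
  have h_log := log_le_log (by linarith) (show x ≤ (x - 1) ^ 2 by nlinarith)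
  rw [log_pow, Nat.cast_ofNat] at h_log
  linarith

lemma log_sub_one_le_log_sub_one {x : ℝ} (hx : 3 ≤ x) : log x - 1 ≤ log (x - 1) := by
  have h_log := log_le_log (by linarith) (show x ≤ exp 1 * (x - 1) by nlinarith [exp_one_gt_d9])
  rw [log_mul (exp_pos 1).ne' (by linarith), log_exp] at h_log
  linarith

theorem exists_parityModel_one_le :
    ∃ A : ℝ, 1 ≤ A ∧ ∀ (Y : ℝ) (z : ℕ), 3 ≤ z → 4 * (z : ℝ) ^ 2 ≤ Y → Y < (z : ℝ) ^ 3 →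
      parityModel 1 Y z ≤ A * log (Y / (z : ℝ) ^ 2) * Y / log z ^ 2 := by
  obtain ⟨A, hA, h_recip⟩ := exists_sum_one_div_primesIoc_bounds
  refine ⟨3 + 30 * (A + 2), by linarith, fun Y z hz hY hYz ↦ ?_⟩
  have hz3 : (3 : ℝ) ≤ z := mod_cast hz
  have hY0 : 0 < Y := by nlinarith
  have h_log_z : 1 ≤ log z := (le_log_iff_exp_le (by linarith)).2 (by linarith [exp_one_lt_d9])
  have h_log_B : 1 ≤ log (Y / (z : ℝ) ^ 2) := one_lt_log_four.le.trans
    (log_le_log four_pos (by rwa [le_div_iff₀ (by positivity)]))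
  have h_log_div : log (Y / z) = log (Y / (z : ℝ) ^ 2) + log z := by
    rw [← log_mul (by positivity) (by positivity)]
    congr 1
    field_simp
  set ℓ := log (Y / (z : ℝ) ^ 2)
  have h_log_half := half_log_le_log_sub_one hz3
  have h_log_pred := log_sub_one_le_log_sub_one hz3
  have hz_div : (z : ℝ) - 1 ≤ Y / z := by
    rw [le_div_iff₀ (by linarith)]
    nlinarith
  have h_sum : ∑ p ∈ primesIoc (z - 1) (Y / z), 1 / (p : ℝ) ≤ (A + 2) * ℓ / (log z / 2) := by
    refine (h_recip _ _ (by linarith) hz_div).2.trans ?_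
    gcongr
    nlinarith
  have h_card : (#(modelSet 1 Y z) : ℝ) ≤ 10 * (A + 2) * ℓ * Y / log z ^ 2 + 1 := by
    refine (card_modelSet_one_le (w := z - 1) (by linarith) (by linarith) hYz hY0.le).trans ?_
    gcongr
    calc ∑ p ∈ primesIoc (z - 1) (Y / z), (#(primesIoc (z - 1) (Y / p)) : ℝ)
        ≤ ∑ p ∈ primesIoc (z - 1) (Y / z), 1 / (p : ℝ) * (5 * Y / log z) :=
          sum_le_sum fun p hp ↦ by
            obtain ⟨hp, -, hpz⟩ := (mem_primesIoc (by linarith) (by positivity)).1 hp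
            exact card_primesIoc_div_le _ (by omega) hp.pos hpz
      _ ≤ (A + 2) * ℓ / (log z / 2) * (5 * Y / log z) := by
          rw [← sum_mul]
          gcongr
      _ = 10 * (A + 2) * ℓ * Y / log z ^ 2 := by ring
  have h_one : 1 ≤ ℓ * Y / log z ^ 2 := by
    rw [one_le_div (by positivity)]
    have : log z ^ 2 ≤ (z : ℝ) ^ 2 := by
      gcongr
      exact log_le_self (by linarith)
    nlinarith
  calc parityModel 1 Y z ≤ 3 * #(modelSet 1 Y z) := parityModel_le_three_mul_card 1 Y z
    _ ≤ 3 * (10 * (A + 2) * ℓ * Y / log z ^ 2 + ℓ * Y / log z ^ 2) := by linarith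
    _ = (3 + 30 * (A + 2)) * ℓ * Y / log z ^ 2 := by ring

end PrimePairs

lemma exists_le_parityModel_one_of_cube_le :
    ∃ K₀ : ℝ, 1 < K₀ ∧ ∀ (K R L : ℝ) (q : ℕ), K₀ ≤ K → 2 ≤ q → (q : ℝ) ^ 3 ≤ R * √K →
      log R + log K ≤ 2 * L →
      1 / (q : ℝ) * (log K * K * R / (320 * L ^ 2)) ≤ parityModel 1 (K * (R / q)) q := by
  obtain ⟨B₀, hB₀, h_model⟩ := exists_le_parityModel_one
  refine ⟨B₀ ^ 2, by nlinarith, fun K R L q hK hq h_cube hL ↦ ?_⟩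
  have hq2 : (2 : ℝ) ≤ q := mod_cast hq
  have hq0 : (0 : ℝ) < q := by linarith
  have hK1 : 1 < K := by nlinarith
  have hK0 : 0 < K := by linarith
  have h_sqrt : 0 < √K := sqrt_pos.2 hK0
  have hR : 0 < R := pos_of_mul_pos_left ((pow_pos hq0 3).trans_le h_cube) h_sqrt.le
  set Y := K * (R / q) with hY
  have : 0 < Y := by positivity
  have h_ratio : √K ≤ Y / (q : ℝ) ^ 2 := by
    rw [hY, le_div_iff₀ (by positivity), ← mul_div_assoc, le_div_iff₀ hq0]
    calc √K * (q : ℝ) ^ 2 * q = √K * (q : ℝ) ^ 3 := by ring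
      _ ≤ √K * (R * √K) := by gcongr
      _ = K * R := by rw [mul_left_comm, mul_self_sqrt hK0.le, mul_comm]
  have h_large : B₀ * (q : ℝ) ^ 2 ≤ Y :=
    (le_div_iff₀ (by positivity)).1 ((le_sqrt_of_sq_le hK).trans h_ratio)
  have h_log_ratio : log K / 2 ≤ log (Y / (q : ℝ) ^ 2) := by
    rw [← log_sqrt hK0.le]
    exact log_le_log h_sqrt h_ratio
  have h_log_K : 0 < log K := log_pos hK1
  have h_log_ratio_pos : 0 < log (Y / (q : ℝ) ^ 2) := by linarith
  have h_log_Y : log Y ≤ 2 * L := by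
    rw [hY, log_mul hK0.ne' (by positivity), log_div hR.ne' hq0.ne']
    linarith [log_nonneg (by linarith : (1 : ℝ) ≤ q)]
  have h_log_Y_pos : 0 < log Y := log_pos (by nlinarith)
  calc 1 / (q : ℝ) * (log K * K * R / (320 * L ^ 2))
      = 1 / 40 * (log K / 2) * Y / (2 * L) ^ 2 := by rw [hY]; ring
    _ ≤ 1 / 40 * log (Y / (q : ℝ) ^ 2) * Y / log Y ^ 2 := by gcongr
    _ ≤ parityModel 1 Y q := h_model Y q hq h_large

lemma primesIoc_subset_outerPrimes {Q b : ℝ} {p : ℕ} (hp : 0 < p) (hQ : 0 ≤ Q)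
    (hb : 0 ≤ b) (hbp : b < p) : primesIoc ((Q / p) ^ (1 / 3 : ℝ)) b ⊆ outerPrimes Q p :=
  fun q hq ↦ by
  obtain ⟨hq_prime, h_lower, h_upper⟩ := (mem_primesIoc (by positivity) hb).1 hq
  refine (mem_outerPrimes hp).2 ⟨⟨mod_cast h_upper.trans_lt hbp, hq_prime⟩, ?_⟩
  rw [div_lt_iff₀ (mod_cast hq_prime.pos), ← pow_succ]
  calc Q / p = ((Q / p) ^ (1 / 3 : ℝ)) ^ 3 := by
        rw [← rpow_natCast, ← rpow_mul (by positivity)]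
        norm_num
    _ < (q : ℝ) ^ 3 := by gcongr

lemma exists_le_sum_primesIoc_rpow :
    ∃ A : ℝ, 1 ≤ A ∧ ∀ K R L : ℝ, 1 < K → A ≤ log K → 1 < R → log R + log K ≤ 2 * L →
      log K / 12 / L ≤
        ∑ q ∈ primesIoc (R ^ (1 / 3 : ℝ)) (R ^ (1 / 3 : ℝ) * K ^ (1 / 6 : ℝ)), 1 / (q : ℝ) := by
  obtain ⟨A, hA, h_recip⟩ := exists_sum_one_div_primesIoc_bounds
  refine ⟨12 * A, by linarith, fun K R L hK hAK hR hL ↦ ?_⟩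
  have h_log_R : 0 < log R := log_pos hR
  have h_log_w : log (R ^ (1 / 3 : ℝ)) = log R / 3 := by rw [log_rpow (by linarith)]; ring
  have h_log_b : log (R ^ (1 / 3 : ℝ) * K ^ (1 / 6 : ℝ)) = log R / 3 + log K / 6 := by
    rw [log_mul (by positivity) (by positivity), h_log_w, log_rpow (by linarith)]
    ring
  refine le_trans ?_ (h_recip _ _ (one_lt_rpow hR (by norm_num))
    (le_mul_of_one_le_right (by positivity) (one_le_rpow hK.le (by norm_num)))).1
  rw [h_log_w, h_log_b]
  gcongr <;> linarith

lemma exists_le_sum_outerPrimes_parityModel_one :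
    ∃ K₀ : ℝ, 1 < K₀ ∧ ∀ (K Q L : ℝ) (p : ℕ), K₀ ≤ K → 0 < p → p < Q →
      log (Q / p) / 3 + log K / 6 < log p → log (Q / p) + log K ≤ 2 * L →
      1 / (p : ℝ) * (log K ^ 2 * K * Q / (3840 * L ^ 3)) ≤
        ∑ q ∈ outerPrimes Q p, parityModel 1 (K * (Q / p / q)) q := by
  obtain ⟨A, hA, h_recip⟩ := exists_le_sum_primesIoc_rpow
  obtain ⟨K₀, hK₀, h_term⟩ := exists_le_parityModel_one_of_cube_le
  refine ⟨max K₀ (exp A), lt_max_of_lt_left hK₀, fun K Q L p hK hp hpQ hp_log hL ↦ ?_⟩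
  obtain ⟨hK₀K, hAK⟩ := max_le_iff.1 hK
  have hK0 : 0 < K := by linarith
  have hp0 : (0 : ℝ) < p := mod_cast hp
  have hQ0 : 0 < Q := hp0.trans hpQ
  set R := Q / p with hR
  have hR1 : 1 < R := (one_lt_div hp0).2 hpQ
  have h_log_K : A ≤ log K := (le_log_iff_exp_le hK0).2 hAK
  have hL0 : 0 < L := by linarith [log_pos hR1]
  set w := R ^ (1 / 3 : ℝ) with hw
  set b := w * K ^ (1 / 6 : ℝ) with hb
  have hb0 : 0 < b := by positivity
  have hbp : b < p := by
    rw [← log_lt_log_iff hb0 hp0, hb, hw, log_mul (by positivity) (by positivity),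
      log_rpow (by linarith), log_rpow hK0]
    linarith
  have hb_cube : b ^ 3 = R * √K := by
    rw [hb, mul_pow, hw, ← rpow_natCast, ← rpow_natCast, ← rpow_mul (by positivity),
      ← rpow_mul hK0.le, sqrt_eq_rpow]
    norm_num
  have h_sum : log K / 12 / L ≤ ∑ q ∈ primesIoc w b, 1 / (q : ℝ) :=
    h_recip K R L (by linarith) h_log_K hR1 hL
  calc 1 / (p : ℝ) * (log K ^ 2 * K * Q / (3840 * L ^ 3))
      = log K / 12 / L * (log K * K * R / (320 * L ^ 2)) := by rw [hR]; ring
    _ ≤ (∑ q ∈ primesIoc w b, 1 / (q : ℝ)) * (log K * K * R / (320 * L ^ 2)) := by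
        have : 0 ≤ log K := by linarith
        gcongr
    _ ≤ ∑ q ∈ primesIoc w b, parityModel 1 (K * (R / q)) q := by
        rw [sum_mul]
        refine sum_le_sum fun q hq ↦ ?_
        obtain ⟨hq_prime, -, hqb⟩ := (mem_primesIoc (by positivity) hb0.le).1 hq
        refine h_term K R L q hK₀K hq_prime.two_le ?_ hL
        rw [← hb_cube]
        gcongr
    _ ≤ ∑ q ∈ outerPrimes Q p, parityModel 1 (K * (R / q)) q :=
        sum_le_sum_of_subset_of_nonneg (primesIoc_subset_outerPrimes hp hQ0.le hb0.le hbp)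
          fun _ _ _ ↦ parityModel_nonneg ..

lemma exists_le_sum_primesIoc_exp :
    ∃ Λ₀ : ℝ, ∀ Λ, Λ₀ ≤ Λ →
      0.007 ≤ ∑ p ∈ primesIoc (exp (0.2505 * Λ)) (exp (0.2545 * Λ)), 1 / (p : ℝ) := by
  obtain ⟨A, hA, h_recip⟩ := exists_sum_one_div_primesIoc_bounds
  refine ⟨1000 * A, fun Λ hΛ ↦ ?_⟩
  refine le_trans ?_ (h_recip _ _ (one_lt_exp_iff.2 (by linarith)) ?_).1
  · rw [log_exp, log_exp, le_div_iff₀ (by linarith)]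
    linarith
  · gcongr
    · linarith
    · norm_num

namespace PrimeClock

variable {T : PrimeClock} {Q : ℝ} {l : ℕ}

lemma primesIoc_exp_subset_primesBelow (hT : 0.255 * T.logScale Q < T.time l) :
    primesIoc (exp (0.2505 * log Q)) (exp (0.2545 * log Q)) ⊆ Nat.primesBelow l := fun p hp ↦ by
  obtain ⟨hp_prime, h_lower, h_upper⟩ := (mem_primesIoc (by positivity) (by positivity)).1 hp
  have hp0 : (0 : ℝ) < p := mod_cast hp_prime.pos
  have h_log_p : log p ≤ 0.2545 * log Q := (log_le_iff_le_exp hp0).2 h_upper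
  have h_log_p' : 0.2505 * log Q < log p := (lt_log_iff_exp_lt hp0).2 h_lower
  have h_log_p_pos : 0 ≤ log p := log_natCast_nonneg p
  have h_lt : log p < log l := by
    have := T.time_le l
    have := T.one_le_lag
    rw [logScale, shift] at hT
    linarith
  have hl0 : (0 : ℝ) < l := Nat.cast_pos.2 <| Nat.pos_of_ne_zero <| by
    rintro rfl
    rw [Nat.cast_zero, log_zero] at h_lt
    linarith
  exact Nat.mem_primesBelow.2 ⟨mod_cast (log_lt_log_iff hp0 hl0).1 h_lt, hp_prime⟩

/-- Below `l > Q ^ 0.2545` the outer primes contribute the boundary layer `p q³ ≈ Q` with `p` near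
`Q ^ (1/4)`, over which the model argument `K Q / (p q)` exceeds `q ^ 2` by a power of `K`. -/
theorem exists_le_outerMass :
    ∃ K₀ : ℝ, 2 ≤ K₀ ∧ ∀ (K Q : ℝ) (l : ℕ), K₀ ≤ K → 1 ≤ Q →
      0.255 * T.logScale Q < T.time l → 2000 * log K ≤ T.logScale Q →
      1 / 1000000 * K * log K ^ 2 * Q / T.logScale Q ^ 3 ≤ outerMass K Q l := by
  obtain ⟨K₁, hK₁, h_inner⟩ := exists_le_sum_outerPrimes_parityModel_one
  obtain ⟨Λ₀, h_outer⟩ := exists_le_sum_primesIoc_exp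
  refine ⟨max K₁ (exp (T.shift + |Λ₀|)), le_max_of_le_right ?_, fun K Q l hK hQ hT hQK ↦ ?_⟩
  · have := add_one_le_exp (T.shift + |Λ₀|)
    linarith [abs_nonneg Λ₀, T.one_le_shift]
  obtain ⟨hK₁K, hΛK⟩ := max_le_iff.1 hK
  have hK0 : 0 < K := by linarith
  have h_log_K : T.shift + |Λ₀| ≤ log K := (le_log_iff_exp_le hK0).2 hΛK
  have h_scale : T.logScale Q = log Q + T.shift := rfl
  have h_shift := T.one_le_shift
  have h_log_Q : 1999 * log K ≤ log Q := by linarith [abs_nonneg Λ₀]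
  have h_term : ∀ p ∈ primesIoc (exp (0.2505 * log Q)) (exp (0.2545 * log Q)),
      1 / (p : ℝ) * (log K ^ 2 * K * Q / (3840 * T.logScale Q ^ 3)) ≤
        ∑ q ∈ outerPrimes Q p, parityModel 1 (K * (Q / p / q)) q := fun p hp ↦ by
    obtain ⟨hp_prime, h_lower, h_upper⟩ := (mem_primesIoc (by positivity) (by positivity)).1 hp
    have hp0 : (0 : ℝ) < p := mod_cast hp_prime.pos
    have h_log_p : log p ≤ 0.2545 * log Q := (log_le_iff_le_exp hp0).2 h_upper
    have h_log_p' : 0.2505 * log Q < log p := (lt_log_iff_exp_lt hp0).2 h_lower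
    have h_log_div : log (Q / p) = log Q - log p := log_div (by linarith) hp0.ne'
    have hpQ : (p : ℝ) < Q := (log_lt_log_iff hp0 (by linarith)).1 (by linarith [abs_nonneg Λ₀])
    exact h_inner K Q _ p hK₁K hp_prime.pos hpQ (by linarith [abs_nonneg Λ₀])
      (by linarith [abs_nonneg Λ₀])
  have h_pos : 0 < T.logScale Q := T.logScale_pos hQ
  calc 1 / 1000000 * K * log K ^ 2 * Q / T.logScale Q ^ 3
      = 0.00384 * (log K ^ 2 * K * Q / (3840 * T.logScale Q ^ 3)) := by ring
    _ ≤ 0.007 * (log K ^ 2 * K * Q / (3840 * T.logScale Q ^ 3)) := by gcongr; norm_num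
    _ ≤ (∑ p ∈ primesIoc (exp (0.2505 * log Q)) (exp (0.2545 * log Q)), 1 / (p : ℝ)) *
          (log K ^ 2 * K * Q / (3840 * T.logScale Q ^ 3)) := by
        gcongr
        exact h_outer _ (by linarith [le_abs_self Λ₀, abs_nonneg Λ₀])
    _ ≤ outerMass K Q l := by
        rw [sum_mul]
        refine (sum_le_sum h_term).trans (sum_le_sum_of_subset_of_nonneg
          (primesIoc_exp_subset_primesBelow hT) fun _ _ _ ↦ ?_)
        exact sum_nonneg fun _ _ ↦ parityModel_nonneg ..

end PrimeClock

/-! ### A potential -/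

open Filter

lemma rpow_le_mul_rpow_of_le_three_mul {x y : ℝ} (hx : 0 < x) (hxy : x ≤ 3 * y) :
    y ^ (1.99 : ℝ) ≤ 1.012 * (x ^ (1.99 : ℝ) / x ^ 2) * y ^ 2 := by
  have hy : 0 < y := by linarith
  have h_three : (3 : ℝ) ^ (0.01 : ℝ) ≤ 1.012 := by
    rw [← rpow_le_rpow_iff (z := 100) (by positivity) (by norm_num) (by norm_num),
      ← rpow_mul (by norm_num)]
    norm_num
  have h_split {t : ℝ} (ht : 0 < t) : t ^ (1.99 : ℝ) = t ^ 2 / t ^ (0.01 : ℝ) := by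
    rw [← rpow_natCast, ← rpow_sub ht]
    norm_num
  have h_le : x ^ (0.01 : ℝ) ≤ 1.012 * y ^ (0.01 : ℝ) := by
    calc x ^ (0.01 : ℝ) ≤ (3 * y) ^ (0.01 : ℝ) := by gcongr
      _ = 3 ^ (0.01 : ℝ) * y ^ (0.01 : ℝ) := mul_rpow (by norm_num) hy.le
      _ ≤ 1.012 * y ^ (0.01 : ℝ) := by gcongr
  rw [h_split hx, h_split hy, div_div_cancel_left' (by positivity), mul_assoc, ← div_eq_inv_mul,
    ← mul_div_assoc, div_le_div_iff₀ (by positivity) (by positivity)]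
  calc y ^ 2 * x ^ (0.01 : ℝ) ≤ y ^ 2 * (1.012 * y ^ (0.01 : ℝ)) := by gcongr
    _ = 1.012 * y ^ 2 * y ^ (0.01 : ℝ) := by ring

lemma exists_add_mul_rpow_le_mul_sq (k₀ b : ℝ) {a c : ℝ} (ha : 0 ≤ a) (hc : 0 < c) :
    ∃ k, k₀ ≤ k ∧ 1 ≤ k ∧ a + b * k ^ (1.99 : ℝ) ≤ c * k ^ 2 := by
  have h_tendsto : Tendsto (fun k : ℝ ↦ c * k ^ (0.01 : ℝ)) atTop atTop :=
    (tendsto_rpow_atTop (by norm_num)).const_mul_atTop hc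
  obtain ⟨k, hk, hk₀, hk1⟩ := ((h_tendsto.eventually_ge_atTop (a + b)).and
    ((eventually_ge_atTop k₀).and (eventually_ge_atTop 1))).exists
  refine ⟨k, hk₀, hk1, ?_⟩
  have h_one : 1 ≤ k ^ (1.99 : ℝ) := one_le_rpow hk1 (by norm_num)
  calc a + b * k ^ (1.99 : ℝ) ≤ (a + b) * k ^ (1.99 : ℝ) := by nlinarith
    _ ≤ c * k ^ (0.01 : ℝ) * k ^ (1.99 : ℝ) := by gcongr
    _ = c * k ^ 2 := by
        rw [mul_assoc, ← rpow_add (by linarith), ← rpow_natCast]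
        norm_num

namespace PrimeClock

variable {T : PrimeClock} {M Q : ℝ} {l p q : ℕ}

lemma logScale_le_three_mul_logScale_div_div (hQ : 1 ≤ Q) (hl : (l : ℝ) ^ 2 ≤ Q)
    (hp : p ∈ Nat.primesBelow l) (hq : q ∈ innerPrimes Q p) :
    T.logScale Q ≤ 3 * T.logScale (Q / p / q) := by
  have hp0 := (Nat.prime_of_mem_primesBelow hp).pos
  have hp0' : (0 : ℝ) < p := mod_cast hp0
  have hq0 : (0 : ℝ) < q := mod_cast ((mem_innerPrimes hp0).1 hq).1.2.pos
  have h_log_p := log_le_half_log_of_sq_le hp0' (sq_le_of_mem_primesBelow hl hp)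
  have h_log_q := log_le_log (by positivity) (cube_le_of_mem_innerPrimes hp0 hq)
  rw [log_pow, log_div (by positivity) hp0'.ne'] at h_log_q
  push_cast at h_log_q
  rw [logScale_div (by positivity) hq0, logScale_div (by linarith) hp0', logScale]
  linarith [T.one_le_shift]

lemma one_le_div_div (hp : p ∈ Nat.primesBelow l) (hq : q ∈ innerPrimes Q p) : 1 ≤ Q / p / q := by
  obtain ⟨⟨-, hq_prime⟩, hq2⟩ := (mem_innerPrimes (Nat.prime_of_mem_primesBelow hp).pos).1 hq
  exact (one_le_pow₀ (mod_cast hq_prime.one_lt.le)).trans hq2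

lemma potential_four_eq (hQ : 1 ≤ Q) :
    T.potential 4 Q l = T.logScale Q ^ 2 * T.potential 6 Q l := by
  have := T.logScale_pos hQ
  unfold potential
  field_simp

lemma potential_six_le (hQ : 1 ≤ Q) (hl : (l : ℝ) ^ 2 ≤ Q) :
    T.potential 6 Q l ≤ Q / T.logScale Q ^ 3 := by
  have hL := T.logScale_pos hQ
  have ht := T.time_pos l
  have h_half := T.time_le_half_logScale hQ hl
  calc Q * (T.time l ^ 3 / T.logScale Q ^ 6) ≤ Q * (T.logScale Q ^ 3 / T.logScale Q ^ 6) := by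
        gcongr
        linarith
    _ = Q / T.logScale Q ^ 3 := by field_simp

variable (T) in
theorem exists_isPotential_potential_four :
    ∃ A > 0, ∀ K, IsPotential 0 K fun Q l ↦ A * T.potential 4 Q l := by
  obtain ⟨C, hC, h_error⟩ := T.exists_expansionError_le
  refine ⟨25 * C, by positivity, fun K Q l hQ hl ↦ ?_⟩
  have h_sum := T.sum_sum_innerPrimes_potential_four_le hQ hl
  have h_six : T.potential 6 Q l ≤ T.potential 4 Q l := by
    rw [potential_four_eq hQ]
    refine le_mul_of_one_le_left (T.potential_pos hQ).le (one_le_pow₀ ?_)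
    exact T.one_le_shift.trans (T.shift_le_logScale hQ)
  simp only [← mul_sum, mul_zero, zero_div, zero_mul, add_zero]
  nlinarith [h_error Q l hQ hl]

/-- A potential of size `L ^ (1.99 - 6)` up to the threshold `L = M` and `L ^ (-6)` beyond it, which
is cut off to zero where the outer mass can take over: when `L ≥ M / 3` and `l` is late. -/
noncomputable def cutoffPotential (T : PrimeClock) (M Q : ℝ) (l : ℕ) : ℝ :=
  if M / 3 ≤ T.logScale Q ∧ 0.255 * T.logScale Q < T.time l then 0
  else min (T.logScale Q) M ^ (1.99 : ℝ) * T.potential 6 Q l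

lemma cutoffPotential_le_of_min_rpow_le (hQ : 1 ≤ Q) {x : ℝ} (hx : 0 ≤ x)
    (h : min (T.logScale Q) M ^ (1.99 : ℝ) ≤ x) :
    T.cutoffPotential M Q l ≤ x * T.potential 6 Q l := by
  have := T.potential_pos (k := 6) (l := l) hQ
  unfold cutoffPotential
  split_ifs
  · positivity
  · gcongr

lemma min_logScale_rpow_le_logScale_rpow (hM : 0 ≤ M) (hQ : 1 ≤ Q) :
    min (T.logScale Q) M ^ (1.99 : ℝ) ≤ T.logScale Q ^ (1.99 : ℝ) :=
  rpow_le_rpow (le_min (T.logScale_pos hQ).le hM) (min_le_left _ _) (by norm_num)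

lemma min_logScale_rpow_le_rpow (hM : 0 ≤ M) (hQ : 1 ≤ Q) :
    min (T.logScale Q) M ^ (1.99 : ℝ) ≤ M ^ (1.99 : ℝ) :=
  rpow_le_rpow (le_min (T.logScale_pos hQ).le hM) (min_le_right _ _) (by norm_num)

lemma sum_sum_cutoffPotential_le_logScale_rpow_mul (hM : 0 ≤ M) (hQ : 1 ≤ Q)
    (hl : (l : ℝ) ^ 2 ≤ Q) :
    ∑ p ∈ Nat.primesBelow l, ∑ q ∈ innerPrimes Q p, T.cutoffPotential M (Q / p / q) q ≤
      0.975 * (T.logScale Q ^ (1.99 : ℝ) * T.potential 6 Q l) := by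
  have hL := T.logScale_pos hQ
  have h_pos := T.potential_pos (k := 6) (l := l) hQ
  calc _ ≤ ∑ p ∈ Nat.primesBelow l, ∑ q ∈ innerPrimes Q p,
        1.012 * (T.logScale Q ^ (1.99 : ℝ) / T.logScale Q ^ 2) * T.potential 4 (Q / p / q) q := by
        refine sum_le_sum fun p hp ↦ sum_le_sum fun q hq ↦ ?_
        have h_one := one_le_div_div hp hq
        rw [potential_four_eq h_one, ← mul_assoc]
        exact cutoffPotential_le_of_min_rpow_le h_one (by positivity)
          ((min_logScale_rpow_le_logScale_rpow hM h_one).trans (rpow_le_mul_rpow_of_le_three_mul hL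
            (T.logScale_le_three_mul_logScale_div_div hQ hl hp hq)))
    _ ≤ 1.012 * (T.logScale Q ^ (1.99 : ℝ) / T.logScale Q ^ 2) * (0.96 * T.potential 4 Q l) := by
        simp only [← mul_sum]
        gcongr
        exact T.sum_sum_innerPrimes_potential_four_le hQ hl
    _ = 0.97152 * (T.logScale Q ^ (1.99 : ℝ) * T.potential 6 Q l) := by
        rw [potential_four_eq hQ]
        field_simp
        norm_num
    _ ≤ 0.975 * (T.logScale Q ^ (1.99 : ℝ) * T.potential 6 Q l) := by
        gcongr
        norm_num

lemma sum_sum_cutoffPotential_le_rpow_mul_of_time_le (hM : 0 ≤ M) (hQ : 1 ≤ Q)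
    (hl : (l : ℝ) ^ 2 ≤ Q) (hMQ : M ≤ T.logScale Q) (hT : T.time l ≤ 0.255 * T.logScale Q) :
    ∑ p ∈ Nat.primesBelow l, ∑ q ∈ innerPrimes Q p, T.cutoffPotential M (Q / p / q) q ≤
      0.975 * (M ^ (1.99 : ℝ) * T.potential 6 Q l) := by
  have h_pos := T.potential_pos (k := 6) (l := l) hQ
  calc _ ≤ ∑ p ∈ Nat.primesBelow l, ∑ q ∈ T.earlyPrimes Q p,
        M ^ (1.99 : ℝ) * T.potential 6 (Q / p / q) q := by
        refine sum_le_sum fun p hp ↦ ?_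
        rw [earlyPrimes, sum_filter]
        refine sum_le_sum fun q hq ↦ ?_
        have h_one := one_le_div_div hp hq
        split_ifs with h_early
        · exact cutoffPotential_le_of_min_rpow_le h_one (by positivity)
            (min_logScale_rpow_le_rpow hM h_one)
        · have := T.logScale_le_three_mul_logScale_div_div hQ hl hp hq
          rw [cutoffPotential, if_pos ⟨by linarith, not_le.1 h_early⟩]
    _ ≤ M ^ (1.99 : ℝ) * (0.97 * T.potential 6 Q l) := by
        simp only [← mul_sum]
        gcongr
        exact T.sum_sum_earlyPrimes_potential_six_le hQ hl hT
    _ ≤ 0.975 * (M ^ (1.99 : ℝ) * T.potential 6 Q l) := by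
        rw [mul_left_comm]
        gcongr
        norm_num

lemma sum_sum_cutoffPotential_le_mul_potential_six (hM : 0 ≤ M) (hQ : 1 ≤ Q)
    (hl : (l : ℝ) ^ 2 ≤ Q) :
    ∑ p ∈ Nat.primesBelow l, ∑ q ∈ innerPrimes Q p, T.cutoffPotential M (Q / p / q) q ≤
      9 * M ^ (1.99 : ℝ) * T.potential 6 Q l := by
  have hL := T.logScale_pos hQ
  have h_pos := T.potential_pos (k := 6) (l := l) hQ
  calc _ ≤ ∑ p ∈ Nat.primesBelow l, ∑ q ∈ innerPrimes Q p,
        9 * M ^ (1.99 : ℝ) / T.logScale Q ^ 2 * T.potential 4 (Q / p / q) q := by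
        refine sum_le_sum fun p hp ↦ sum_le_sum fun q hq ↦ ?_
        have h_one := one_le_div_div hp hq
        have h_three := T.logScale_le_three_mul_logScale_div_div hQ hl hp hq
        rw [potential_four_eq h_one, ← mul_assoc]
        refine cutoffPotential_le_of_min_rpow_le h_one (by positivity)
          ((min_logScale_rpow_le_rpow hM h_one).trans ?_)
        rw [div_mul_eq_mul_div, le_div_iff₀ (by positivity)]
        calc M ^ (1.99 : ℝ) * T.logScale Q ^ 2
            ≤ M ^ (1.99 : ℝ) * (3 * T.logScale (Q / p / q)) ^ 2 := by gcongr
          _ = 9 * M ^ (1.99 : ℝ) * T.logScale (Q / p / q) ^ 2 := by ring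
    _ ≤ 9 * M ^ (1.99 : ℝ) / T.logScale Q ^ 2 * (1 * T.potential 4 Q l) := by
        have := T.potential_pos (k := 4) (l := l) hQ
        simp only [← mul_sum]
        gcongr
        exact (T.sum_sum_innerPrimes_potential_four_le hQ hl).trans (by gcongr; norm_num)
    _ = 9 * M ^ (1.99 : ℝ) * T.potential 6 Q l := by
        rw [potential_four_eq hQ]
        field_simp

lemma sum_sum_cutoffPotential_le (hM : 0 ≤ M) (hQ : 1 ≤ Q) (hl : (l : ℝ) ^ 2 ≤ Q)
    (h : ¬(M / 3 ≤ T.logScale Q ∧ 0.255 * T.logScale Q < T.time l)) :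
    ∑ p ∈ Nat.primesBelow l, ∑ q ∈ innerPrimes Q p, T.cutoffPotential M (Q / p / q) q ≤
      0.975 * T.cutoffPotential M Q l := by
  rw [cutoffPotential, if_neg h]
  rcases le_total (T.logScale Q) M with hQM | hMQ
  · rw [min_eq_left hQM]
    exact sum_sum_cutoffPotential_le_logScale_rpow_mul hM hQ hl
  · rw [min_eq_right hMQ]
    exact sum_sum_cutoffPotential_le_rpow_mul_of_time_le hM hQ hl hMQ
      (not_lt.1 fun hT ↦ h ⟨by linarith, hT⟩)

lemma potential_six_le_cutoffPotential (hM : 1 ≤ M) (hQ : 1 ≤ Q)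
    (h : ¬(M / 3 ≤ T.logScale Q ∧ 0.255 * T.logScale Q < T.time l)) :
    T.potential 6 Q l ≤ T.cutoffPotential M Q l := by
  rw [cutoffPotential, if_neg h]
  exact le_mul_of_one_le_left (T.potential_pos hQ).le (one_le_rpow
    (le_min (T.one_le_shift.trans (T.shift_le_logScale hQ)) hM) (by norm_num))

variable (T) in
theorem exists_isPotential_eq_zero {ε : ℝ} (hε : 0 < ε) :
    ∃ K : ℝ, 2 ≤ K ∧ ∃ P : ℝ → ℕ → ℝ, ∃ L₀ : ℝ, IsPotential ε K P ∧
      ∀ (Q : ℝ) (l : ℕ), L₀ ≤ T.logScale Q → 0.255 * T.logScale Q < T.time l → P Q l = 0 := by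
  obtain ⟨C, hC, h_error⟩ := T.exists_expansionError_le
  obtain ⟨K₀, hK₀, h_outer⟩ := exists_le_outerMass (T := T)
  have h_density := modelDensity_pos
  obtain ⟨k, hk₀, hk1, hk⟩ := exists_add_mul_rpow_le_mul_sq (log K₀)
    (40 * C * (9 * 6000 ^ (1.99 : ℝ))) hC.le (c := modelDensity * ε / 1000000) (by positivity)
  have hM : 1 ≤ 6000 * k := by linarith
  have hK : K₀ ≤ exp k := (log_le_iff_le_exp (by linarith)).1 hk₀
  refine ⟨exp k, hK₀.trans hK, fun Q l ↦ 40 * C * T.cutoffPotential (6000 * k) Q l, 6000 * k / 3,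
    fun Q l hQ hl ↦ ?_, fun Q l hL hT ↦ ?_⟩
  · have h_err := h_error Q l hQ hl
    simp only [← mul_sum]
    by_cases h : 6000 * k / 3 ≤ T.logScale Q ∧ 0.255 * T.logScale Q < T.time l
    · have h_sum := T.sum_sum_cutoffPotential_le_mul_potential_six (by linarith) hQ hl
        (M := 6000 * k)
      have h_mass := h_outer (exp k) Q l hK hQ h.2 (by rw [log_exp]; linarith [h.1])
      have hL := T.logScale_pos hQ
      rw [cutoffPotential, if_pos h, mul_zero, zero_add]
      calc _ ≤ C * T.potential 6 Q l +
            40 * C * (9 * (6000 * k) ^ (1.99 : ℝ) * T.potential 6 Q l) := by gcongr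
        _ = (C + 40 * C * (9 * 6000 ^ (1.99 : ℝ)) * k ^ (1.99 : ℝ)) * T.potential 6 Q l := by
            rw [mul_rpow (by norm_num) (by linarith)]
            ring
        _ ≤ modelDensity * ε / 1000000 * k ^ 2 * (Q / T.logScale Q ^ 3) := by
            have := T.potential_pos (k := 6) (l := l) hQ
            gcongr
            exact potential_six_le hQ hl
        _ = modelDensity * ε / exp k *
              (1 / 1000000 * exp k * log (exp k) ^ 2 * Q / T.logScale Q ^ 3) := by
            rw [log_exp]
            field_simp
        _ ≤ modelDensity * ε / exp k * outerMass (exp k) Q l := by gcongr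
    · have h_sum := T.sum_sum_cutoffPotential_le (by linarith) hQ hl h
      have h_six := T.potential_six_le_cutoffPotential hM hQ h
      have h_mass : 0 ≤ modelDensity * ε / exp k * outerMass (exp k) Q l :=
        mul_nonneg (by positivity) (outerMass_nonneg ..)
      nlinarith
  · simp only [cutoffPotential, if_pos (And.intro hL hT), mul_zero]

end PrimeClock

lemma exists_eventually_le_parityModel_one :
    ∃ B₀ : ℝ, 16 ≤ B₀ ∧ ∀ C : ℝ, B₀ ≤ C → ∀ᶠ z : ℕ in atTop,
      1 / 360 * (log C * C * ((z : ℝ) ^ 2 / log z ^ 2)) ≤ parityModel 1 (C * (z : ℝ) ^ 2) z := by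
  obtain ⟨B₀, hB₀, h_lower⟩ := exists_le_parityModel_one
  refine ⟨B₀, hB₀, fun C hC ↦ ?_⟩
  have hlogC : 0 ≤ log C := log_nonneg (by linarith)
  have hC0 : 0 < C := by linarith
  filter_upwards [eventually_ge_atTop 2,
    (tendsto_log_atTop.comp tendsto_natCast_atTop_atTop).eventually_ge_atTop (log C)]
    with z hz2 hlogz
  rw [Function.comp_apply] at hlogz
  have : (0 : ℝ) < z := by positivity
  have hlogz0 : 0 < log z := log_pos (by exact_mod_cast hz2)
  have hlogW : log (C * (z : ℝ) ^ 2) = log C + 2 * log z := by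
    rw [log_mul hC0.ne' (by positivity), log_pow, Nat.cast_ofNat]
  have h := h_lower (C * (z : ℝ) ^ 2) z hz2 (by gcongr)
  rw [hlogW, mul_div_cancel_right₀ _ (by positivity)] at h
  calc 1 / 360 * (log C * C * ((z : ℝ) ^ 2 / log z ^ 2))
      = 1 / 40 * log C * (C * (z : ℝ) ^ 2) / (3 * log z) ^ 2 := by ring
    _ ≤ 1 / 40 * log C * (C * (z : ℝ) ^ 2) / (log C + 2 * log z) ^ 2 := by
        gcongr
        linarith
    _ ≤ parityModel 1 (C * (z : ℝ) ^ 2) z := h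

lemma exists_eventually_parityModel_one_le :
    ∃ A : ℝ, 1 ≤ A ∧ ∀ C : ℝ, 4 ≤ C → ∀ᶠ z : ℕ in atTop,
      parityModel 1 (C * (z : ℝ) ^ 2) z ≤ A * (log C * C * ((z : ℝ) ^ 2 / log z ^ 2)) := by
  obtain ⟨A, hA, h_upper⟩ := exists_parityModel_one_le
  refine ⟨A, hA, fun C hC ↦ ?_⟩
  filter_upwards [tendsto_natCast_atTop_atTop.eventually_gt_atTop C, eventually_ge_atTop 3]
    with z hCz hz3
  have : (0 : ℝ) < z := by positivity
  have h := h_upper (C * (z : ℝ) ^ 2) z hz3 (by gcongr) (by rw [pow_succ' (z : ℝ) 2]; gcongr)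
  rw [mul_div_cancel_right₀ _ (by positivity)] at h
  exact h.trans_eq (by ring)

/-- The excess of the model at scale `C * z ^ 2` is of order `log C`, and it beats the loss at scale
`K * C * z ^ 2` as soon as `C ≥ K`, provided that `ε` is small in terms of absolute constants. -/
theorem exists_eventually_le_perturbedModel :
    ∃ ε : ℝ, 0 < ε ∧ ε ≤ 1 ∧ ∀ K : ℝ, 1 ≤ K → ∃ C₀ : ℝ, ∀ C : ℝ, C₀ ≤ C → ∀ᶠ z : ℕ in atTop,
      modelDensity / 720 * log C * C * ((z : ℝ) ^ 2 / log z ^ 2) ≤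
        perturbedModel ε K 1 (C * (z : ℝ) ^ 2) z := by
  obtain ⟨B₀, hB₀, h_lower⟩ := exists_eventually_le_parityModel_one
  obtain ⟨A, hA, h_upper⟩ := exists_eventually_parityModel_one_le
  refine ⟨1 / (1440 * A), by positivity, by rw [div_le_one (by positivity)]; linarith,
    fun K hK ↦ ⟨B₀ + K, fun C hC ↦ ?_⟩⟩
  have hKC : K ≤ C := by linarith
  have hKC0 : 0 ≤ K * C := mul_nonneg (by linarith) (by linarith)
  have hlogKC : log (K * C) ≤ 2 * log C := by
    rw [log_mul (by linarith) (by linarith)]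
    linarith [log_le_log (by linarith) hKC]
  filter_upwards [h_lower C (by linarith), h_upper (K * C) (by nlinarith)] with z h_first h_second
  set X := (z : ℝ) ^ 2 / log z ^ 2
  have hX : 0 ≤ X := by positivity
  rw [mul_assoc K] at h_second
  have h_loss : 1 / (1440 * A) / K * parityModel 1 (K * (C * (z : ℝ) ^ 2)) z ≤
      1 / 720 * (log C * C * X) := by
    calc _ ≤ 1 / (1440 * A) / K * (A * (2 * log C * (K * C) * X)) := by
          refine mul_le_mul_of_nonneg_left (h_second.trans ?_) (by positivity)
          gcongr
      _ = 1 / 720 * (log C * C * X) := by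
          field_simp
          ring
  have h_gain : 0 ≤ 1 / (1440 * A) * parityModel 1 (C * (z : ℝ) ^ 2) z :=
    mul_nonneg (by positivity) (parityModel_nonneg ..)
  calc modelDensity / 720 * log C * C * X = modelDensity * (1 / 720 * (log C * C * X)) := by ring
    _ ≤ perturbedModel (1 / (1440 * A)) K 1 (C * (z : ℝ) ^ 2) z :=
        mul_le_mul_of_nonneg_left (by linarith) modelDensity_pos.le

lemma PrimeClock.eventually_logScale_mul_sq (T : PrimeClock) {C : ℝ} (hC : 0 < C) (L₀ : ℝ) :
    ∀ᶠ z : ℕ in atTop, L₀ ≤ T.logScale (C * (z : ℝ) ^ 2) ∧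
      0.255 * T.logScale (C * (z : ℝ) ^ 2) < T.time z := by
  have h_tendsto := tendsto_log_atTop.comp (tendsto_natCast_atTop_atTop (R := ℝ))
  filter_upwards [h_tendsto.eventually_gt_atTop (|L₀| + 3 * (|log C + T.shift| + T.lag)),
    eventually_gt_atTop 0] with z hlogz hz
  rw [Function.comp_apply] at hlogz
  have : (z : ℝ) ≠ 0 := by positivity
  rw [logScale, log_mul hC.ne' (by positivity), log_pow, Nat.cast_ofNat]
  have h_lag := T.one_le_lag
  have h_abs := abs_le.1 (le_refl |log C + T.shift|)
  have h_abs₀ := abs_le.1 (le_refl |L₀|)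
  constructor <;> linarith [T.log_sub_lag_le z]

theorem exists_le_card_sifted :
    ∃ C : ℕ, ∀ᶠ z : ℕ in atTop, ∀ (a : ℕ → ℤ) (x₀ : ℤ),
      (z : ℝ) ^ 2 / log z ^ 2 ≤ #(sifted a (progression x₀ (C * z ^ 2) 1 0) z) := by
  obtain ⟨T⟩ := nonempty_primeClock
  obtain ⟨ε, hε, hε1, h_model⟩ := exists_eventually_le_perturbedModel
  obtain ⟨K, hK, P, L₀, hP, hP_zero⟩ := T.exists_isPotential_eq_zero hε
  obtain ⟨C₀, h_model⟩ := h_model K (by linarith)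
  have h_density := modelDensity_pos
  obtain ⟨C, hC⟩ := exists_nat_ge (max C₀ (max (exp 1) (720 * 301 / modelDensity)))
  simp only [max_le_iff] at hC
  have hC0 : (0 : ℝ) < C := (exp_pos 1).trans_le hC.2.1
  have hC1 : (1 : ℝ) ≤ C := by exact_mod_cast hC0
  have hlogC : 1 ≤ log C := (le_log_iff_exp_le hC0).2 hC.2.1
  have h_coeff : 301 ≤ modelDensity / 720 * log C * C := by
    have := (div_le_iff₀' h_density).1 hC.2.2
    nlinarith [mul_le_mul_of_nonneg_left hlogC (mul_nonneg h_density.le hC0.le)]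
  refine ⟨C, ?_⟩
  filter_upwards [h_model C hC.1, T.eventually_logScale_mul_sq hC0 L₀, eventually_ge_atTop 2]
    with z hz ⟨hL₀, hT⟩ hz2 a x₀
  have hz1 : (1 : ℝ) < z := by exact_mod_cast (by omega : 1 < z)
  have hzW : (z : ℝ) ^ 2 ≤ C * (z : ℝ) ^ 2 := le_mul_of_one_le_left (by positivity) hC1
  have h_compare := comparisonBound_of_isPotential hε.le hε1 (by linarith) hP a x₀ (C * z ^ 2) z 1 0
    one_pos (fun p _ _ ↦ Nat.coprime_one_left p)
  push_cast at h_compare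
  rw [div_one, hP_zero _ z hL₀ hT, sub_zero] at h_compare
  have h_card : (#(Nat.primesBelow z) : ℝ) ^ 2 ≤ 25 * ((z : ℝ) ^ 2 / log z ^ 2) := by
    calc (#(Nat.primesBelow z) : ℝ) ^ 2 ≤ (5 * z / log z) ^ 2 := by
          gcongr
          exact card_primesBelow_le hz1 le_rfl
      _ = 25 * ((z : ℝ) ^ 2 / log z ^ 2) := by ring
  have h_main : 301 * ((z : ℝ) ^ 2 / log z ^ 2) ≤ perturbedModel ε K 1 (C * (z : ℝ) ^ 2) z :=
    (mul_le_mul_of_nonneg_right h_coeff (by positivity)).trans hz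
  linarith [h_compare hzW (by nlinarith)]

/-! ### Sifted progressions -/

lemma exists_nat_cube_le_lt {Q : ℝ} (hQ : 1 ≤ Q) :
    ∃ m : ℕ, 1 ≤ m ∧ (m : ℝ) ^ 3 ≤ Q ∧ Q < ((m + 1 : ℕ) : ℝ) ^ 3 := by
  have h_cube : (Q ^ (1 / 3 : ℝ)) ^ 3 = Q := by
    rw [← rpow_natCast, ← rpow_mul (by linarith)]
    norm_num
  have h_nonneg : 0 ≤ Q ^ (1 / 3 : ℝ) := by positivity
  refine ⟨⌊Q ^ (1 / 3 : ℝ)⌋₊, Nat.le_floor (by simpa using one_le_rpow hQ (by norm_num)), ?_, ?_⟩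
  · refine le_trans ?_ h_cube.le
    gcongr
    exact Nat.floor_le h_nonneg
  · refine h_cube.symm.trans_lt ?_
    gcongr
    exact_mod_cast Nat.lt_floor_add_one (Q ^ (1 / 3 : ℝ))

lemma card_primesBelow_succ_cube_le {m : ℕ} {Q : ℝ} (hQ1 : 1 < Q) (hm : 1 ≤ m)
    (hmQ : (m : ℝ) ^ 3 ≤ Q) (hQm : Q < ((m + 1 : ℕ) : ℝ) ^ 3) :
    (#(Nat.primesBelow (m + 1)) : ℝ) ^ 3 ≤ 120 * (Q / log Q) := by
  have hlogQ := log_pos hQ1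
  have hm1 : (1 : ℝ) ≤ m := mod_cast hm
  have hlog : log Q ≤ 3 * log (2 * m) := by
    rw [← Nat.cast_ofNat, ← log_pow]
    refine log_le_log (by linarith) (hQm.le.trans ?_)
    push_cast
    gcongr
    linarith
  have h_succ : ((m + 1 : ℕ) : ℝ) ≤ 2 * m := by
    push_cast
    linarith
  have h_log : (#(Nat.primesBelow (m + 1)) : ℝ) ≤ 30 * (m / log Q) := by
    calc (#(Nat.primesBelow (m + 1)) : ℝ) ≤ 5 * (2 * m) / log (2 * m) :=
          card_primesBelow_le (by linarith) h_succ
      _ ≤ 5 * (2 * m) / (log Q / 3) := by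
          gcongr
          linarith
      _ = 30 * (m / log Q) := by ring
  have h_trivial : (#(Nat.primesBelow (m + 1)) : ℝ) ≤ 2 * m :=
    (Nat.cast_le.2 (card_primesBelow_le_self _)).trans h_succ
  calc (#(Nat.primesBelow (m + 1)) : ℝ) ^ 3
      = #(Nat.primesBelow (m + 1)) * (#(Nat.primesBelow (m + 1)) : ℝ) ^ 2 := by ring
    _ ≤ 30 * (m / log Q) * (2 * m) ^ 2 := by gcongr
    _ = 120 * ((m : ℝ) ^ 3 / log Q) := by ring
    _ ≤ 120 * (Q / log Q) := by gcongr

namespace PrimeClock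

variable {T : PrimeClock} {Q : ℝ} {m : ℕ}

lemma sum_one_div_mul_time_cube_le (l : ℕ) :
    ∑ p ∈ Nat.primesBelow l, 1 / (p : ℝ) * T.time p ^ 3 ≤ T.time l ^ 3 / 3 := by
  refine T.sum_one_div_mul_le (R := fun x ↦ x ^ 3 / 3) (w := fun x ↦ x ^ 3)
    (fun x hx _ ↦ by positivity) (fun x hx _ ↦ by positivity) fun x y hx hxy _ ↦ ?_
  rw [← sub_div]
  exact cube_mul_log_div_le hx (hx.trans_le hxy)

lemma potential_four_div_le_of_cube_le (hQ : 1 ≤ Q) {p : ℕ} (hp : 0 < p) (hpQ : (p : ℝ) ^ 3 ≤ Q) :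
    T.potential 4 (Q / p) p ≤ 16 * Q / T.logScale Q ^ 4 * (1 / (p : ℝ) * T.time p ^ 3) := by
  have hp0 : (0 : ℝ) < p := mod_cast hp
  have hL := T.logScale_pos hQ
  have h_shift := T.one_le_shift
  have h_half : T.logScale Q / 2 ≤ T.logScale (Q / p) := by
    have hlog := log_le_log (by positivity) hpQ
    rw [log_pow, Nat.cast_ofNat] at hlog
    rw [logScale_div (by linarith) hp0, logScale]
    have := log_natCast_nonneg p
    linarith
  have := T.time_pos p
  calc T.potential 4 (Q / p) p ≤ Q / p * (T.time p ^ 3 / (T.logScale Q / 2) ^ 4) := by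
        unfold potential
        gcongr
    _ = 16 * Q / T.logScale Q ^ 4 * (1 / (p : ℝ) * T.time p ^ 3) := by ring

lemma time_succ_le_logScale (hm : 1 ≤ m) (hmQ : (m : ℝ) ^ 3 ≤ Q) :
    T.time (m + 1) ≤ T.logScale Q := by
  have hm1 : (1 : ℝ) ≤ m := mod_cast hm
  have h_log : log m ≤ log Q :=
    log_le_log (by linarith) ((le_self_pow₀ hm1 (by norm_num)).trans hmQ)
  have h_shift : 2 ≤ T.shift := by
    have := T.one_le_lag
    unfold shift
    linarith
  have h_succ := log_natCast_succ_le hm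
  have h_time := T.time_le (m + 1)
  unfold logScale
  linarith

lemma sum_potential_four_div_le (hQ : 1 < Q) (hm : 1 ≤ m) (hmQ : (m : ℝ) ^ 3 ≤ Q) :
    ∑ p ∈ Nat.primesBelow (m + 1), T.potential 4 (Q / p) p ≤ 16 * (Q / log Q) := by
  have hL := T.logScale_pos hQ.le
  have h_shift := T.one_le_shift
  have h_time := T.time_succ_le_logScale hm hmQ
  have := T.time_pos (m + 1)
  calc ∑ p ∈ Nat.primesBelow (m + 1), T.potential 4 (Q / p) p
      ≤ ∑ p ∈ Nat.primesBelow (m + 1),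
          16 * Q / T.logScale Q ^ 4 * (1 / (p : ℝ) * T.time p ^ 3) :=
        sum_le_sum fun p hp ↦ potential_four_div_le_of_cube_le hQ.le
          (Nat.prime_of_mem_primesBelow hp).pos (le_trans (by
            have := Nat.lt_of_mem_primesBelow hp
            gcongr
            omega) hmQ)
    _ ≤ 16 * Q / T.logScale Q ^ 4 * (T.logScale Q ^ 3 / 1) := by
        rw [← mul_sum]
        gcongr
        refine (sum_one_div_mul_time_cube_le _).trans ?_
        gcongr
        norm_num
    _ = 16 * (Q / T.logScale Q) := by field_simp
    _ ≤ 16 * (Q / log Q) := by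
        have := log_pos hQ
        unfold logScale
        gcongr
        linarith

end PrimeClock

section UpperBound

variable {a : ℕ → ℤ} {x₀ r : ℤ} {W d m : ℕ} {P : ℝ → ℕ → ℝ}

lemma le_card_sifted_residueFiber_progression (hP : IsPotential 0 1 P) (hd : 0 < d) {p : ℕ}
    (hp : p.Prime) (hcop : ∀ q : ℕ, q.Prime → q ≤ p → d.Coprime q) (hpQ : (p : ℝ) ^ 3 ≤ W / d) :
    modelDensity * parityModel 1 (W / d / p) p - 12 * (#(Nat.primesBelow p) : ℝ) ^ 2 -
        P (W / d / p) p ≤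
      #(sifted a (residueFiber a (progression x₀ W d r) p) p) := by
  have hp1 : (1 : ℝ) ≤ p := mod_cast hp.one_lt.le
  obtain ⟨r', hr'⟩ := exists_residueFiber_progression_eq a x₀ W (hcop p hp le_rfl) r
  have hp2 : (p : ℝ) ^ 2 ≤ W / d / p := by
    rw [le_div_iff₀ (by linarith)]
    linarith
  have h := comparisonBound_of_isPotential le_rfl zero_le_one le_rfl hP a x₀ W p (d * p) r'
    (Nat.mul_pos hd hp.pos) fun q hq hqp ↦ (hcop q hq hqp.le).mul_left
      ((Nat.coprime_primes hp hq).2 hqp.ne')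
  rw [Nat.cast_mul, ← div_div] at h
  rw [hr']
  refine le_trans (le_of_eq ?_) (h hp2 (by nlinarith))
  rw [perturbedModel]
  ring

lemma le_sum_card_sifted_residueFiber_progression (hP : IsPotential 0 1 P) (hd : 0 < d)
    (hcop : ∀ p : ℕ, p.Prime → p ≤ m → d.Coprime p) (hmQ : (m : ℝ) ^ 3 ≤ W / d) :
    modelDensity * ∑ p ∈ Nat.primesBelow (m + 1), parityModel 1 (W / d / p) p -
        12 * (#(Nat.primesBelow (m + 1)) : ℝ) ^ 3 -
        ∑ p ∈ Nat.primesBelow (m + 1), P (W / d / p) p ≤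
      ∑ p ∈ Nat.primesBelow (m + 1),
        (#(sifted a (residueFiber a (progression x₀ W d r) p) p) : ℝ) := by
  have h_error : 12 * (#(Nat.primesBelow (m + 1)) : ℝ) ^ 3 =
      ∑ _p ∈ Nat.primesBelow (m + 1), 12 * (#(Nat.primesBelow (m + 1)) : ℝ) ^ 2 := by
    rw [sum_const, nsmul_eq_mul]
    ring
  rw [h_error, mul_sum, ← sum_sub_distrib, ← sum_sub_distrib]
  refine sum_le_sum fun p hp ↦ ?_
  have hpm := Nat.lt_of_mem_primesBelow hp
  refine le_trans ?_ (le_card_sifted_residueFiber_progression hP hd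
    (Nat.prime_of_mem_primesBelow hp) (fun q hq hqp ↦ hcop q hq (by omega))
    (le_trans (by gcongr; omega) hmQ))
  have := card_primesBelow_mono hpm.le
  gcongr

theorem exists_card_sifted_progression_le :
    ∃ A : ℝ, 0 < A ∧ ∀ (a : ℕ → ℤ) (x₀ : ℤ) (W d : ℕ) (r : ℤ) (z : ℕ), 0 < d →
      (∀ p : ℕ, p.Prime → p < z → d.Coprime p) → 1 < (W : ℝ) / d → (W : ℝ) / d < (z : ℝ) ^ 3 →
        (#(sifted a (progression x₀ W d r) z) : ℝ) ≤ A * (W / d / log (W / d)) := by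
  obtain ⟨T⟩ := nonempty_primeClock
  obtain ⟨A, hA, hP⟩ := T.exists_isPotential_potential_four
  refine ⟨30 + 104 + 1440 + 16 * A, by positivity, fun a x₀ W d r z hd hcop hQ1 hQz ↦ ?_⟩
  obtain ⟨m, hm1, hmQ, hQm⟩ := exists_nat_cube_le_lt hQ1.le
  have hmz : m < z := by
    have : (m : ℝ) ^ 3 < (z : ℝ) ^ 3 := hmQ.trans_lt hQz
    exact_mod_cast lt_of_pow_lt_pow_left₀ 3 (by positivity) this
  have h_anti : (#(sifted a (progression x₀ W d r) z) : ℝ) ≤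
      #(sifted a (progression x₀ W d r) (m + 1)) := mod_cast card_le_card (sifted_anti a _ hmz)
  have h_fiber := le_sum_card_sifted_residueFiber_progression (a := a) (x₀ := x₀) (r := r)
    (hP 1) hd (fun p hp hpm ↦ hcop p hp (hpm.trans_lt hmz)) hmQ
  have h_buchstab := parityModel_eq_sub_sum (-1) ((W : ℝ) / d) (m + 1)
  have h_base := abs_le.1 (abs_modelDensity_mul_parityModel_zero_sub_le (-1) hQ1.le)
  have h_count := abs_le.1 (abs_card_progression_sub_le x₀ W hd r)
  have h_model : modelDensity * parityModel (-1) (W / d) (m + 1) ≤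
      2 * (15 * (W / d / log (W / d))) :=
    mul_le_mul modelDensity_le_two (parityModel_neg_one_le hQ1 hQm) (parityModel_nonneg ..)
      zero_le_two
  have h_potential := mul_le_mul_of_nonneg_left (T.sum_potential_four_div_le hQ1 hm1 hmQ) hA.le
  have h_cube := card_primesBelow_succ_cube_le hQ1 hm1 hmQ hQm
  have h_sqrt := sqrt_le_two_mul_div_log hQ1
  have h_one := one_le_sqrt.2 hQ1.le
  rw [h_buchstab, neg_neg, mul_sub] at h_model
  rw [← mul_sum] at h_fiber
  refine h_anti.trans ?_
  rw [card_sifted_eq_sub_sum]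
  linarith

end UpperBound

/-! ### Jacobsthal's function -/

lemma card_largePrimeFactors_mul_log_le {N : ℕ} (hN : N ≠ 0) (z : ℕ) :
    #{p ∈ N.primeFactors | z ≤ p} * log z ≤ log N := by
  rcases z.eq_zero_or_pos with rfl | hz
  · simpa using log_natCast_nonneg N
  have h_pow : z ^ #{p ∈ N.primeFactors | z ≤ p} ≤ N :=
    calc z ^ #{p ∈ N.primeFactors | z ≤ p} ≤ ∏ p ∈ N.primeFactors with z ≤ p, p :=
          pow_card_le_prod _ _ _ fun p hp ↦ (mem_filter.1 hp).2
      _ ≤ N := Nat.le_of_dvd hN.bot_lt ((prod_dvd_prod_of_subset _ _ _ (filter_subset _ _)).trans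
          (Nat.prod_primeFactors_dvd N))
  rw [← log_pow]
  exact log_le_log (by positivity) (mod_cast h_pow)

theorem exists_eventually_card_sifted_residueFiber_le (C : ℕ) :
    ∃ B > 0, ∀ᶠ z : ℕ in atTop, ∀ (a : ℕ → ℤ) (x₀ : ℤ) (p : ℕ), p.Prime → z ≤ p →
      (#(sifted a (residueFiber a (progression x₀ (C * z ^ 2) 1 0) p) z) : ℝ) ≤
        B * (z / log z) := by
  obtain ⟨A, hA, h_upper⟩ := exists_card_sifted_progression_le
  refine ⟨2 * A * C + 4, by positivity, ?_⟩
  filter_upwards [eventually_ge_atTop 2, eventually_gt_atTop C] with z hz hCz a x₀ p hp hzp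
  have hz1 : (1 : ℝ) < z := mod_cast hz
  have hlog := log_pos hz1
  have hp0 : (0 : ℝ) < p := mod_cast hp.pos
  obtain ⟨r, hr⟩ := exists_residueFiber_progression_eq a x₀ (C * z ^ 2) (Nat.coprime_one_left p) 0
  rw [hr, one_mul]
  have h_width : ((C * z ^ 2 : ℕ) : ℝ) / p ≤ C * z := by
    rw [div_le_iff₀ hp0, Nat.cast_mul, Nat.cast_pow, pow_two, ← mul_assoc]
    gcongr
  have h_one_lt_sqrt : 1 < √(z : ℝ) := by rwa [lt_sqrt zero_le_one, one_pow]
  rcases le_or_gt √(z : ℝ) (((C * z ^ 2 : ℕ) : ℝ) / p) with h | h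
  · have h_lt : ((C * z ^ 2 : ℕ) : ℝ) / p < (z : ℝ) ^ 3 := h_width.trans_lt <| by
      have : (C : ℝ) < (z : ℝ) ^ 2 := (Nat.cast_lt.2 hCz).trans (lt_self_pow₀ hz1 one_lt_two)
      rw [pow_succ]
      gcongr
    have h_log : log z / 2 ≤ log (((C * z ^ 2 : ℕ) : ℝ) / p) := by
      rw [← log_sqrt (by linarith)]
      exact log_le_log (by linarith) h
    calc (#(sifted a (progression x₀ (C * z ^ 2) p r) z) : ℝ)
        ≤ A * (((C * z ^ 2 : ℕ) : ℝ) / p / log (((C * z ^ 2 : ℕ) : ℝ) / p)) :=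
          h_upper a x₀ _ p r z hp.pos
            (fun q hq hqz ↦ (Nat.coprime_primes hp hq).2 (hqz.trans_le hzp).ne')
            (h_one_lt_sqrt.trans_le h) h_lt
      _ ≤ A * (C * z / (log z / 2)) := by gcongr
      _ = 2 * A * C * (z / log z) := by ring
      _ ≤ (2 * A * C + 4) * (z / log z) := by
          gcongr
          linarith
  · have h_count := (abs_le.1 (abs_card_progression_sub_le x₀ (C * z ^ 2) hp.pos r)).2
    have h_subset : (#(sifted a (progression x₀ (C * z ^ 2) p r) z) : ℝ) ≤
        #(progression x₀ (C * z ^ 2) p r) := mod_cast card_le_card (sifted_subset ..)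
    have h_sqrt := sqrt_le_two_mul_div_log hz1
    have : 0 ≤ 2 * A * C * (z / log z) := by positivity
    linarith

theorem exists_eventually_exists_mem_Ioc_not_modEq :
    ∃ (C : ℕ) (K : ℝ), 0 < K ∧ ∀ᶠ z : ℕ in atTop, ∀ N : ℕ, N ≠ 0 → K * log N ≤ z →
      ∀ (a : ℕ → ℤ) (x₀ : ℤ), ∃ x ∈ Ioc x₀ (x₀ + (C * z ^ 2 : ℕ)),
        ∀ p : ℕ, p.Prime → p ∣ N → ¬ x ≡ a p [ZMOD p] := by
  obtain ⟨C, h_lower⟩ := exists_le_card_sifted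
  obtain ⟨B, hB, h_upper⟩ := exists_eventually_card_sifted_residueFiber_le C
  refine ⟨C, B + 1, by positivity, ?_⟩
  filter_upwards [h_lower, h_upper, eventually_ge_atTop 2] with z h_lower h_upper hz N hN hNz a x₀
  have hz1 : (1 : ℝ) < z := mod_cast hz
  have hlog := log_pos hz1
  set S := progression x₀ (C * z ^ 2) 1 0 with hS
  set large : Finset ℕ := {p ∈ N.primeFactors | z ≤ p} with h_large
  have h_card_large : (#large : ℝ) ≤ z / ((B + 1) * log z) := by
    rw [le_div_iff₀ (by positivity), mul_left_comm]
    exact (mul_le_mul_of_nonneg_left (card_largePrimeFactors_mul_log_le hN z)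
      (by positivity)).trans hNz
  have h_lt : #(large.biUnion fun p ↦ sifted a (residueFiber a S p) z) < #(sifted a S z) := by
    rw [← Nat.cast_lt (α := ℝ)]
    calc (#(large.biUnion fun p ↦ sifted a (residueFiber a S p) z) : ℝ)
        ≤ ∑ p ∈ large, (#(sifted a (residueFiber a S p) z) : ℝ) := mod_cast card_biUnion_le
      _ ≤ #large * (B * (z / log z)) := by
          rw [← nsmul_eq_mul]
          refine sum_le_card_nsmul _ _ _ fun p hp ↦ ?_
          rw [h_large, mem_filter] at hp
          exact h_upper a x₀ p (Nat.prime_of_mem_primeFactors hp.1) hp.2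
      _ ≤ z / ((B + 1) * log z) * (B * (z / log z)) := by gcongr
      _ = B / (B + 1) * ((z : ℝ) ^ 2 / log z ^ 2) := by field_simp
      _ < (z : ℝ) ^ 2 / log z ^ 2 :=
          mul_lt_of_lt_one_left (by positivity) ((div_lt_one (by linarith)).2 (by linarith))
      _ ≤ #(sifted a S z) := h_lower a x₀
  obtain ⟨x, hx, hx'⟩ := exists_mem_notMem_of_card_lt_card h_lt
  refine ⟨x, by simpa only [hS, progression_one] using sifted_subset a S z hx, fun p hp hpN h ↦ ?_⟩
  rcases lt_or_ge p z with hpz | hpz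
  · exact (mem_filter.1 hx).2 p (Nat.mem_primesBelow.2 ⟨hpz, hp⟩) h
  · refine hx' (mem_biUnion.2 ⟨p, mem_filter.2 ⟨hp.mem_primeFactors hpN hN, hpz⟩, ?_⟩)
    rw [← residueFiber_sifted]
    exact mem_filter.2 ⟨hx, h⟩

theorem exists_abs_le_mul_log_sq_not_modEq :
    ∃ C : ℝ, 0 < C ∧ ∀ N : ℕ, 2 ≤ N → ∀ a : ℕ → ℤ, ∃ x : ℤ, (|x| : ℝ) ≤ C * log N ^ 2 ∧
      ∀ p : ℕ, p.Prime → p ∣ N → ¬ x ≡ a p [ZMOD p] := by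
  obtain ⟨C, K, hK, h⟩ := exists_eventually_exists_mem_Ioc_not_modEq
  obtain ⟨z₀, hz₀⟩ := eventually_atTop.1 h
  refine ⟨(C + 1) * (K + 2 * (z₀ + 1)) ^ 2, by positivity, fun N hN a ↦ ?_⟩
  have hlog : 1 ≤ 2 * log N := by
    have := log_le_log two_pos (Nat.ofNat_le_cast.2 hN : (2 : ℝ) ≤ N)
    linarith [log_two_gt_d9]
  have hKlog : 0 ≤ K * log N := mul_nonneg hK.le (log_natCast_nonneg N)
  set z := ⌈K * log N⌉₊ + z₀ with hz
  have h_le : K * log N ≤ z := (Nat.le_ceil _).trans (mod_cast Nat.le_add_right _ _)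
  have h_ge : (z : ℝ) ≤ (K + 2 * (z₀ + 1)) * log N := by
    have := (Nat.ceil_lt_add_one hKlog).le
    have := le_mul_of_one_le_right (by positivity : (0 : ℝ) ≤ z₀ + 1) hlog
    rw [hz]
    push_cast
    linarith
  obtain ⟨x, hx, hx'⟩ := hz₀ z (Nat.le_add_left _ _) N (by omega) h_le a 0
  obtain ⟨hx_pos, hx_le⟩ := mem_Ioc.1 hx
  refine ⟨x, ?_, hx'⟩
  rw [zero_add] at hx_le
  rw [abs_of_pos (mod_cast hx_pos)]
  calc (x : ℝ) ≤ (C * z ^ 2 : ℕ) := mod_cast hx_le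
    _ ≤ (C + 1) * ((K + 2 * (z₀ + 1)) * log N) ^ 2 := by
        push_cast
        gcongr
        linarith
    _ = (C + 1) * (K + 2 * (z₀ + 1)) ^ 2 * log N ^ 2 := by ring

end Jacobsthal

/-! ### Integer points on the projective line -/

namespace PlanarLattice

/-- The determinant of a pair of integer vectors, which detects linear independence. -/
def det (x y : ℤ × ℤ) : ℤ := x.1 * y.2 - x.2 * y.1

/-- The squared Euclidean norm; the norm Mathlib puts on a product is the maximum norm. -/
def normSq (x : ℤ × ℤ) : ℤ := x.1 ^ 2 + x.2 ^ 2

/-- `v` and `w` realise the successive minima of the planar lattice `L`. -/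
structure IsMinimalPair (L : AddSubgroup (ℤ × ℤ)) (v w : ℤ × ℤ) : Prop where
  left_mem : v ∈ L
  right_mem : w ∈ L
  det_ne_zero : det v w ≠ 0
  normSq_left_le : ∀ x ∈ L, x ≠ 0 → normSq v ≤ normSq x
  normSq_right_le : ∀ x ∈ L, det v x ≠ 0 → normSq w ≤ normSq x

lemma normSq_pos {x : ℤ × ℤ} (hx : x ≠ 0) : 0 < normSq x := by
  have h : x.1 ≠ 0 ∨ x.2 ≠ 0 := by
    by_contra! h
    exact hx (Prod.ext h.1 h.2)
  unfold normSq
  rcases h with h | h <;> positivity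

lemma ne_zero_of_det_ne_zero {x y : ℤ × ℤ} (h : det x y ≠ 0) : x ≠ 0 ∧ y ≠ 0 := by
  constructor <;> rintro rfl <;> simp [det] at h

lemma det_ne_zero_iff {x y : ℤ × ℤ} (hx : x ≠ 0) :
    det x y ≠ 0 ↔ ¬ ∃ t : ℝ, ((y.1 : ℝ), (y.2 : ℝ)) = (t * (x.1 : ℝ), t * (x.2 : ℝ)) := by
  refine not_congr ⟨fun h ↦ ?_, fun ⟨t, ht⟩ ↦ ?_⟩
  · have h_det : (x.1 * y.2 - x.2 * y.1 : ℝ) = 0 := mod_cast h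
    have h_norm : (x.1 ^ 2 + x.2 ^ 2 : ℝ) ≠ 0 := mod_cast (normSq_pos hx).ne'
    refine ⟨(y.1 * x.1 + y.2 * x.2) / (x.1 ^ 2 + x.2 ^ 2), Prod.ext ?_ ?_⟩
    · dsimp only
      rw [div_mul_eq_mul_div, eq_div_iff h_norm]
      linear_combination -x.2 * h_det
    · dsimp only
      rw [div_mul_eq_mul_div, eq_div_iff h_norm]
      linear_combination x.1 * h_det
  · rw [Prod.mk.injEq] at ht
    have : (x.1 * y.2 - x.2 * y.1 : ℝ) = 0 := by
      rw [ht.1, ht.2]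
      ring
    exact_mod_cast this

lemma det_sq_mul_normSq (v w y : ℤ × ℤ) :
    det v w ^ 2 * normSq y = det y w ^ 2 * normSq v +
      det y w * det v y * (2 * (v.1 * w.1 + v.2 * w.2)) + det v y ^ 2 * normSq w := by
  simp only [det, normSq]
  ring

lemma abs_two_mul_inner_lt {v w : ℤ × ℤ} (h : det v w ≠ 0) :
    |2 * (v.1 * w.1 + v.2 * w.2)| < normSq v + normSq w := by
  have h_add : det v (v + w) = det v w := by
    simp only [det, Prod.fst_add, Prod.snd_add]
    ring
  have h_sub : det (v - w) w = det v w := by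
    simp only [det, Prod.fst_sub, Prod.snd_sub]
    ring
  have h_pos_add := normSq_pos (ne_zero_of_det_ne_zero (h_add ▸ h)).2
  have h_pos_sub := normSq_pos (ne_zero_of_det_ne_zero (h_sub ▸ h)).1
  simp only [normSq, Prod.fst_add, Prod.snd_add, Prod.fst_sub, Prod.snd_sub] at *
  rw [abs_lt]
  constructor <;> linarith

lemma normSq_lt_of_two_mul_abs_det_le {v w y : ℤ × ℤ} (h_det : det v w ≠ 0)
    (hvw : normSq v ≤ normSq w) (hv : 2 * |det v y| ≤ |det v w|)
    (hw : 2 * |det y w| ≤ |det v w|) : normSq y < normSq w := by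
  have h_sq : 0 < det v w ^ 2 := by positivity
  have h_normSq_v := normSq_pos (ne_zero_of_det_ne_zero h_det).1
  have h_normSq_w := normSq_pos (ne_zero_of_det_ne_zero h_det).2
  have h_mixed : 4 * (det y w * det v y * (2 * (v.1 * w.1 + v.2 * w.2))) ≤
      det v w ^ 2 * |2 * (v.1 * w.1 + v.2 * w.2)| := by
    calc 4 * (det y w * det v y * (2 * (v.1 * w.1 + v.2 * w.2)))
        ≤ (2 * |det y w|) * (2 * |det v y|) * |2 * (v.1 * w.1 + v.2 * w.2)| := by
          have := le_abs_self (det y w * det v y * (2 * (v.1 * w.1 + v.2 * w.2)))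
          rw [abs_mul, abs_mul] at this
          linarith
      _ ≤ |det v w| * |det v w| * |2 * (v.1 * w.1 + v.2 * w.2)| := by gcongr
      _ = det v w ^ 2 * |2 * (v.1 * w.1 + v.2 * w.2)| := by rw [abs_mul_abs_self, sq]
  have h_left : (2 * det y w) ^ 2 * normSq v ≤ det v w ^ 2 * normSq v :=
    mul_le_mul_of_nonneg_right (sq_le_sq.2 (by simpa [abs_mul] using hw)) h_normSq_v.le
  have h_right : (2 * det v y) ^ 2 * normSq w ≤ det v w ^ 2 * normSq w :=
    mul_le_mul_of_nonneg_right (sq_le_sq.2 (by simpa [abs_mul] using hv)) h_normSq_w.le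
  have h_inner := mul_lt_mul_of_pos_left (abs_two_mul_inner_lt h_det) h_sq
  have h_vw := mul_le_mul_of_nonneg_left hvw h_sq.le
  have h_expand := det_sq_mul_normSq v w y
  exact lt_of_mul_lt_mul_left (by linarith : det v w ^ 2 * normSq y < det v w ^ 2 * normSq w)
    h_sq.le

lemma exists_two_mul_abs_sub_mul_le (x : ℤ) {n : ℤ} (hn : n ≠ 0) :
    ∃ m : ℤ, 2 * |x - m * n| ≤ |n| := by
  refine ⟨round (x / n : ℚ), ?_⟩
  have hn' : (n : ℚ) ≠ 0 := mod_cast hn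
  have h := mul_le_mul_of_nonneg_right (abs_sub_round (x / n : ℚ)) (abs_nonneg (n : ℚ))
  rw [← abs_mul, sub_mul, div_mul_cancel₀ _ hn'] at h
  rw [← Int.cast_le (R := ℚ)]
  push_cast
  linarith

lemma exists_forall_modEq_of_add_smul_eq {M : Type*} [AddCommGroup M] {v w : M} {p : ℕ}
    (hp : p.Prime) (h : ¬ ((∃ x, v = (p : ℤ) • x) ∧ ∃ y, w = (p : ℤ) • y)) :
    ∃ a : ℤ, ∀ (k : ℤ) (y : M), w + k • v = (p : ℤ) • y → k ≡ a [ZMOD p] := by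
  -- Two solutions in different residue classes would make `v`, and then `w`, divisible by `p`.
  by_cases h_exists : ∃ (a : ℤ) (x : M), w + a • v = (p : ℤ) • x
  · obtain ⟨a, x, hx⟩ := h_exists
    refine ⟨a, fun k y hy ↦ ?_⟩
    by_contra h_modEq
    have h_coprime : IsCoprime (p : ℤ) (k - a) :=
      ((Nat.prime_iff_prime_int.1 hp).coprime_iff_not_dvd).2 fun h ↦
        h_modEq (Int.modEq_iff_dvd.2 h).symm
    obtain ⟨s, t, hst⟩ := h_coprime
    have h_diff : (k - a) • v = (p : ℤ) • (y - x) := by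
      rw [smul_sub, ← hx, ← hy]
      module
    have hv : v = (p : ℤ) • (s • v + t • (y - x)) := by
      calc v = (s * p + t * (k - a)) • v := by rw [hst, one_smul]
        _ = (p : ℤ) • (s • v) + t • ((k - a) • v) := by module
        _ = (p : ℤ) • (s • v + t • (y - x)) := by
          rw [h_diff]
          module
    refine h ⟨⟨_, hv⟩, y - k • (s • v + t • (y - x)), ?_⟩
    rw [smul_sub, ← hy, smul_comm, ← hv, add_sub_cancel_right]
  · exact ⟨0, fun k y hy ↦ (h_exists ⟨k, y, hy⟩).elim⟩

namespace IsMinimalPair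

variable {L : AddSubgroup (ℤ × ℤ)} {v w x : ℤ × ℤ}

lemma eq_zero_of_two_mul_abs_det_le (h : IsMinimalPair L v w) (hx : x ∈ L)
    (hv : 2 * |det v x| ≤ |det v w|) (hw : 2 * |det x w| ≤ |det v w|) : x = 0 := by
  obtain ⟨hv0, hw0⟩ := ne_zero_of_det_ne_zero h.det_ne_zero
  have h_lt := normSq_lt_of_two_mul_abs_det_le h.det_ne_zero
    (h.normSq_left_le w h.right_mem hw0) hv hw
  have h_det : det v x = 0 := by
    by_contra h_det
    exact (h.normSq_right_le x hx h_det).not_gt h_lt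
  by_contra hx0
  have h_le := h.normSq_left_le x hx hx0
  have h_expand := det_sq_mul_normSq v w x
  rw [h_det, mul_zero, zero_mul, zero_pow two_ne_zero, zero_mul, add_zero, add_zero] at h_expand
  have h_sq : 0 < det v w ^ 2 := sq_pos_of_ne_zero h.det_ne_zero
  have h_coeff : (2 * det x w) ^ 2 ≤ det v w ^ 2 := sq_le_sq.2 (by simpa [abs_mul] using hw)
  nlinarith [normSq_pos hv0]

theorem exists_eq_smul_add_smul (h : IsMinimalPair L v w) (hx : x ∈ L) :
    ∃ m n : ℤ, x = m • v + n • w := by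
  obtain ⟨m, hm⟩ := exists_two_mul_abs_sub_mul_le (det x w) h.det_ne_zero
  obtain ⟨n, hn⟩ := exists_two_mul_abs_sub_mul_le (det v x) h.det_ne_zero
  refine ⟨m, n, sub_eq_zero.1 (h.eq_zero_of_two_mul_abs_det_le ?_ ?_ ?_)⟩
  · exact L.sub_mem hx (L.add_mem (L.zsmul_mem h.left_mem m) (L.zsmul_mem h.right_mem n))
  · convert hn using 3
    simp only [det, Prod.fst_add, Prod.snd_add, Prod.fst_sub, Prod.snd_sub, Prod.smul_fst,
      Prod.smul_snd, smul_eq_mul]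
    ring
  · convert hm using 3
    simp only [det, Prod.fst_add, Prod.snd_add, Prod.fst_sub, Prod.snd_sub, Prod.smul_fst,
      Prod.smul_snd, smul_eq_mul]
    ring

lemma isUnit_of_smul_eq (h : IsMinimalPair L v w) (hx : x ∈ L) {k l : ℤ}
    (hkl : w + l • v = k • x) : IsUnit k := by
  obtain ⟨m, n, rfl⟩ := h.exists_eq_smul_add_smul hx
  refine IsUnit.of_mul_eq_one n (mul_right_cancel₀ h.det_ne_zero ?_)
  calc k * n * det v w = det v (k • (m • v + n • w)) := by
        simp only [det, Prod.fst_add, Prod.snd_add, Prod.smul_fst, Prod.smul_snd, smul_eq_mul]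
        ring
    _ = 1 * det v w := by
        rw [← hkl]
        simp only [det, Prod.fst_add, Prod.snd_add, Prod.smul_fst, Prod.smul_snd, smul_eq_mul]
        ring

end IsMinimalPair

/-- `repLattice N u v` as a subgroup of `ℤ²`. -/
def repSubgroup (N : ℕ) (u v : ℤ) : AddSubgroup (ℤ × ℤ) where
  carrier := repLattice N u v
  zero_mem' := by simp [repLattice]
  add_mem' {x y} hx hy := by
    have := dvd_add hx hy
    simpa only [repLattice, Set.mem_ofPred_eq, Prod.fst_add, Prod.snd_add, add_mul,
      add_sub_add_comm] using this
  neg_mem' {x} hx := by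
    have := dvd_neg.2 hx
    simpa only [repLattice, Set.mem_ofPred_eq, Prod.fst_neg, Prod.snd_neg, neg_mul,
      neg_sub_neg, neg_sub] using this

section RepSubgroup

variable {N : ℕ} {u v k : ℤ} {x y : ℤ × ℤ}

lemma mem_repSubgroup_of_smul_mem (hk : IsCoprime (N : ℤ) k)
    (h : k • x ∈ repSubgroup N u v) : x ∈ repSubgroup N u v := by
  have h_dvd : (N : ℤ) ∣ k * x.1 * v - k * x.2 * u := h
  rw [mul_assoc, mul_assoc, ← mul_sub] at h_dvd
  exact hk.dvd_of_dvd_mul_left h_dvd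

lemma mk_mem_repSubgroup (N : ℕ) (u v : ℤ) : (u, v) ∈ repSubgroup N u v := by
  change (N : ℤ) ∣ u * v - v * u
  simp [mul_comm]

lemma not_exists_eq_smul_of_dvd (h : IsMinimalPair (repSubgroup N u v) x y)
    (h_gcd : Int.gcd u (Int.gcd v N) = 1) {p : ℕ} (hp : p.Prime) (hpN : p ∣ N) :
    ¬ ((∃ x', x = (p : ℤ) • x') ∧ ∃ y', y = (p : ℤ) • y') := by
  rintro ⟨⟨x', rfl⟩, y', rfl⟩
  obtain ⟨m, n, h_eq⟩ := h.exists_eq_smul_add_smul (mk_mem_repSubgroup N u v)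
  have h_smul : (u, v) = (p : ℤ) • (m • x' + n • y') := by
    rw [h_eq]
    module
  have hu : (p : ℤ) ∣ u := ⟨_, congrArg Prod.fst h_smul⟩
  have hv : (p : ℤ) ∣ v := ⟨_, congrArg Prod.snd h_smul⟩
  have h_dvd := Int.dvd_coe_gcd hu (Int.dvd_coe_gcd hv (Int.natCast_dvd_natCast.2 hpN))
  rw [h_gcd] at h_dvd
  exact hp.one_lt.not_ge (Nat.le_of_dvd one_pos (Int.natCast_dvd_natCast.1 h_dvd))

theorem exists_forall_isCoprime (h : IsMinimalPair (repSubgroup N u v) x y)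
    (h_gcd : Int.gcd u (Int.gcd v N) = 1) :
    ∃ a : ℕ → ℤ, ∀ k : ℤ, (∀ p : ℕ, p.Prime → p ∣ N → ¬ k ≡ a p [ZMOD p]) →
      IsCoprime (y.1 + k * x.1) (y.2 + k * x.2) := by
  have h_class (p : ℕ) : ∃ a : ℤ, p.Prime → p ∣ N →
      ∀ (k : ℤ) (z : ℤ × ℤ), y + k • x = (p : ℤ) • z → k ≡ a [ZMOD p] := by
    by_cases hp : p.Prime ∧ p ∣ N
    · obtain ⟨a, ha⟩ := exists_forall_modEq_of_add_smul_eq hp.1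
        (not_exists_eq_smul_of_dvd h h_gcd hp.1 hp.2)
      exact ⟨a, fun _ _ ↦ ha⟩
    · exact ⟨0, fun hp₁ hp₂ ↦ (hp ⟨hp₁, hp₂⟩).elim⟩
  choose a ha using h_class
  refine ⟨a, fun k hk ↦ Int.isCoprime_iff_gcd_eq_one.2 ?_⟩
  by_contra h_gcd_ne
  obtain ⟨p, hp, hp_dvd⟩ := Nat.exists_prime_and_dvd h_gcd_ne
  obtain ⟨⟨z₁, hz₁⟩, ⟨z₂, hz₂⟩⟩ := Int.dvd_coe_gcd_iff.1 (Int.natCast_dvd_natCast.2 hp_dvd)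
  have hz : y + k • x = (p : ℤ) • (z₁, z₂) := Prod.ext hz₁ hz₂
  by_cases hpN : p ∣ N
  · exact hk p hp hpN (ha p hp hpN k _ hz)
  · have h_coprime : IsCoprime (N : ℤ) p :=
      (Nat.isCoprime_iff_coprime.2 ((Nat.Prime.coprime_iff_not_dvd hp).2 hpN)).symm
    have h_mem : (z₁, z₂) ∈ repSubgroup N u v := mem_repSubgroup_of_smul_mem h_coprime <| by
      rw [← hz]
      exact add_mem h.right_mem (zsmul_mem h.left_mem k)
    exact (Nat.prime_iff_prime_int.1 hp).not_isUnit (h.isUnit_of_smul_eq h_mem hz)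

end RepSubgroup

end PlanarLattice

theorem coprime_representative_exists_general :
    ∃ C : ℝ, 0 < C ∧ ∀ N : ℕ, 2 ≤ N →
    ∀ u v : ℤ, Int.gcd u (Int.gcd v (N : ℤ)) = 1 →
    ∀ vP ∈ repLattice N u v, vP ≠ (0, 0) →
      (∀ w ∈ repLattice N u v, w ≠ (0, 0) →
        vP.1 ^ 2 + vP.2 ^ 2 ≤ w.1 ^ 2 + w.2 ^ 2) →
    ∀ wP ∈ repLattice N u v,
      (¬ ∃ t : ℝ, ((wP.1 : ℝ), (wP.2 : ℝ)) = (t * (vP.1 : ℝ), t * (vP.2 : ℝ))) →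
      (∀ w ∈ repLattice N u v,
        (¬ ∃ t : ℝ, ((w.1 : ℝ), (w.2 : ℝ)) = (t * (vP.1 : ℝ), t * (vP.2 : ℝ))) →
        wP.1 ^ 2 + wP.2 ^ 2 ≤ w.1 ^ 2 + w.2 ^ 2) →
    ∃ lam : ℤ, (|lam| : ℝ) ≤ C * Real.log N ^ 2 ∧
      IsCoprime (wP.1 + lam * vP.1) (wP.2 + lam * vP.2) := by
  obtain ⟨C, hC, h_sieve⟩ := Jacobsthal.exists_abs_le_mul_log_sq_not_modEq
  refine ⟨C, hC, fun N hN u v h_gcd vP hvP hvP0 hvP_min wP hwP h_indep hwP_min ↦ ?_⟩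
  have h_det {x : ℤ × ℤ} := PlanarLattice.det_ne_zero_iff (y := x) hvP0
  have h_pair : PlanarLattice.IsMinimalPair (PlanarLattice.repSubgroup N u v) vP wP :=
    ⟨hvP, hwP, h_det.2 h_indep, hvP_min, fun x hx hx0 ↦ hwP_min x hx (h_det.1 hx0)⟩
  obtain ⟨a, ha⟩ := PlanarLattice.exists_forall_isCoprime h_pair h_gcd
  obtain ⟨lam, h_lam, h_avoid⟩ := h_sieve N hN a
  exact ⟨lam, h_lam, ha lam h_avoid⟩

/-- There is an absolute constant `C` such that for square-free `N` and any
point of `ℙ¹(ℤ/Nℤ)`, adding at most `C·(log N)²` multiples of the shortest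
vector to the second-shortest one yields a vector with coprime coordinates. -/
theorem coprime_representative_exists :
    ∃ C : ℝ, 0 < C ∧ ∀ N : ℕ, 2 ≤ N → Squarefree N →
    ∀ u v : ℤ, Int.gcd u (Int.gcd v (N : ℤ)) = 1 →
    ∀ vP ∈ repLattice N u v, vP ≠ (0, 0) →
      (∀ w ∈ repLattice N u v, w ≠ (0, 0) →
        vP.1 ^ 2 + vP.2 ^ 2 ≤ w.1 ^ 2 + w.2 ^ 2) →
    ∀ wP ∈ repLattice N u v,
      (¬ ∃ t : ℝ, ((wP.1 : ℝ), (wP.2 : ℝ)) = (t * (vP.1 : ℝ), t * (vP.2 : ℝ))) →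
      (∀ w ∈ repLattice N u v,
        (¬ ∃ t : ℝ, ((w.1 : ℝ), (w.2 : ℝ)) = (t * (vP.1 : ℝ), t * (vP.2 : ℝ))) →
        wP.1 ^ 2 + wP.2 ^ 2 ≤ w.1 ^ 2 + w.2 ^ 2) →
    ∃ lam : ℤ, (|lam| : ℝ) ≤ C * Real.log N ^ 2 ∧
      IsCoprime (wP.1 + lam * vP.1) (wP.2 + lam * vP.2) := by
  obtain ⟨C, hC, h⟩ := coprime_representative_exists_general
  exact ⟨C, hC, fun N hN _ ↦ h N hN⟩
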